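/- arXiv:1912.11641 — 2 statements merged into one kernel-verified Lean document; each statement's English description precedes it below -/
import Mathlib

section
/- There exists a universal constant c > 0 such that for every n and every pair of increasing Boolean functions f, g : C_n → {0,1} with g antipodal, one has Cor(f,g) ≥ c · (Σ_{i∈[n]} I_i(f) I_i(g)) / √(log(2e / Σ_{i∈[n]} I_i(f) I_i(g))). -/
/-!
Write `T_ρ` for the noise operator on the cube and `∂ᵢ` for the discrete derivatives. The noise form
`⟨f, T_ρ g⟩` interpolates between `E f E g` at `ρ = 0` and `E (f g)` at `ρ = 1`, and its derivative
in `ρ` is `(1/4) ∑ᵢ ⟨∂ᵢ f, T_ρ ∂ᵢ g⟩` (`hasDerivAt_bil`), which is nonnegative for increasing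
functions. At `ρ = 0` this derivative is `w / 4`, where `w = ∑ᵢ pᵢ qᵢ`, `pᵢ = E ∂ᵢ f`, `qᵢ = E ∂ᵢ g`,
and `4 w` is the sum of the products of the influences. It suffices to show that the derivative
stays above half of this value for `ρ` up to a constant multiple of `1 / √(log (e / (2 w)))`.

The derivatives are smoothed first: by the semigroup property
`⟨∂ᵢ f, T_ρ ∂ᵢ g⟩ = ⟨Lᵢ, T_{4ρ} Mᵢ⟩` with `Lᵢ = T_{1/2} ∂ᵢ f` and `Mᵢ = T_{1/2} ∂ᵢ g`. These are
nonnegative, and Bessel's inequality under a biased product measure gives `∑ᵢ Lᵢ(x)² ≤ 4/3` at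
every point `x`, likewise for `Mᵢ` (`sum_smooth_dd_sq_le`).

The main tool is `log_bil_ge`: for probability densities `a`, `b` on the cube,
`log ⟨a, T_σ b⟩ ≥ σ ⟨m(a), m(b)⟩ - C σ² (Ent a + Ent b)` with `m` the vector of coordinate means.
It is Jensen's inequality along a coupling of the laws `a` and `b` which reveals the coordinates one
at a time and gives each pair of bits a conditional correlation of order `σ`. As `g` is antipodal,
`Mᵢ` is even, its mean vector vanishes, and the loss is of second order in `σ`; this is the source of
the square root.

Finally the entropies are summed: `∑ᵢ pᵢ qᵢ (Ent (Lᵢ/pᵢ) + Ent (Mᵢ/qᵢ)) ≤ 2 w log (e / (2 w))`.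
Indeed the left side equals `E ∑ᵢ (qᵢ Lᵢ log (Lᵢ/qᵢ) + pᵢ Mᵢ log (Mᵢ/pᵢ))`, because the terms
`pᵢ qᵢ log (qᵢ/pᵢ)` cancel, and `log t ≤ t - 1` with the pointwise bounds on `∑ᵢ Lᵢ²` and `∑ᵢ Mᵢ²`
gives the estimate (`pairEnt_le`, `sum_bil_ge`).
-/

open MeasureTheory ProbabilityTheory

noncomputable section

/-- Expectation with respect to the uniform measure on the discrete cube `{-1,1}^n`,
modeled as `Fin n → Bool` (`true ↔ 1`, `false ↔ -1`). -/
def cubeE (n : ℕ) (f : (Fin n → Bool) → ℝ) : ℝ :=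
  (∑ σ : Fin n → Bool, f σ) / 2 ^ n

/-- The discrete derivative `∂ᵢ f (x) = f(x; xᵢ → 1) - f(x; xᵢ → -1)`. -/
def dd (n : ℕ) (i : Fin n) (f : (Fin n → Bool) → ℝ) (σ : Fin n → Bool) : ℝ :=
  f (Function.update σ i true) - f (Function.update σ i false)

/-- The influence `Iᵢ(f) = 2 ∫ |∂ᵢ f| dμ`. -/
def infl (n : ℕ) (f : (Fin n → Bool) → ℝ) (i : Fin n) : ℝ :=
  2 * cubeE n fun σ => |dd n i f σ|

/-- `Cor(f,g) = E[fg] - E[f]E[g]`. -/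
def cubeCor (n : ℕ) (f g : (Fin n → Bool) → ℝ) : ℝ :=
  cubeE n (fun σ => f σ * g σ) - cubeE n f * cubeE n g

/-- `f` is Boolean, i.e. takes values in `{0,1}`. -/
def BoolValued (n : ℕ) (f : (Fin n → Bool) → ℝ) : Prop := ∀ σ, f σ = 0 ∨ f σ = 1

/-- `f` is increasing: all discrete derivatives are nonnegative. -/
def CubeIncreasing (n : ℕ) (f : (Fin n → Bool) → ℝ) : Prop := ∀ i σ, 0 ≤ dd n i f σ

/-- `f` is antipodal: `f(x) = 1 - f(-x)`. -/
def Antipodal (n : ℕ) (f : (Fin n → Bool) → ℝ) : Prop :=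
  ∀ σ, f σ = 1 - f fun k => !(σ k)

/-! ### The noise kernel and Bessel's inequality -/

/-- The sign `±1` attached to a Boolean coordinate. -/
def sg (b : Bool) : ℝ := if b then 1 else -1

@[simp] lemma sg_true : sg true = 1 := by simp [sg]
@[simp] lemma sg_false : sg false = -1 := by simp [sg]
@[simp] lemma sg_not (b : Bool) : sg (!b) = -sg b := by cases b <;> simp
lemma sg_sq (b : Bool) : sg b ^ 2 = 1 := by cases b <;> simp

/-- The noise kernel `∏ᵢ (1 + ρ xᵢ yᵢ)`: the density, with respect to the product of the uniform
measures, of a pair of `ρ`-correlated points of the cube. -/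
def ker (n : ℕ) (ρ : ℝ) (x y : Fin n → Bool) : ℝ := ∏ i, (1 + ρ * (sg (x i) * sg (y i)))

/-- The noise kernel with the factor of coordinate `i` removed. -/
def kerErase (n : ℕ) (ρ : ℝ) (i : Fin n) (x y : Fin n → Bool) : ℝ :=
  ∏ j ∈ Finset.univ.erase i, (1 + ρ * (sg (x j) * sg (y j)))

lemma ker_eq_erase (n : ℕ) (ρ : ℝ) (i : Fin n) (x y : Fin n → Bool) :
    ker n ρ x y = (1 + ρ * (sg (x i) * sg (y i))) * kerErase n ρ i x y := by
  unfold ker kerErase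
  exact (Finset.mul_prod_erase _ (fun j => 1 + ρ * (sg (x j) * sg (y j)))
    (Finset.mem_univ i)).symm

lemma kerErase_update_left (n : ℕ) (ρ : ℝ) (i : Fin n) (x y : Fin n → Bool) (b : Bool) :
    kerErase n ρ i (Function.update x i b) y = kerErase n ρ i x y := by
  unfold kerErase
  refine Finset.prod_congr rfl fun j hj => ?_
  rw [Function.update_of_ne (Finset.ne_of_mem_erase hj)]

lemma kerErase_update_right (n : ℕ) (ρ : ℝ) (i : Fin n) (x y : Fin n → Bool) (b : Bool) :
    kerErase n ρ i x (Function.update y i b) = kerErase n ρ i x y := by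
  unfold kerErase
  refine Finset.prod_congr rfl fun j hj => ?_
  rw [Function.update_of_ne (Finset.ne_of_mem_erase hj)]

lemma dd_update (n : ℕ) (i : Fin n) (f : (Fin n → Bool) → ℝ) (x : Fin n → Bool) (b : Bool) :
    dd n i f (Function.update x i b) = dd n i f x := by
  simp [dd]

lemma ker_nonneg (n : ℕ) {ρ : ℝ} (h0 : 0 ≤ ρ) (h1 : ρ ≤ 1) (x y : Fin n → Bool) :
    0 ≤ ker n ρ x y := by
  refine Finset.prod_nonneg fun i _ => ?_
  cases x i <;> cases y i <;> simp <;> linarith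

lemma ker_pos (n : ℕ) {ρ : ℝ} (h0 : 0 ≤ ρ) (h1 : ρ < 1) (x y : Fin n → Bool) :
    0 < ker n ρ x y := by
  refine Finset.prod_pos fun i _ => ?_
  cases x i <;> cases y i <;> simp <;> linarith

lemma ker_comm (n : ℕ) (ρ : ℝ) (x y : Fin n → Bool) : ker n ρ x y = ker n ρ y x := by
  unfold ker
  refine Finset.prod_congr rfl fun i _ => by ring

lemma ker_zero (n : ℕ) (x y : Fin n → Bool) : ker n 0 x y = 1 := by simp [ker]

lemma ker_one (n : ℕ) (x y : Fin n → Bool) : ker n 1 x y = if x = y then 2 ^ n else 0 := by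
  split_ifs with h
  · subst h
    have : ∀ i, (1 + 1 * (sg (x i) * sg (x i))) = 2 := fun i => by
      rw [← sq, sg_sq]; norm_num
    simp only [ker, this]
    simp
  · obtain ⟨i, hi⟩ := Function.ne_iff.mp h
    refine Finset.prod_eq_zero (Finset.mem_univ i) ?_
    revert hi
    cases x i <;> cases y i <;> simp

lemma ker_neg (n : ℕ) (ρ : ℝ) (x y : Fin n → Bool) :
    ker n ρ (fun k => !(x k)) (fun k => !(y k)) = ker n ρ x y := by
  simp [ker]

/-- Chapman–Kolmogorov for the noise kernel. -/
lemma ker_comp (n : ℕ) (α β : ℝ) (x y : Fin n → Bool) :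
    ∑ z, ker n α x z * ker n β z y = 2 ^ n * ker n (α * β) x y := by
  have h : ∀ i, ∑ b : Bool, (1 + α * (sg (x i) * sg b)) * (1 + β * (sg b * sg (y i)))
      = 2 * (1 + α * β * (sg (x i) * sg (y i))) := fun i => by
    simp only [Fintype.sum_bool, sg_true, sg_false]; ring
  unfold ker
  simp only [← Finset.prod_mul_distrib]
  rw [← Fintype.piFinset_univ, ← Finset.prod_univ_sum (fun _ => Finset.univ)
    (fun i b => (1 + α * (sg (x i) * sg b)) * (1 + β * (sg b * sg (y i))))]
  simp only [h, Finset.prod_mul_distrib]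
  simp

/-- Averaging over the `i`-th coordinate first. -/
lemma sum_split (n : ℕ) (i : Fin n) (F : (Fin n → Bool) → ℝ) :
    2 * ∑ x, F x = ∑ x, (F (Function.update x i true) + F (Function.update x i false)) := by
  have hinv : Function.Involutive (fun x : Fin n → Bool => Function.update x i (!(x i))) := by
    intro x; simp
  have h1 : ∑ x, F (Function.update x i (!(x i))) = ∑ x, F x :=
    Equiv.sum_comp hinv.toPerm F
  rw [two_mul]
  nth_rewrite 2 [← h1]
  rw [← Finset.sum_add_distrib]
  refine Finset.sum_congr rfl fun x _ => ?_
  cases h : x i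
  · have : Function.update x i false = x := by rw [← h]; simp
    simp [this, add_comm]
  · have : Function.update x i true = x := by rw [← h]; simp
    simp [this]

lemma sum_ker (n : ℕ) (ρ : ℝ) (x : Fin n → Bool) : ∑ z, ker n ρ x z = 2 ^ n := by
  have h := ker_comp n ρ 0 x x
  simpa [ker_zero] using h

/-- Since `dd n i f` does not depend on coordinate `i`, the kernel factor of that coordinate
averages out. -/
lemma sum_ker_mul_dd (n : ℕ) (ρ : ℝ) (i : Fin n) (f : (Fin n → Bool) → ℝ) (x : Fin n → Bool) :
    ∑ z, ker n ρ x z * dd n i f z = ∑ z, kerErase n ρ i x z * dd n i f z := by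
  have h := sum_split n i fun z => ker n ρ x z * dd n i f z
  have h2 : ∀ z, ker n ρ x (Function.update z i true) * dd n i f (Function.update z i true)
      + ker n ρ x (Function.update z i false) * dd n i f (Function.update z i false)
      = 2 * (kerErase n ρ i x z * dd n i f z) := fun z => by
    simp only [ker_eq_erase n ρ i, kerErase_update_right, dd_update, Function.update_self,
      sg_true, sg_false]
    ring
  simp only [h2, ← Finset.mul_sum] at h
  linarith

lemma sum_ker_centered (n : ℕ) (ρ : ℝ) (i : Fin n) (f : (Fin n → Bool) → ℝ) (x : Fin n → Bool) :
    ∑ z, ker n ρ x z * (f z * (sg (z i) - ρ * sg (x i)))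
      = (1 - ρ ^ 2) / 2 * ∑ z, ker n ρ x z * dd n i f z := by
  have h := sum_split n i fun z => ker n ρ x z * (f z * (sg (z i) - ρ * sg (x i)))
  have h2 : ∀ z, ker n ρ x (Function.update z i true) * (f (Function.update z i true) *
        (sg (Function.update z i true i) - ρ * sg (x i)))
      + ker n ρ x (Function.update z i false) * (f (Function.update z i false) *
        (sg (Function.update z i false i) - ρ * sg (x i)))
      = (1 - ρ ^ 2) * (kerErase n ρ i x z * dd n i f z) := fun z => by
    simp only [ker_eq_erase n ρ i, kerErase_update_right, dd, Function.update_self,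
      sg_true, sg_false]
    have := sg_sq (x i)
    linear_combination (- ρ ^ 2 * kerErase n ρ i x z *
      (f (Function.update z i true) - f (Function.update z i false))) * this
  simp only [h2, ← Finset.mul_sum] at h
  rw [sum_ker_mul_dd]
  linarith

/-- The centred coordinates are orthogonal, with variance `1 - ρ²`, under the product measure
`ker n ρ x ⬝ / 2 ^ n`. -/
lemma sum_ker_orth (n : ℕ) (ρ : ℝ) (i k : Fin n) (x : Fin n → Bool) :
    ∑ z, ker n ρ x z * ((sg (z k) - ρ * sg (x k)) * (sg (z i) - ρ * sg (x i)))
      = if i = k then 2 ^ n * (1 - ρ ^ 2) else 0 := by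
  have h := sum_ker_centered n ρ i (fun z => sg (z k) - ρ * sg (x k)) x
  have h2 : ∀ z, dd n i (fun z => sg (z k) - ρ * sg (x k)) z = if i = k then 2 else 0 := by
    intro z
    by_cases hik : i = k
    · subst hik; simp [dd]; norm_num
    · simp [dd, hik, Function.update_of_ne (Ne.symm hik)]
  rw [h]
  simp only [h2, ← Finset.sum_mul, sum_ker]
  split_ifs <;> ring

/-- The noise operator `T_ρ`. -/
def smooth (n : ℕ) (ρ : ℝ) (f : (Fin n → Bool) → ℝ) (x : Fin n → Bool) : ℝ :=
  (∑ z, ker n ρ x z * f z) / 2 ^ n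

/-- Bessel's inequality for the centred coordinates under a biased product measure: the gradient
of the harmonic extension of a Boolean function is bounded at interior points of the cube. -/
lemma sum_smooth_dd_sq_le (n : ℕ) {ρ : ℝ} (h0 : 0 ≤ ρ) (h1 : ρ < 1) (f : (Fin n → Bool) → ℝ)
    (hf : BoolValued n f) (x : Fin n → Bool) :
    (1 - ρ ^ 2) * ∑ i, smooth n ρ (dd n i f) x ^ 2 ≤ 1 := by
  have hs : 0 < 1 - ρ ^ 2 := by nlinarith
  have hN : (0 : ℝ) < 2 ^ n := by positivity
  set L : Fin n → ℝ := fun i => smooth n ρ (dd n i f) x with hL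
  set ζ : Fin n → (Fin n → Bool) → ℝ := fun i z => sg (z i) - ρ * sg (x i) with hζ
  have hdd : ∀ i z, dd n i (fun z => f z - 1 / 2) z = dd n i f z := fun i z => by simp [dd]
  have hc : ∀ i, ∑ z, ker n ρ x z * ((f z - 1 / 2) * ζ i z)
      = 2 ^ n * ((1 - ρ ^ 2) / 2 * L i) := fun i => by
    rw [sum_ker_centered n ρ i (fun z => f z - 1 / 2) x]
    simp only [hdd, hL, smooth]
    field_simp
  have hsq : ∀ z, (f z - 1 / 2) ^ 2 = 1 / 4 := fun z => by
    rcases hf z with h | h <;> rw [h] <;> norm_num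
  -- expand the square of the residual of `f - 1/2` after projection
  have hpos : 0 ≤ ∑ z, ker n ρ x z * ((f z - 1 / 2) - ∑ i, (L i / 2) * ζ i z) ^ 2 :=
    Finset.sum_nonneg fun z _ => mul_nonneg (ker_nonneg n h0 h1.le x z) (sq_nonneg _)
  have hexp : ∀ z, ker n ρ x z * ((f z - 1 / 2) - ∑ i, (L i / 2) * ζ i z) ^ 2
      = ker n ρ x z * (1 / 4) - ∑ i, L i * (ker n ρ x z * ((f z - 1 / 2) * ζ i z))
        + ∑ i, ∑ k, (L i / 2) * (L k / 2) * (ker n ρ x z * (ζ k z * ζ i z)) := fun z => by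
    have e1 : ∑ i, L i * (ker n ρ x z * ((f z - 1 / 2) * ζ i z))
        = ker n ρ x z * (2 * (f z - 1 / 2) * ∑ i, (L i / 2) * ζ i z) := by
      rw [Finset.mul_sum, Finset.mul_sum]
      exact Finset.sum_congr rfl fun i _ => by ring
    have e2 : ∑ i, ∑ k, (L i / 2) * (L k / 2) * (ker n ρ x z * (ζ k z * ζ i z))
        = ker n ρ x z * (∑ i, (L i / 2) * ζ i z) ^ 2 := by
      rw [sq, Finset.sum_mul_sum, Finset.mul_sum]
      refine Finset.sum_congr rfl fun i _ => ?_
      rw [Finset.mul_sum]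
      exact Finset.sum_congr rfl fun k _ => by ring
    rw [e1, e2, ← hsq z]
    ring
  simp only [hexp] at hpos
  rw [Finset.sum_add_distrib, Finset.sum_sub_distrib, ← Finset.sum_mul, sum_ker,
    Finset.sum_comm] at hpos
  simp only [← Finset.mul_sum, hc] at hpos
  have e3 : ∑ z, ∑ i, ∑ k, (L i / 2) * (L k / 2) * (ker n ρ x z * (ζ k z * ζ i z))
      = 2 ^ n * ((1 - ρ ^ 2) / 4 * ∑ i, L i ^ 2) := by
    rw [Finset.sum_comm, Finset.mul_sum, Finset.mul_sum]
    refine Finset.sum_congr rfl fun i _ => ?_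
    rw [Finset.sum_comm]
    simp only [← Finset.mul_sum, hζ, sum_ker_orth]
    simp
    ring
  rw [e3] at hpos
  have e4 : ∑ i, L i * (2 ^ n * ((1 - ρ ^ 2) / 2 * L i))
      = 2 ^ n * ((1 - ρ ^ 2) / 2 * ∑ i, L i ^ 2) := by
    rw [Finset.mul_sum, Finset.mul_sum]
    exact Finset.sum_congr rfl fun i _ => by ring
  rw [e4] at hpos
  have : 0 ≤ 2 ^ n * (1 / 4 - (1 - ρ ^ 2) / 4 * ∑ i, L i ^ 2) := by linarith
  have := nonneg_of_mul_nonneg_right this hN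
  linarith

/-! ### One step of the coupling -/

/-- Coordinate means of a probability mass function on the cube. -/
def mom (n : ℕ) (a : (Fin n → Bool) → ℝ) (k : Fin n) : ℝ := ∑ x, a x * sg (x k)

/-- Relative entropy, with respect to the uniform measure, of a probability mass function. -/
def ent (n : ℕ) (a : (Fin n → Bool) → ℝ) : ℝ := ∑ x, a x * Real.log (2 ^ n * a x)

/-- The noise bilinear form on functions on the cube, without normalization. -/
def bil (n : ℕ) (ρ : ℝ) (a b : (Fin n → Bool) → ℝ) : ℝ := ∑ x, ∑ y, a x * b y * ker n ρ x y

lemma sum_cons (n : ℕ) (F : (Fin (n + 1) → Bool) → ℝ) :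
    ∑ x, F x = ∑ b : Bool, ∑ t : Fin n → Bool, F (Fin.cons b t) := by
  rw [← Fintype.sum_prod_type', ← (Fin.consEquiv (fun _ => Bool)).sum_comp F]
  rfl

lemma ker_cons (n : ℕ) (ρ : ℝ) (b c : Bool) (s t : Fin n → Bool) :
    ker (n + 1) ρ (Fin.cons b s) (Fin.cons c t) = (1 + ρ * (sg b * sg c)) * ker n ρ s t := by
  simp [ker, Fin.prod_univ_succ]

/-- Jensen's inequality for the logarithm. -/
lemma jensen_log {ι : Type*} [Fintype ι] (ν T : ι → ℝ) (hν : ∀ i, 0 ≤ ν i) (hs : ∑ i, ν i = 1)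
    (hT : ∀ i, 0 < T i) : ∑ i, ν i * Real.log (T i) ≤ Real.log (∑ i, ν i * T i) := by
  have := strictConcaveOn_log_Ioi.concaveOn.le_map_sum (t := Finset.univ) (w := ν) (p := T)
    (fun i _ => hν i) hs (fun i _ => hT i)
  simpa using this

/-- A weak form of Pinsker's inequality for a biased bit. -/
lemma bit_entropy {p : ℝ} (h0 : 0 < p) (h1 : p < 1) :
    (2 * p - 1) ^ 2 / 6 ≤ p * Real.log (2 * p) + (1 - p) * Real.log (2 * (1 - p)) := by
  have key : ∀ x : ℝ, 0 < x → x ≤ 2 → (x - 1) + (x - 1) ^ 2 / 6 ≤ x * Real.log x := by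
    intro x hx hx2
    have hr : 0 < √x := Real.sqrt_pos.mpr hx
    have hxx : √x ^ 2 = x := Real.sq_sqrt hx.le
    have hl : 1 - (√x)⁻¹ ≤ Real.log (√x) := Real.one_sub_inv_le_log_of_pos hr
    have hlog : Real.log x = 2 * Real.log (√x) := by
      conv_lhs => rw [← hxx]
      rw [Real.log_pow]; norm_num
    have hm : √x ^ 2 * (1 - (√x)⁻¹) ≤ √x ^ 2 * Real.log (√x) :=
      mul_le_mul_of_nonneg_left hl (by positivity)
    have e : √x ^ 2 * (1 - (√x)⁻¹) = √x ^ 2 - √x := by field_simp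
    have hr2 : √x ≤ 1.42 := by
      rw [Real.sqrt_le_left (by norm_num)]; norm_num; linarith
    have h6 : (√x + 1) ^ 2 ≤ 6 := by nlinarith
    have h7 : (√x - 1) ^ 2 * (√x + 1) ^ 2 ≤ (√x - 1) ^ 2 * 6 :=
      mul_le_mul_of_nonneg_left h6 (sq_nonneg _)
    have h8 : (√x - 1) ^ 2 * (√x + 1) ^ 2 = (x - 1) ^ 2 := by
      rw [← mul_pow]; congr 1; linear_combination hxx
    rw [hlog]
    rw [e, hxx] at hm
    nlinarith
  have k1 := key (2 * p) (by linarith) (by linarith)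
  have k2 := key (2 * (1 - p)) (by linarith) (by linarith)
  nlinarith

/-- One step of the coupling: the expected log-likelihood ratio between the `ρ`-correlated pair of
bits and the coupled pair with means `u`, `v` and covariance `ρ (1 - u²) (1 - v²)`. -/
lemma one_step {ρ u v : ℝ} (h0 : 0 ≤ ρ) (h1 : ρ ≤ 1 / 4) (hu : |u| < 1) (hv : |v| < 1)
    (p q : Bool → ℝ) (hp : ∀ x, p x = (1 + sg x * u) / 2) (hq : ∀ y, q y = (1 + sg y * v) / 2) :
    ρ * (u * v) - 6 * ρ ^ 2 * (u ^ 2 + v ^ 2) ≤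
      ∑ x, ∑ y, p x * q y * (1 + ρ * ((sg x - u) * (sg y - v))) *
        Real.log ((1 + ρ * (sg x * sg y)) / (1 + ρ * ((sg x - u) * (sg y - v)))) := by
  obtain ⟨hu1, hu2⟩ := abs_lt.mp hu
  obtain ⟨hv1, hv2⟩ := abs_lt.mp hv
  have hsg : ∀ x : Bool, sg x = 1 ∨ sg x = -1 := by intro x; cases x <;> simp
  have hp0 : ∀ x, 0 ≤ p x := fun x => by
    rw [hp]; rcases hsg x with h | h <;> rw [h] <;> linarith
  have hq0 : ∀ x, 0 ≤ q x := fun x => by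
    rw [hq]; rcases hsg x with h | h <;> rw [h] <;> linarith
  have hbd : ∀ x y : Bool, -4 < (sg x - u) * (sg y - v) := by
    intro x y
    rcases hsg x with h | h <;> rcases hsg y with h' | h' <;> rw [h, h'] <;> nlinarith
  have key : ∀ x y, p x * q y * (ρ * (u * sg y + v * sg x - u * v)
      - 6 * ρ ^ 2 * (u ^ 2 + v ^ 2)) ≤
      p x * q y * (1 + ρ * ((sg x - u) * (sg y - v))) *
        Real.log ((1 + ρ * (sg x * sg y)) / (1 + ρ * ((sg x - u) * (sg y - v)))) := by
    intro x y
    rw [mul_assoc (p x * q y)]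
    refine mul_le_mul_of_nonneg_left ?_ (mul_nonneg (hp0 x) (hq0 y))
    set A : ℝ := 1 + ρ * (sg x * sg y) with hA
    set B : ℝ := 1 + ρ * ((sg x - u) * (sg y - v)) with hB
    have hA34 : 3 / 4 ≤ A := by
      rcases hsg x with h | h <;> rcases hsg y with h' | h' <;> rw [hA, h, h'] <;> linarith
    have hB0 : 0 < B := by
      rcases h0.eq_or_lt with h | h
      · rw [hB, ← h]; norm_num
      · have := mul_lt_mul_of_pos_left (hbd x y) h
        rw [hB]; linarith
    have hA0 : 0 < A := by linarith
    have hAB : A - B = ρ * (u * sg y + v * sg x - u * v) := by rw [hA, hB]; ring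
    have hl : 1 - (A / B)⁻¹ ≤ Real.log (A / B) := Real.one_sub_inv_le_log_of_pos (by positivity)
    have hl2 : B * (1 - (A / B)⁻¹) ≤ B * Real.log (A / B) := mul_le_mul_of_nonneg_left hl hB0.le
    have e : B * (1 - (A / B)⁻¹) = (A - B) - (A - B) ^ 2 / A := by field_simp; ring
    have h45 : (u * sg y + v * sg x - u * v) ^ 2 ≤ 9 / 2 * (u ^ 2 + v ^ 2) := by
      have huv : u ^ 2 * v ^ 2 ≤ (u ^ 2 + v ^ 2) / 2 := by
        have : u ^ 2 ≤ 1 := by nlinarith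
        have : v ^ 2 ≤ 1 := by nlinarith
        nlinarith [sq_nonneg u, sq_nonneg v]
      have hx := sg_sq x
      have hy := sg_sq y
      nlinarith [sq_nonneg (u * sg y - v * sg x), sq_nonneg (u * sg y + u * v),
        sq_nonneg (v * sg x + u * v)]
    have h6 : (A - B) ^ 2 / A ≤ 6 * ρ ^ 2 * (u ^ 2 + v ^ 2) := by
      rw [div_le_iff₀ hA0, hAB, mul_pow]
      have hs : 0 ≤ ρ ^ 2 * (u ^ 2 + v ^ 2) := by positivity
      have := mul_le_mul_of_nonneg_left h45 (sq_nonneg ρ)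
      nlinarith
    rw [e] at hl2
    linarith
  refine le_trans ?_ (Finset.sum_le_sum fun x _ => Finset.sum_le_sum fun y _ => key x y)
  simp only [Fintype.sum_bool, hp, hq, sg_true, sg_false]
  apply le_of_eq
  ring

/-- The covariance between functions `m`, `m'` of the two coupled bits is at least `-ρ` times the
mean of their variances; multiplied by `ρ` and combined with the second-moment terms, this is the
step that carries the means through the induction in `log_bil_ge`. -/
lemma two_point {ρ u v : ℝ} (hu : |u| < 1) (hv : |v| < 1)
    (p q m m' : Bool → ℝ) (hp : ∀ x, p x = (1 + sg x * u) / 2)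
    (hq : ∀ y, q y = (1 + sg y * v) / 2) :
    ρ * ((∑ x, p x * m x) * (∑ y, q y * m' y))
      + ρ ^ 2 / 2 * ((∑ x, p x * m x) ^ 2 + (∑ y, q y * m' y) ^ 2) ≤
    ρ * (∑ x, ∑ y, p x * q y * (1 + ρ * ((sg x - u) * (sg y - v))) * (m x * m' y))
      + ρ ^ 2 / 2 * ((∑ x, p x * m x ^ 2) + ∑ y, q y * m' y ^ 2) := by
  obtain ⟨hu1, hu2⟩ := abs_lt.mp hu
  obtain ⟨hv1, hv2⟩ := abs_lt.mp hv
  simp only [Fintype.sum_bool, hp, hq, sg_true, sg_false]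
  set d := (m true - m false) / 2
  set d' := (m' true - m' false) / 2
  have hU : 0 < 1 - u ^ 2 := by nlinarith
  have hV : 0 < 1 - v ^ 2 := by nlinarith
  -- the difference of the two sides, in terms of the slopes `d`, `d'`
  have key : 0 ≤ ρ ^ 2 * ((1 - u ^ 2) * (1 - v ^ 2) * (d * d')
      + ((1 - u ^ 2) * d ^ 2 + (1 - v ^ 2) * d' ^ 2) / 2) := by
    refine mul_nonneg (sq_nonneg _) ?_
    have h1 : (1 - u ^ 2) * (1 - v ^ 2) ≤ 1 - u ^ 2 := by nlinarith [sq_nonneg v]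
    have h2 : (1 - u ^ 2) * (1 - v ^ 2) ≤ 1 - v ^ 2 := by nlinarith [sq_nonneg u]
    have h3 := mul_nonneg (mul_nonneg hU.le hV.le) (sq_nonneg (d + d'))
    nlinarith [mul_le_mul_of_nonneg_right h1 (sq_nonneg d),
      mul_le_mul_of_nonneg_right h2 (sq_nonneg d')]
  rw [← sub_nonneg]
  convert key using 1
  simp only [d, d']
  ring

/-! ### The reverse-hypercontractive estimate -/

lemma bil_cons (n : ℕ) (ρ : ℝ) (a b : (Fin (n + 1) → Bool) → ℝ) :
    bil (n + 1) ρ a b = ∑ x, ∑ y, (1 + ρ * (sg x * sg y)) *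
      bil n ρ (fun t => a (Fin.cons x t)) (fun t => b (Fin.cons y t)) := by
  unfold bil
  rw [sum_cons]
  refine Finset.sum_congr rfl fun x _ => ?_
  have : ∀ s : Fin n → Bool, ∑ y, a (Fin.cons x s) * b y * ker (n + 1) ρ (Fin.cons x s) y
      = ∑ y, ∑ t, (1 + ρ * (sg x * sg y)) *
        (a (Fin.cons x s) * b (Fin.cons y t) * ker n ρ s t) := fun s => by
    rw [sum_cons]
    refine Finset.sum_congr rfl fun y _ => Finset.sum_congr rfl fun t _ => ?_
    rw [ker_cons]; ring
  simp only [this]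
  rw [Finset.sum_comm]
  simp only [← Finset.mul_sum]

lemma bil_smul (n : ℕ) (ρ r s : ℝ) (a b : (Fin n → Bool) → ℝ) :
    bil n ρ (fun x => r * a x) (fun y => s * b y) = r * s * bil n ρ a b := by
  unfold bil
  simp only [Finset.mul_sum]
  refine Finset.sum_congr rfl fun x _ => Finset.sum_congr rfl fun y _ => by ring

/-- Disintegration of a positive probability mass function along its first coordinate: the
marginal `p` of bias `u`, the conditional laws `α`, and the chain rules for means and entropy. -/
lemma disint (n : ℕ) (a : (Fin (n + 1) → Bool) → ℝ) (ha : ∀ x, 0 < a x) (hs : ∑ x, a x = 1) :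
    ∃ (u : ℝ) (p : Bool → ℝ) (α : Bool → (Fin n → Bool) → ℝ), |u| < 1 ∧ (∀ x, 0 < p x) ∧
      (∀ x, p x = (1 + sg x * u) / 2) ∧ (∀ x t, 0 < α x t) ∧ (∀ x, ∑ t, α x t = 1) ∧
      (∀ x t, a (Fin.cons x t) = p x * α x t) ∧ mom (n + 1) a 0 = u ∧
      (∀ k : Fin n, mom (n + 1) a k.succ = ∑ x, p x * mom n (α x) k) ∧
      u ^ 2 / 6 + ∑ x, p x * ent n (α x) ≤ ent (n + 1) a := by
  set p : Bool → ℝ := fun x => ∑ t, a (Fin.cons x t) with hpdef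
  have hp : ∀ x, 0 < p x := fun x =>
    Finset.sum_pos (fun t _ => ha _) Finset.univ_nonempty
  have hsum : p true + p false = 1 := by
    rw [sum_cons, Fintype.sum_bool] at hs; exact hs
  set α : Bool → (Fin n → Bool) → ℝ := fun x t => a (Fin.cons x t) / p x with hα
  have hdec : ∀ x t, a (Fin.cons x t) = p x * α x t := fun x t => by
    have := (hp x).ne'
    simp only [hα]; field_simp
  have hα0 : ∀ x t, 0 < α x t := fun x t => div_pos (ha _) (hp x)
  have hα1 : ∀ x, ∑ t, α x t = 1 := fun x => by
    simp only [hα]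
    rw [← Finset.sum_div]
    exact div_self (hp x).ne'
  have hpt := hp true
  have hpf := hp false
  refine ⟨p true - p false, p, α, ?_, hp, ?_, hα0, hα1, hdec, ?_, ?_, ?_⟩
  · rw [abs_lt]; constructor <;> linarith
  · intro x; cases x <;> simp <;> linarith
  · unfold mom
    rw [sum_cons]
    simp [hpdef, sub_eq_add_neg]
  · intro k
    unfold mom
    rw [sum_cons]
    refine Finset.sum_congr rfl fun x _ => ?_
    rw [Finset.mul_sum]
    refine Finset.sum_congr rfl fun t _ => ?_
    rw [hdec]; simp; ring
  · have hent : ent (n + 1) a = ∑ x, (p x * Real.log (2 * p x) + p x * ent n (α x)) := by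
      unfold ent
      rw [sum_cons]
      refine Finset.sum_congr rfl fun x _ => ?_
      have : ∀ t, a (Fin.cons x t) * Real.log (2 ^ (n + 1) * a (Fin.cons x t))
          = p x * Real.log (2 * p x) * α x t + p x * (α x t * Real.log (2 ^ n * α x t)) := by
        intro t
        have h1 := hp x
        have h2 := hα0 x t
        have e : 2 ^ (n + 1) * (p x * α x t) = (2 * p x) * (2 ^ n * α x t) := by ring
        rw [hdec, e, Real.log_mul (by positivity) (by positivity)]
        ring
      simp only [this]
      rw [Finset.sum_add_distrib, ← Finset.mul_sum, ← Finset.mul_sum, hα1, mul_one]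
    have hb := bit_entropy hpt (by linarith : p true < 1)
    have e1 : 1 - p true = p false := by linarith
    have e2 : 2 * p true - 1 = p true - p false := by linarith
    rw [e1, e2] at hb
    rw [hent, Finset.sum_add_distrib]
    simp only [Fintype.sum_bool] at *
    linarith

lemma bil_pos (n : ℕ) {ρ : ℝ} (h0 : 0 ≤ ρ) (h1 : ρ < 1) (a b : (Fin n → Bool) → ℝ)
    (ha : ∀ x, 0 < a x) (hb : ∀ x, 0 < b x) : 0 < bil n ρ a b :=
  Finset.sum_pos (fun x _ => Finset.sum_pos (fun y _ =>
    mul_pos (mul_pos (ha x) (hb y)) (ker_pos n h0 h1 x y)) Finset.univ_nonempty)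
    Finset.univ_nonempty

/-- A quantitative reverse-hypercontractive estimate. The first-order term in `ρ` is exactly the
inner product of the mean vectors; everything else is of order `ρ²` times the entropies. The proof
reveals the coordinates one at a time and applies Jensen's inequality along a coupling of the two
laws in which the coordinates keep correlation about `ρ`; the second-order terms in the means make
the induction close. -/
theorem log_bil_ge {ρ : ℝ} (h0 : 0 ≤ ρ) (h1 : ρ ≤ 1 / 4) : ∀ (n : ℕ) (a b : (Fin n → Bool) → ℝ),
    (∀ x, 0 < a x) → (∀ x, 0 < b x) → ∑ x, a x = 1 → ∑ x, b x = 1 →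
    ρ * ∑ k, mom n a k * mom n b k + ρ ^ 2 / 2 * (∑ k, mom n a k ^ 2 + ∑ k, mom n b k ^ 2)
      - 39 * ρ ^ 2 * (ent n a + ent n b) ≤ Real.log (bil n ρ a b) := by
  intro n
  induction n with
  | zero =>
    intro a b ha hb hsa hsb
    simp only [Fintype.sum_unique] at hsa hsb
    simp [bil, ent, ker, hsa, hsb]
  | succ n ih =>
    intro a b ha hb hsa hsb
    obtain ⟨u, p, α, hu, hp0, hp, hα0, hα1, hα, hmu, hma, hea⟩ := disint n a ha hsa
    obtain ⟨v, q, β, hv, hq0, hq, hβ0, hβ1, hβ, hmv, hmb, heb⟩ := disint n b hb hsb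
    have hρ1 : ρ < 1 := by linarith
    set B : Bool → Bool → ℝ := fun x y => 1 + ρ * ((sg x - u) * (sg y - v)) with hB
    set A : Bool → Bool → ℝ := fun x y => 1 + ρ * (sg x * sg y) with hA
    have hA0 : ∀ x y, 0 < A x y := fun x y => by
      cases x <;> cases y <;> simp [hA] <;> linarith
    have hB0 : ∀ x y, 0 < B x y := fun x y => by
      obtain ⟨hu1, hu2⟩ := abs_lt.mp hu
      obtain ⟨hv1, hv2⟩ := abs_lt.mp hv
      have hbd : -4 < (sg x - u) * (sg y - v) := by
        cases x <;> cases y <;> simp only [sg_true, sg_false] <;> nlinarith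
      rcases h0.eq_or_lt with h | h
      · simp [hB, ← h]
      · have := mul_lt_mul_of_pos_left hbd h
        simp only [hB]; linarith
    have hbil : ∀ x y, 0 < bil n ρ (α x) (β y) := fun x y =>
      bil_pos n h0 hρ1 _ _ (hα0 x) (hβ0 y)
    set ν : Bool → Bool → ℝ := fun x y => p x * q y * B x y with hν
    have hν0 : ∀ x y, 0 < ν x y := fun x y => mul_pos (mul_pos (hp0 x) (hq0 y)) (hB0 x y)
    -- the coupling has marginals `p` and `q`
    have hm1 : ∀ x, ∑ y, ν x y = p x := fun x => by
      simp only [hν, hB, Fintype.sum_bool, hq, sg_true, sg_false]; ring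
    have hm2 : ∀ y, ∑ x, ν x y = q y := fun y => by
      simp only [hν, hB, Fintype.sum_bool, hp, sg_true, sg_false]; ring
    have hp1 : ∑ x, p x = 1 := by
      simp only [Fintype.sum_bool, hp, sg_true, sg_false]; ring
    have hfun1 : ∀ x, (fun t => a (Fin.cons x t)) = fun t => p x * α x t :=
      fun x => funext fun t => hα x t
    have hfun2 : ∀ y, (fun t => b (Fin.cons y t)) = fun t => q y * β y t :=
      fun y => funext fun t => hβ y t
    have hexp : bil (n + 1) ρ a b
        = ∑ z : Bool × Bool, ν z.1 z.2 * (A z.1 z.2 / B z.1 z.2 * bil n ρ (α z.1) (β z.2)) := by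
      rw [bil_cons, Fintype.sum_prod_type]
      refine Finset.sum_congr rfl fun x _ => Finset.sum_congr rfl fun y _ => ?_
      rw [hfun1, hfun2, bil_smul]
      have := (hB0 x y).ne'
      simp only [hν, hA]
      field_simp
    have hJ := jensen_log (ι := Bool × Bool) (fun z => ν z.1 z.2)
      (fun z => A z.1 z.2 / B z.1 z.2 * bil n ρ (α z.1) (β z.2)) (fun z => (hν0 _ _).le)
      (by rw [Fintype.sum_prod_type]; simp only [hm1, hp1])
      (fun z => mul_pos (div_pos (hA0 _ _) (hB0 _ _)) (hbil _ _))
    rw [← hexp, Fintype.sum_prod_type] at hJ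
    refine le_trans ?_ hJ
    have hone := one_step h0 h1 hu hv p q hp hq
    -- insert the induction hypothesis
    have hih : ∀ x y, ν x y * Real.log (A x y / B x y) + ν x y *
        (ρ * ∑ k, mom n (α x) k * mom n (β y) k
          + ρ ^ 2 / 2 * (∑ k, mom n (α x) k ^ 2 + ∑ k, mom n (β y) k ^ 2)
          - 39 * ρ ^ 2 * (ent n (α x) + ent n (β y)))
        ≤ ν x y * Real.log (A x y / B x y * bil n ρ (α x) (β y)) := fun x y => by
      rw [Real.log_mul (div_pos (hA0 _ _) (hB0 _ _)).ne' (hbil _ _).ne', mul_add]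
      have := mul_le_mul_of_nonneg_left (ih (α x) (β y) (hα0 x) (hβ0 y) (hα1 x) (hβ1 y))
        (hν0 x y).le
      linarith
    refine le_trans ?_ (Finset.sum_le_sum fun x _ => Finset.sum_le_sum fun y _ => hih x y)
    have hL : ∀ G : Bool → ℝ, ∑ x, ∑ y, ν x y * G x = ∑ x, p x * G x := fun G => by
      simp only [← Finset.sum_mul, hm1]
    have hR : ∀ G : Bool → ℝ, ∑ x, ∑ y, ν x y * G y = ∑ y, q y * G y := fun G => by
      rw [Finset.sum_comm]; simp only [← Finset.sum_mul, hm2]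
    have hsplit : ∑ x, ∑ y, (ν x y * Real.log (A x y / B x y) + ν x y *
        (ρ * ∑ k, mom n (α x) k * mom n (β y) k
          + ρ ^ 2 / 2 * (∑ k, mom n (α x) k ^ 2 + ∑ k, mom n (β y) k ^ 2)
          - 39 * ρ ^ 2 * (ent n (α x) + ent n (β y))))
        = ∑ x, ∑ y, ν x y * Real.log (A x y / B x y)
          + ρ * (∑ x, ∑ y, ν x y * ∑ k, mom n (α x) k * mom n (β y) k)
          + ρ ^ 2 / 2 * (∑ x, p x * ∑ k, mom n (α x) k ^ 2 + ∑ y, q y * ∑ k, mom n (β y) k ^ 2)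
          - 39 * ρ ^ 2 * (∑ x, p x * ent n (α x) + ∑ y, q y * ent n (β y)) := by
      rw [← hL fun x => ∑ k, mom n (α x) k ^ 2, ← hL fun x => ent n (α x),
        ← hR fun y => ∑ k, mom n (β y) k ^ 2, ← hR fun y => ent n (β y)]
      simp only [Fintype.sum_bool]
      ring
    rw [hsplit]
    have hcov : ρ * (∑ k, (∑ x, p x * mom n (α x) k) * (∑ y, q y * mom n (β y) k))
        + ρ ^ 2 / 2 * (∑ k, (∑ x, p x * mom n (α x) k) ^ 2 + ∑ k, (∑ y, q y * mom n (β y) k) ^ 2)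
        ≤ ρ * (∑ x, ∑ y, ν x y * ∑ k, mom n (α x) k * mom n (β y) k)
          + ρ ^ 2 / 2 * (∑ x, p x * ∑ k, mom n (α x) k ^ 2
            + ∑ y, q y * ∑ k, mom n (β y) k ^ 2) := by
      have := Finset.sum_le_sum fun (k : Fin n) (_ : k ∈ Finset.univ) =>
        two_point (ρ := ρ) hu hv p q (fun x => mom n (α x) k) (fun y => mom n (β y) k) hp hq
      simp only [Finset.sum_add_distrib, ← Finset.mul_sum] at this
      have e1 : ∑ x, ∑ y, ν x y * ∑ k, mom n (α x) k * mom n (β y) k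
          = ∑ k, ∑ x, ∑ y, p x * q y * (1 + ρ * ((sg x - u) * (sg y - v))) *
            (mom n (α x) k * mom n (β y) k) := by
        rw [Finset.sum_comm]
        simp only [Finset.mul_sum, Fintype.sum_bool, ← Finset.sum_add_distrib]
        exact Finset.sum_congr rfl fun k _ => by simp only [hν, hB]; ring
      have e2 : ∑ x, p x * ∑ k, mom n (α x) k ^ 2 = ∑ k, ∑ x, p x * mom n (α x) k ^ 2 := by
        rw [Finset.sum_comm]; simp only [Finset.mul_sum]
      have e3 : ∑ x, q x * ∑ k, mom n (β x) k ^ 2 = ∑ k, ∑ x, q x * mom n (β x) k ^ 2 := by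
        rw [Finset.sum_comm]; simp only [Finset.mul_sum]
      rw [e1, e2, e3]
      exact this
    simp only [Fin.sum_univ_succ (n := n), hmu, hmv, hma, hmb]
    have e39 := mul_le_mul_of_nonneg_left (add_le_add hea heb)
      (by positivity : (0 : ℝ) ≤ 39 * ρ ^ 2)
    have hfin : ρ * (u * v) - 6 * ρ ^ 2 * (u ^ 2 + v ^ 2)
        ≤ ∑ x, ∑ y, ν x y * Real.log (A x y / B x y) := hone
    linarith

/-! ### Entropy estimates for one coordinate -/

lemma bil_nonneg (n : ℕ) {ρ : ℝ} (h0 : 0 ≤ ρ) (h1 : ρ ≤ 1) (a b : (Fin n → Bool) → ℝ)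
    (ha : ∀ x, 0 ≤ a x) (hb : ∀ x, 0 ≤ b x) : 0 ≤ bil n ρ a b :=
  Finset.sum_nonneg fun x _ => Finset.sum_nonneg fun y _ =>
    mul_nonneg (mul_nonneg (ha x) (hb y)) (ker_nonneg n h0 h1 x y)

lemma bil_comm (n : ℕ) (ρ : ℝ) (a b : (Fin n → Bool) → ℝ) : bil n ρ a b = bil n ρ b a := by
  unfold bil
  rw [Finset.sum_comm]
  refine Finset.sum_congr rfl fun x _ => Finset.sum_congr rfl fun y _ => ?_
  rw [ker_comm]; ring

lemma bil_smooth_left (n : ℕ) (α σ : ℝ) (a b : (Fin n → Bool) → ℝ) :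
    bil n σ (smooth n α a) b = bil n (α * σ) a b := by
  have hN : (2 : ℝ) ^ n ≠ 0 := by positivity
  have h : ∀ z y, a z * b y * ker n (α * σ) z y
      = ∑ x, ker n α x z * a z * b y * ker n σ x y / 2 ^ n := fun z y => by
    have h1 := ker_comp n α σ z y
    have h2 : ∀ x, ker n α x z * a z * b y * ker n σ x y / 2 ^ n
        = a z * b y / 2 ^ n * (ker n α z x * ker n σ x y) := fun x => by
      rw [ker_comm n α x z]; ring
    simp only [h2, ← Finset.mul_sum, h1]
    field_simp
  unfold bil
  simp only [h]
  have hl : ∀ x y, smooth n α a x * b y * ker n σ x y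
      = ∑ z, ker n α x z * a z * b y * ker n σ x y / 2 ^ n := fun x y => by
    unfold smooth
    rw [Finset.sum_div, Finset.sum_mul, Finset.sum_mul]
    exact Finset.sum_congr rfl fun z _ => by ring
  simp only [hl]
  rw [Finset.sum_congr rfl fun x _ => Finset.sum_comm, Finset.sum_comm]
  exact Finset.sum_congr rfl fun z _ => Finset.sum_comm

lemma sum_smooth (n : ℕ) (α : ℝ) (a : (Fin n → Bool) → ℝ) :
    ∑ x, smooth n α a x = ∑ x, a x := by
  have hN : (2 : ℝ) ^ n ≠ 0 := by positivity
  unfold smooth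
  rw [← Finset.sum_div, Finset.sum_comm]
  have : ∀ z, ∑ x, ker n α x z * a z = 2 ^ n * a z := fun z => by
    rw [← Finset.sum_mul]
    simp only [fun x => ker_comm n α x z, sum_ker]
  simp only [this, ← Finset.mul_sum]
  field_simp

lemma smooth_even (n : ℕ) (α : ℝ) (a : (Fin n → Bool) → ℝ)
    (ha : ∀ x, a (fun k => !(x k)) = a x) (x : Fin n → Bool) :
    smooth n α a (fun k => !(x k)) = smooth n α a x := by
  have hinv : Function.Involutive (fun x : Fin n → Bool => fun k => !(x k)) := by
    intro x; simp
  unfold smooth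
  congr 1
  rw [← Equiv.sum_comp hinv.toPerm]
  refine Finset.sum_congr rfl fun z _ => ?_
  change ker n α (fun k => !(x k)) (fun k => !(z k)) * a (fun k => !(z k)) = _
  rw [ker_neg, ha]

lemma mom_even (n : ℕ) (a : (Fin n → Bool) → ℝ) (ha : ∀ x, a (fun k => !(x k)) = a x)
    (k : Fin n) : mom n a k = 0 := by
  have hinv : Function.Involutive (fun x : Fin n → Bool => fun k => !(x k)) := by
    intro x; simp
  have h : mom n a k = -mom n a k := by
    unfold mom
    conv_lhs => rw [← Equiv.sum_comp hinv.toPerm]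
    rw [← Finset.sum_neg_distrib]
    refine Finset.sum_congr rfl fun z _ => ?_
    change a (fun k => !(z k)) * sg (!(z k)) = _
    rw [ha, sg_not]; ring
  linarith

lemma dd_even (n : ℕ) (g : (Fin n → Bool) → ℝ) (hg : Antipodal n g) (i : Fin n)
    (x : Fin n → Bool) : dd n i g (fun k => !(x k)) = dd n i g x := by
  have h : ∀ b, g (Function.update x i b) = 1 - g (Function.update (fun k => !(x k)) i (!b)) := by
    intro b
    rw [hg]
    congr 2
    funext k
    by_cases hk : k = i
    · subst hk; simp
    · simp [Function.update_of_ne hk]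
  unfold dd
  rw [h true, h false]
  simp

/-- The unnormalized entropy terms of the pair `(a, b)`: with `P = ∑ a`, `Q = ∑ b`, this is
`P Q (Ent (a / P) + Ent (b / Q))`. -/
def pairEnt (n : ℕ) (a b : (Fin n → Bool) → ℝ) : ℝ :=
  (∑ y, b y) * ∑ x, a x * Real.log (2 ^ n * (a x / ∑ y, a y))
    + (∑ x, a x) * ∑ y, b y * Real.log (2 ^ n * (b y / ∑ x, b x))

lemma smooth_zero (n : ℕ) (α : ℝ) (a : (Fin n → Bool) → ℝ) (h : ∀ x, a x = 0) (x : Fin n → Bool) :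
    smooth n α a x = 0 := by
  simp [smooth, h]

lemma smooth_pos (n : ℕ) {α : ℝ} (h0 : 0 ≤ α) (h1 : α < 1) (a : (Fin n → Bool) → ℝ)
    (ha : ∀ x, 0 ≤ a x) (hne : ∃ x, a x ≠ 0) (x : Fin n → Bool) : 0 < smooth n α a x := by
  obtain ⟨z, hz⟩ := hne
  refine div_pos (Finset.sum_pos' (fun y _ => mul_nonneg (ker_nonneg n h0 h1.le x y) (ha y))
    ⟨z, Finset.mem_univ z, mul_pos (ker_pos n h0 h1 x z) (lt_of_le_of_ne (ha z) hz.symm)⟩)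
    (by positivity)

lemma smooth_nonneg (n : ℕ) {α : ℝ} (h0 : 0 ≤ α) (h1 : α ≤ 1) (a : (Fin n → Bool) → ℝ)
    (ha : ∀ x, 0 ≤ a x) (x : Fin n → Bool) : 0 ≤ smooth n α a x :=
  div_nonneg (Finset.sum_nonneg fun y _ => mul_nonneg (ker_nonneg n h0 h1 x y) (ha y))
    (by positivity)

/-- The estimate `log_bil_ge` for a pair with an even second member, where the first-order term
vanishes, in linearized and unnormalized form. -/
lemma bil_ge_of_even (n : ℕ) {σ : ℝ} (h0 : 0 ≤ σ) (h1 : σ ≤ 1 / 4) (a b : (Fin n → Bool) → ℝ)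
    (ha : ∀ x, 0 < a x) (hb : ∀ x, 0 < b x) (hev : ∀ x, b (fun k => !(x k)) = b x) :
    (∑ x, a x) * (∑ y, b y) - 39 * σ ^ 2 * pairEnt n a b ≤ bil n σ a b := by
  set P := ∑ x, a x with hP
  set Q := ∑ x, b x with hQ
  have hP0 : 0 < P := Finset.sum_pos (fun t _ => ha _) Finset.univ_nonempty
  have hQ0 : 0 < Q := Finset.sum_pos (fun t _ => hb _) Finset.univ_nonempty
  have key := log_bil_ge h0 h1 n (fun x => a x / P) (fun x => b x / Q)
    (fun x => div_pos (ha x) hP0) (fun x => div_pos (hb x) hQ0)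
    (by rw [← Finset.sum_div]; exact div_self hP0.ne')
    (by rw [← Finset.sum_div]; exact div_self hQ0.ne')
  have hm : ∀ k, mom n (fun x => b x / Q) k = 0 :=
    mom_even n _ (fun x => by rw [hev])
  simp only [hm] at key
  have hbil : bil n σ a b = P * Q * bil n σ (fun x => a x / P) (fun x => b x / Q) := by
    rw [← bil_smul]
    congr 1 <;> funext x <;> field_simp
  have hpos : 0 < bil n σ (fun x => a x / P) (fun x => b x / Q) :=
    bil_pos n h0 (by linarith) _ _ (fun x => div_pos (ha x) hP0) (fun x => div_pos (hb x) hQ0)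
  have hlog := Real.log_le_sub_one_of_pos hpos
  have hsq : 0 ≤ ∑ k, mom n (fun x => a x / P) k ^ 2 := Finset.sum_nonneg fun k _ => sq_nonneg _
  have hsq2 : 0 ≤ σ ^ 2 / 2 * (∑ k, mom n (fun x => a x / P) k ^ 2) := by positivity
  have hmain : 1 - 39 * σ ^ 2 * (ent n (fun x => a x / P) + ent n (fun x => b x / Q))
      ≤ bil n σ (fun x => a x / P) (fun x => b x / Q) := by
    simp at key
    linarith
  have hE1 : P * ent n (fun x => a x / P) = ∑ x, a x * Real.log (2 ^ n * (a x / P)) := by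
    unfold ent
    rw [Finset.mul_sum]
    exact Finset.sum_congr rfl fun x _ => by field_simp
  have hE2 : Q * ent n (fun x => b x / Q) = ∑ x, b x * Real.log (2 ^ n * (b x / Q)) := by
    unfold ent
    rw [Finset.mul_sum]
    exact Finset.sum_congr rfl fun x _ => by field_simp
  have hpe : pairEnt n a b = P * Q * (ent n (fun x => a x / P) + ent n (fun x => b x / Q)) := by
    unfold pairEnt
    rw [← hP, ← hQ, ← hE1, ← hE2]; ring
  rw [hbil, hpe]
  have := mul_le_mul_of_nonneg_left hmain (mul_pos hP0 hQ0).le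
  linarith

/-- A bound on the entropy terms of a pair by squares. Comparing each member with the mean of the
other costs `log (Q / P)` for one and `log (P / Q)` for the other (`P = ∑ a`, `Q = ∑ b`); these
cancel, and `log t ≤ t - 1` turns the rest into squares. -/
lemma pairEnt_le (n : ℕ) (a b : (Fin n → Bool) → ℝ) (ha : ∀ x, 0 < a x) (hb : ∀ x, 0 < b x)
    {r : ℝ} (hr : 0 < r) :
    pairEnt n a b ≤ 2 * ((∑ x, a x) * ∑ y, b y) * (Real.log (1 / r) - 1)
      + 2 ^ n * r * (∑ x, a x ^ 2 + ∑ x, b x ^ 2) := by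
  have half : ∀ (a : (Fin n → Bool) → ℝ) (P Q : ℝ), (∀ x, 0 < a x) → ∑ x, a x = P → 0 < P →
      0 < Q → Q * ∑ x, a x * Real.log (2 ^ n * (a x / P)) ≤
        Q * P * (Real.log (Q / P) + Real.log (1 / r) - 1) + 2 ^ n * r * ∑ x, a x ^ 2 := by
    intro a P Q ha hP hP0 hQ0
    have hx : ∀ x, Q * (a x * Real.log (2 ^ n * (a x / P))) ≤
        a x * (Q * (Real.log (Q / P) + Real.log (1 / r) - 1)) + 2 ^ n * r * a x ^ 2 := by
      intro x
      have hax := ha x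
      have e : 2 ^ n * (a x / P) = (Q / P) * ((1 / r) * (2 ^ n * r * a x / Q)) := by
        field_simp
      rw [e, Real.log_mul (by positivity) (by positivity), Real.log_mul (by positivity)
        (by positivity)]
      have hl := Real.log_le_sub_one_of_pos (by positivity : 0 < 2 ^ n * r * a x / Q)
      have := mul_le_mul_of_nonneg_left hl (mul_pos hQ0 hax).le
      have e2 : Q * a x * (2 ^ n * r * a x / Q - 1) = 2 ^ n * r * a x ^ 2 - Q * a x := by
        field_simp
      rw [e2] at this
      linarith
    rw [Finset.mul_sum]
    refine (Finset.sum_le_sum fun x _ => hx x).trans (le_of_eq ?_)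
    rw [Finset.sum_add_distrib, ← Finset.sum_mul, ← Finset.mul_sum, hP]
    ring
  have hP0 : 0 < ∑ x, a x := Finset.sum_pos (fun t _ => ha _) Finset.univ_nonempty
  have hQ0 : 0 < ∑ x, b x := Finset.sum_pos (fun t _ => hb _) Finset.univ_nonempty
  have k1 := half a _ (∑ x, b x) ha rfl hP0 hQ0
  have k2 := half b _ (∑ x, a x) hb rfl hQ0 hP0
  have hcancel : Real.log ((∑ x, b x) / ∑ x, a x) = - Real.log ((∑ x, a x) / ∑ x, b x) := by
    rw [← Real.log_inv, inv_div]
  rw [hcancel] at k1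
  unfold pairEnt
  linarith

/-- The contribution of one pair of derivatives to the derivative of the noise form. -/
lemma coord_bound (n : ℕ) {ρ r : ℝ} (h0 : 0 ≤ ρ) (h1 : ρ ≤ 1 / 16) (hr : 0 < r)
    (a b : (Fin n → Bool) → ℝ)
    (ha : ∀ x, 0 ≤ a x) (hb : ∀ x, 0 ≤ b x) (hev : ∀ x, b (fun k => !(x k)) = b x) :
    (∑ x, a x) * (∑ y, b y) - 624 * ρ ^ 2 * (2 * ((∑ x, a x) * ∑ y, b y) * (Real.log (1 / r) - 1)
      + 2 ^ n * r * (∑ x, smooth n (1 / 2) a x ^ 2 + ∑ x, smooth n (1 / 2) b x ^ 2))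
      ≤ bil n ρ a b := by
  have hbn : 0 ≤ bil n ρ a b := bil_nonneg n h0 (by linarith) a b ha hb
  have hsqs : 0 ≤ 624 * ρ ^ 2 * (2 ^ n * r * (∑ x, smooth n (1 / 2) a x ^ 2
      + ∑ x, smooth n (1 / 2) b x ^ 2)) := by
    have e1 : 0 ≤ ∑ x, smooth n (1 / 2) a x ^ 2 := Finset.sum_nonneg fun _ _ => sq_nonneg _
    have e2 : 0 ≤ ∑ x, smooth n (1 / 2) b x ^ 2 := Finset.sum_nonneg fun _ _ => sq_nonneg _
    positivity
  by_cases hA : ∃ x, a x ≠ 0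
  · by_cases hB : ∃ x, b x ≠ 0
    · have pa := smooth_pos n (by norm_num : (0 : ℝ) ≤ 1 / 2) (by norm_num) a ha hA
      have pb := smooth_pos n (by norm_num : (0 : ℝ) ≤ 1 / 2) (by norm_num) b hb hB
      have k1 := bil_ge_of_even n (σ := 4 * ρ) (by linarith) (by linarith) _ _ pa pb
        (smooth_even n _ b hev)
      have k2 := pairEnt_le n _ _ pa pb hr
      have e : bil n (4 * ρ) (smooth n (1 / 2) a) (smooth n (1 / 2) b) = bil n ρ a b := by
        rw [bil_smooth_left, bil_comm, bil_smooth_left, bil_comm]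
        congr 1; ring
      rw [e, sum_smooth, sum_smooth] at k1
      rw [sum_smooth, sum_smooth] at k2
      have := mul_le_mul_of_nonneg_left k2 (by positivity : 0 ≤ 624 * ρ ^ 2)
      linarith
    · push Not at hB
      have : ∑ y, b y = 0 := by simp [hB]
      rw [this]; linarith
  · push Not at hA
    have : ∑ y, a y = 0 := by simp [hA]
    rw [this]; linarith

/-! ### The derivative of the noise form -/

/-- The derivative in `ρ` of the noise form is the noise form of the gradients. -/
lemma hasDerivAt_bil (n : ℕ) (f g : (Fin n → Bool) → ℝ) (ρ : ℝ) :
    HasDerivAt (fun ρ => bil n ρ f g) ((∑ i, bil n ρ (dd n i f) (dd n i g)) / 4) ρ := by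
  have hk : ∀ x y, HasDerivAt (fun ρ => ker n ρ x y)
      (∑ i, kerErase n ρ i x y * (sg (x i) * sg (y i))) ρ := fun x y => by
    unfold ker kerErase
    have := HasDerivAt.fun_finsetProd (u := Finset.univ)
      (f := fun (i : Fin n) (ρ : ℝ) => 1 + ρ * (sg (x i) * sg (y i)))
      (f' := fun i => sg (x i) * sg (y i)) (x := ρ) (fun i _ => by
        simpa using ((hasDerivAt_id ρ).mul_const (sg (x i) * sg (y i))).const_add 1)
    simpa using this
  have hd : HasDerivAt (fun ρ => bil n ρ f g)
      (∑ x, ∑ y, f x * g y * ∑ i, kerErase n ρ i x y * (sg (x i) * sg (y i))) ρ := by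
    unfold bil
    refine HasDerivAt.fun_sum fun x _ => HasDerivAt.fun_sum fun y _ => ?_
    exact (hk x y).const_mul _
  convert hd using 1
  have hi : ∀ i, bil n ρ (dd n i f) (dd n i g)
      = 4 * ∑ x, ∑ y, f x * g y * (kerErase n ρ i x y * (sg (x i) * sg (y i))) := fun i => by
    have l1 : bil n ρ (dd n i f) (dd n i g)
        = ∑ x, ∑ y, dd n i f x * dd n i g y * kerErase n ρ i x y := by
      unfold bil
      refine Finset.sum_congr rfl fun x _ => ?_
      have := sum_ker_mul_dd n ρ i g x
      have e : ∀ (k : (Fin n → Bool) → ℝ), ∑ y, dd n i f x * dd n i g y * k y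
          = dd n i f x * ∑ y, k y * dd n i g y := fun k => by
        rw [Finset.mul_sum]; exact Finset.sum_congr rfl fun y _ => by ring
      rw [e, e, this]
    have l2 : ∀ x, 2 * ∑ y, f x * g y * (kerErase n ρ i x y * (sg (x i) * sg (y i)))
        = ∑ y, f x * sg (x i) * (dd n i g y * kerErase n ρ i x y) := fun x => by
      rw [sum_split n i]
      refine Finset.sum_congr rfl fun y _ => ?_
      simp only [kerErase_update_right, Function.update_self, sg_true, sg_false, dd]
      ring
    have l3 : 2 * ∑ x, ∑ y, f x * sg (x i) * (dd n i g y * kerErase n ρ i x y)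
        = ∑ x, ∑ y, dd n i f x * dd n i g y * kerErase n ρ i x y := by
      rw [sum_split n i]
      refine Finset.sum_congr rfl fun x _ => ?_
      rw [← Finset.sum_add_distrib]
      refine Finset.sum_congr rfl fun y _ => ?_
      simp only [kerErase_update_left, Function.update_self, sg_true, sg_false, dd]
      ring
    rw [l1, ← l3, ← Finset.sum_congr rfl fun x _ => l2 x, ← Finset.mul_sum]
    ring
  simp only [hi, ← Finset.mul_sum]
  rw [mul_div_cancel_left₀ _ (by norm_num : (4 : ℝ) ≠ 0)]
  simp only [Finset.mul_sum]
  rw [Finset.sum_comm]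
  exact Finset.sum_congr rfl fun x _ => Finset.sum_comm

/-! ### Correlation and influences through the noise form -/

lemma bil_one (n : ℕ) (f g : (Fin n → Bool) → ℝ) :
    bil n 1 f g = 2 ^ n * ∑ x, f x * g x := by
  unfold bil
  simp only [ker_one]
  rw [Finset.mul_sum]
  refine Finset.sum_congr rfl fun x _ => ?_
  simp; ring

lemma bil_zero (n : ℕ) (f g : (Fin n → Bool) → ℝ) :
    bil n 0 f g = (∑ x, f x) * ∑ x, g x := by
  unfold bil
  simp only [ker_zero, mul_one, Finset.sum_mul_sum]

lemma cubeCor_eq (n : ℕ) (f g : (Fin n → Bool) → ℝ) :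
    cubeCor n f g = (bil n 1 f g - bil n 0 f g) / 4 ^ n := by
  have e : (4 : ℝ) ^ n = 2 ^ n * 2 ^ n := by rw [← mul_pow]; norm_num
  rw [bil_one, bil_zero, e]
  unfold cubeCor cubeE
  field_simp

lemma infl_eq (n : ℕ) (f : (Fin n → Bool) → ℝ) (hf : CubeIncreasing n f) (i : Fin n) :
    infl n f i = 2 * (∑ x, dd n i f x) / 2 ^ n := by
  unfold infl cubeE
  simp only [fun x => abs_of_nonneg (hf i x)]
  ring

/-- Level-one Parseval: the squared mean derivatives of a Boolean function sum to at most one. -/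
lemma sum_mean_sq_le (n : ℕ) (f : (Fin n → Bool) → ℝ) (hf : BoolValued n f) :
    ∑ i, ((∑ x, dd n i f x) / 2 ^ n) ^ 2 ≤ 1 := by
  have := sum_smooth_dd_sq_le n le_rfl one_pos f hf (fun _ => true)
  simpa [smooth, ker_zero] using this

lemma sum_sum_smooth_sq_le (n : ℕ) (f : (Fin n → Bool) → ℝ) (hf : BoolValued n f) :
    ∑ i, ∑ x, smooth n (1 / 2) (dd n i f) x ^ 2 ≤ 2 ^ n * (4 / 3) := by
  rw [Finset.sum_comm]
  have h : ∀ x, ∑ i, smooth n (1 / 2) (dd n i f) x ^ 2 ≤ 4 / 3 := fun x => by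
    have := sum_smooth_dd_sq_le n (by norm_num : (0 : ℝ) ≤ 1 / 2) (by norm_num) f hf x
    linarith
  refine (Finset.sum_le_sum fun x _ => h x).trans (le_of_eq ?_)
  simp

/-- Near `ρ = 0` the derivative of the noise form keeps at least half of its value at zero. -/
lemma sum_bil_ge (n : ℕ) (f g : (Fin n → Bool) → ℝ) (hfb : BoolValued n f) (hgb : BoolValued n g)
    (hf : CubeIncreasing n f) (hg : CubeIncreasing n g) (ha : Antipodal n g)
    (w : ℝ) (hw : ∑ i, (∑ x, dd n i f x) * (∑ x, dd n i g x) = 4 ^ n * w) (hw0 : 0 < w)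
    {ρ : ℝ} (h0 : 0 ≤ ρ) (h1 : ρ ≤ 1 / 16)
    (hρ : ρ ^ 2 * Real.log (Real.exp 1 / 2 / w) ≤ 1 / 2500) :
    4 ^ n * w / 2 ≤ ∑ i, bil n ρ (dd n i f) (dd n i g) := by
  have he := Real.exp_one_gt_d9
  have hep : 0 < Real.exp 1 := Real.exp_pos 1
  set r : ℝ := w / (Real.exp 1 / 2) with hr
  have hr0 : 0 < r := by positivity
  have hlog : Real.log (1 / r) = Real.log (Real.exp 1 / 2 / w) := by
    congr 1; rw [hr]; field_simp
  have hrw : r * (4 / 3) ≤ w := by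
    rw [hr, div_mul_eq_mul_div, div_le_iff₀ (by positivity)]
    nlinarith
  have key := Finset.sum_le_sum fun (i : Fin n) (_ : i ∈ Finset.univ) =>
    coord_bound n h0 h1 hr0 (dd n i f) (dd n i g) (hf i) (hg i) (dd_even n g ha i)
  refine le_trans ?_ key
  rw [Finset.sum_sub_distrib, hw, ← Finset.mul_sum, Finset.sum_add_distrib, ← Finset.mul_sum,
    ← Finset.sum_mul, ← Finset.mul_sum, hw, Finset.sum_add_distrib, hlog]
  set Λ := Real.log (Real.exp 1 / 2 / w)
  have e4 : (4 : ℝ) ^ n = 2 ^ n * 2 ^ n := by rw [← mul_pow]; norm_num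
  have s1 := add_le_add (sum_sum_smooth_sq_le n f hfb) (sum_sum_smooth_sq_le n g hgb)
  have s2 := mul_le_mul_of_nonneg_left s1 (by positivity : 0 ≤ 2 ^ n * r)
  have s3 : 2 ^ n * r * (2 ^ n * (4 / 3) + 2 ^ n * (4 / 3)) ≤ 2 * (4 ^ n * w) := by
    have : 2 ^ n * r * (2 ^ n * (4 / 3) + 2 ^ n * (4 / 3)) = 2 * (4 ^ n * (r * (4 / 3))) := by
      rw [e4]; ring
    rw [this]
    have h4 : (0 : ℝ) < 4 ^ n := by positivity
    have := mul_le_mul_of_nonneg_left hrw h4.le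
    linarith
  have s4 := mul_le_mul_of_nonneg_left (s2.trans s3) (by positivity : 0 ≤ 624 * ρ ^ 2)
  have hW : 0 < 4 ^ n * w := by positivity
  have s5 := mul_le_mul_of_nonneg_left hρ hW.le
  nlinarith

/-- **Theorem 1.2.** If `f, g` are increasing Boolean functions and `g` is antipodal, then
`Cor(f,g) ≥ c ⬝ (∑ᵢ Iᵢ(f) Iᵢ(g)) / √(log(2e / ∑ᵢ Iᵢ(f) Iᵢ(g)))`. -/
theorem correlation_antipodal :
    ∃ c > (0 : ℝ), ∀ (n : ℕ) (f g : (Fin n → Bool) → ℝ),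
      BoolValued n f → BoolValued n g →
      CubeIncreasing n f → CubeIncreasing n g →
      Antipodal n g →
      cubeCor n f g ≥
        c * (∑ i, infl n f i * infl n g i) /
          Real.sqrt (Real.log (2 * Real.exp 1 / ∑ i, infl n f i * infl n g i)) := by
  refine ⟨1 / 1600, by norm_num, ?_⟩
  intro n f g hfb hgb hf hg ha
  have h4 : (0 : ℝ) < 4 ^ n := by positivity
  have e4 : (4 : ℝ) ^ n = 2 ^ n * 2 ^ n := by rw [← mul_pow]; norm_num
  set w : ℝ := (∑ i, (∑ x, dd n i f x) * (∑ x, dd n i g x)) / 4 ^ n with hwdef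
  have hw : ∑ i, (∑ x, dd n i f x) * (∑ x, dd n i g x) = 4 ^ n * w := by
    rw [hwdef]; field_simp
  have hW : ∑ i, infl n f i * infl n g i = 4 * w := by
    rw [hwdef, Finset.sum_div, Finset.mul_sum]
    refine Finset.sum_congr rfl fun i _ => ?_
    rw [infl_eq n f hf, infl_eq n g hg, e4]
    field_simp
    ring
  have hw0 : 0 ≤ w := div_nonneg (Finset.sum_nonneg fun i _ => mul_nonneg
    (Finset.sum_nonneg fun x _ => hf i x) (Finset.sum_nonneg fun x _ => hg i x)) h4.le
  have hw1 : w ≤ 1 := by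
    have a1 := sum_mean_sq_le n f hfb
    have a2 := sum_mean_sq_le n g hgb
    have : w ≤ (∑ i, ((∑ x, dd n i f x) / 2 ^ n) ^ 2
        + ∑ i, ((∑ x, dd n i g x) / 2 ^ n) ^ 2) / 2 := by
      rw [hwdef, Finset.sum_div, ← Finset.sum_add_distrib, Finset.sum_div]
      refine Finset.sum_le_sum fun i _ => ?_
      have h := two_mul_le_add_sq ((∑ x, dd n i f x) / 2 ^ n) ((∑ x, dd n i g x) / 2 ^ n)
      have e : (∑ x, dd n i f x) * (∑ x, dd n i g x) / 4 ^ n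
          = ((∑ x, dd n i f x) / 2 ^ n) * ((∑ x, dd n i g x) / 2 ^ n) := by
        rw [e4]; field_simp
      rw [e]; linarith
    linarith
  -- the noise form is monotone on `[0, 1]`, and its slope near `0` is at least `4 ^ n * w / 8`
  have hmvt : ∀ s t C : ℝ, 0 ≤ s → s ≤ t → t ≤ 1 →
      (∀ ρ, s < ρ → ρ < t → C ≤ ∑ i, bil n ρ (dd n i f) (dd n i g)) →
      C / 4 * (t - s) ≤ bil n t f g - bil n s f g := by
    intro s t C hs hst ht hC
    refine (convex_Icc s t).mul_sub_le_image_sub_of_le_deriv (f := fun ρ => bil n ρ f g)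
      (fun ρ _ => (hasDerivAt_bil n f g ρ).continuousAt.continuousWithinAt)
      (fun ρ _ => (hasDerivAt_bil n f g ρ).differentiableAt.differentiableWithinAt)
      (fun ρ hρ => ?_) s (Set.left_mem_Icc.mpr hst) t (Set.right_mem_Icc.mpr hst) hst
    rw [interior_Icc] at hρ
    rw [(hasDerivAt_bil n f g ρ).deriv]
    have := hC ρ hρ.1 hρ.2
    linarith
  have hpos : ∀ ρ, 0 ≤ ρ → ρ ≤ 1 → 0 ≤ ∑ i, bil n ρ (dd n i f) (dd n i g) := fun ρ h h' =>
    Finset.sum_nonneg fun i _ => bil_nonneg n h h' _ _ (hf i) (hg i)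
  rw [hW, cubeCor_eq, ge_iff_le, le_div_iff₀ h4]
  rcases hw0.eq_or_lt with hz | hwpos
  · have := hmvt 0 1 0 le_rfl zero_le_one le_rfl (fun ρ h h' => hpos ρ h.le h'.le)
    rw [← hz]
    simp at this ⊢
    linarith
  have hep : 0 < Real.exp 1 := Real.exp_pos 1
  have harg : 2 * Real.exp 1 / (4 * w) = Real.exp 1 / 2 / w := by field_simp; norm_num
  rw [harg]
  set Λ := Real.log (Real.exp 1 / 2 / w) with hΛ
  have hΛ0 : 1 / 4 ≤ Λ := by
    have h2 := Real.log_two_lt_d9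
    have : Real.log (Real.exp 1 / 2) ≤ Λ := by
      refine Real.log_le_log (by positivity) ?_
      rw [le_div_iff₀ hwpos]
      nlinarith
    rw [Real.log_div hep.ne' (by norm_num), Real.log_exp] at this
    linarith
  have hsq : √Λ ^ 2 = Λ := Real.sq_sqrt (by linarith)
  have hs : 1 / 2 ≤ √Λ := Real.le_sqrt_of_sq_le (by norm_num; linarith)
  have hs0 : 0 < √Λ := by linarith
  set ρ₀ : ℝ := 1 / (50 * √Λ) with hρ₀
  have hρ0 : 0 < ρ₀ := by positivity
  have hρ16 : ρ₀ ≤ 1 / 16 := by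
    rw [hρ₀]
    exact one_div_le_one_div_of_le (by norm_num) (by linarith)
  have hρsq : ρ₀ ^ 2 * Λ = 1 / 2500 := by
    rw [hρ₀, div_pow, mul_pow, hsq]; field_simp; norm_num
  have step1 := hmvt 0 ρ₀ (4 ^ n * w / 2) le_rfl hρ0.le (by linarith) (fun ρ h h' => by
    refine sum_bil_ge n f g hfb hgb hf hg ha w hw hwpos h.le (by linarith) ?_
    rw [← hρsq]
    exact mul_le_mul_of_nonneg_right (pow_le_pow_left₀ h.le h'.le 2) (by linarith))
  have step2 := hmvt ρ₀ 1 0 hρ0.le (by linarith) le_rfl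
    (fun ρ h h' => hpos ρ (by linarith) h'.le)
  have e : 1 / 1600 * (4 * w) / √Λ * 4 ^ n = 4 ^ n * w / 2 / 4 * (ρ₀ - 0) := by
    rw [hρ₀]; field_simp; norm_num
  rw [e]
  linarith

end
end

section
/- There exists a universal constant c > 0 such that for every n and every pair of increasing measurable functions f, g : R^n → [0,1], one has Cor(f,g) ≥ c · min( M_1(f,g) / √(log(e / M_1(f,g))), M_1(f,g)^2 / |M_2(f,g)| ), where M_1(f,g) = ⟨M_1(f), M_1(g)⟩ and M_2(f,g) = ⟨M_2(f), M_2(g)⟩_{HS} (the Hilbert–Schmidt inner product; the second term of the minimum being interpreted as +∞ when M_2(f,g) = 0). -/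
/-!
Let `P_ρ` be the Ornstein–Uhlenbeck operator with correlation `√ρ` (`pP`), put `F = P_{1/2} f`,
`G = P_{1/2} g`, consider `Φ(ρ) = ∫ P_ρ F P_ρ G dγ` (`qq`) and let `Φ₁, Φ₂, Φ₃` be its successive
derivatives. Gaussian integration by parts gives `Φ₁ = ∑ᵢ ∫ P_ρ ∂ᵢF P_ρ ∂ᵢG dγ`, and the formula
iterates (`qq_hasDerivAt`). For increasing `f, g` one has `Φ₁ ≥ 0`, so `Cor(f,g) ≥ Φ(r) - Φ(0)` for
every `r ≤ 1`, while `Φ₁(0) = M₁(f,g) / 2` and `Φ₂(0) = M₂(f,g) / 4`.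

The heart of the matter is a lower bound on `Φ₃` independent of the dimension
(`third_deriv_bound`):
`Φ₃(ρ) ≥ -64 (W₀ + log (1 / W₀) Φ₁(ρ))` for `ρ ≤ 1/2` and any `W₀ ∈ (0, 1]`.
For a fixed outer variable, the integrand of `Φ₃` is, up to scaling, a sum over `i` of
Hilbert–Schmidt products of the second-moment matrices of the nonnegative functions `∂ᵢF`, `∂ᵢG`
along a slice (`gM2_slice`). The product of two such matrices is bounded below by entropies, by
applying the entropy variational principle to quadratic test functions (`moment_entropy`). These
entropies are bounded by means and second moments with a logarithmic loss (`ent_bound`), and the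
second moments add up over `i` to at most `1` because `|∇F| ≤ 1` and `|∇G| ≤ 1`, which is Bessel's
inequality for the coordinate functions applied to the slices of `f` and `g` (`smoothed_gradient`).

Taylor's formula (`taylor_bound`) turns this into
`r M₁ / 2 - r² |M₂| / 8 - 32 W₀ r³ ≤ (1 + 32 r² log (1 / W₀)) Cor(f,g)` for smooth `f, g`
(`smooth_main`), and mollification extends it to measurable ones (`general_main`). The choice
`W₀ = M₁`, `r = min (1 / (16 √(log (e / M₁)))) (M₁ / |M₂|)` finishes the proof (`optimise`), with
`c = 1/128`.
-/

open MeasureTheory ProbabilityTheory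

noncomputable section

/-- The standard Gaussian measure on `ℝⁿ`. -/
def stdGaussian (n : ℕ) : Measure (Fin n → ℝ) := Measure.pi fun _ => gaussianReal 0 1

/-- `f` is increasing (monotone): nondecreasing in each coordinate when the other
coordinates are kept fixed. -/
def CoordMonotone (n : ℕ) (f : (Fin n → ℝ) → ℝ) : Prop :=
  ∀ (x : Fin n → ℝ) (i : Fin n) (s t : ℝ), s ≤ t →
    f (Function.update x i s) ≤ f (Function.update x i t)

/-- `M₁(f) = ∫ x f(x) dγ(x) ∈ ℝⁿ` (given here coordinatewise). -/
def gM1 (n : ℕ) (f : (Fin n → ℝ) → ℝ) (i : Fin n) : ℝ :=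
  ∫ x, x i * f x ∂stdGaussian n

/-- `M₂(f) = ∫ (x xᵀ - Iₙ) f(x) dγ(x) ∈ ℝⁿˣⁿ` (given here entrywise). -/
def gM2 (n : ℕ) (f : (Fin n → ℝ) → ℝ) (i j : Fin n) : ℝ :=
  ∫ x, (x i * x j - if i = j then (1 : ℝ) else 0) * f x ∂stdGaussian n

/-- `Cor(f,g) = ∫ fg dγ - (∫ f dγ)(∫ g dγ)`. -/
def gCor (n : ℕ) (f g : (Fin n → ℝ) → ℝ) : ℝ :=
  (∫ x, f x * g x ∂stdGaussian n) -
    (∫ x, f x ∂stdGaussian n) * ∫ x, g x ∂stdGaussian n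

/-- `M₁(f,g) = ⟨M₁(f), M₁(g)⟩`. -/
def gM1pair (n : ℕ) (f g : (Fin n → ℝ) → ℝ) : ℝ := ∑ i, gM1 n f i * gM1 n g i

/-- `M₂(f,g) = ⟨M₂(f), M₂(g)⟩_{HS}`. -/
def gM2pair (n : ℕ) (f g : (Fin n → ℝ) → ℝ) : ℝ := ∑ i, ∑ j, gM2 n f i j * gM2 n g i j

/-! ### The Gaussian measure: density, moments, integration by parts -/

/-- Shorthand for the standard Gaussian measure of the statement. -/
abbrev gG (n : ℕ) : Measure (Fin n → ℝ) := _root_.stdGaussian n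

instance gG_prob (n : ℕ) : IsProbabilityMeasure (gG n) := by
  unfold gG _root_.stdGaussian; infer_instance

/-- The density of the standard Gaussian measure with respect to Lebesgue measure. -/
def gDens (n : ℕ) (x : Fin n → ℝ) : ℝ := ∏ i, gaussianPDFReal 0 1 (x i)

lemma gDens_nonneg (n : ℕ) (x : Fin n → ℝ) : 0 ≤ gDens n x :=
  Finset.prod_nonneg fun _ _ => gaussianPDFReal_nonneg _ _ _

lemma measurable_gDens (n : ℕ) : Measurable (gDens n) := by
  unfold gDens
  exact Finset.measurable_prod _ fun i _ =>
    (measurable_gaussianPDFReal 0 1).comp (measurable_pi_apply i)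

lemma gG_eq (n : ℕ) :
    gG n = (volume : Measure (Fin n → ℝ)).withDensity (fun x => ENNReal.ofReal (gDens n x)) := by
  unfold gG _root_.stdGaussian
  refine Measure.pi_eq fun s hs => ?_
  rw [withDensity_apply _ (MeasurableSet.univ_pi hs),
    ← lintegral_indicator (MeasurableSet.univ_pi hs)]
  have h1 : ∀ x : Fin n → ℝ, (Set.univ.pi s).indicator (fun x => ENNReal.ofReal (gDens n x)) x
      = ENNReal.ofReal (∏ i, (s i).indicator (gaussianPDFReal 0 1) (x i)) := by
    intro x
    by_cases hx : x ∈ Set.univ.pi s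
    · rw [Set.indicator_of_mem hx]
      congr 1
      refine Finset.prod_congr rfl fun i _ => ?_
      rw [Set.indicator_of_mem (hx i trivial)]
    · rw [Set.indicator_of_notMem hx]
      simp only [Set.mem_pi, not_forall] at hx
      obtain ⟨i, _, hi⟩ := hx
      rw [Finset.prod_eq_zero (Finset.mem_univ i) (Set.indicator_of_notMem hi _)]
      simp
  simp_rw [h1]
  have hinteg : ∀ i, Integrable ((s i).indicator (gaussianPDFReal 0 1)) volume := fun i =>
    (integrable_gaussianPDFReal 0 1).indicator (hs i)
  rw [← ofReal_integral_eq_lintegral_ofReal (by rw [volume_pi]; exact Integrable.fintype_prod hinteg)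
    (Filter.Eventually.of_forall fun x => Finset.prod_nonneg fun i _ =>
      Set.indicator_nonneg (fun _ _ => gaussianPDFReal_nonneg _ _ _) _)]
  rw [integral_fintype_prod_volume_eq_prod, ENNReal.ofReal_prod_of_nonneg]
  · refine Finset.prod_congr rfl fun i _ => ?_
    rw [gaussianReal_apply_eq_integral 0 (by norm_num) (s i), integral_indicator (hs i)]
  · exact fun i _ => integral_nonneg fun x =>
      Set.indicator_nonneg (fun _ _ => gaussianPDFReal_nonneg _ _ _) _

lemma gG_ac (n : ℕ) : gG n ≪ (volume : Measure (Fin n → ℝ)) := by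
  rw [gG_eq]; exact withDensity_absolutelyContinuous _ _

lemma gG_integral (n : ℕ) (F : (Fin n → ℝ) → ℝ) :
    ∫ x, F x ∂gG n = ∫ x, gDens n x * F x := by
  rw [gG_eq, integral_withDensity_eq_integral_toReal_smul
    (measurable_gDens n).ennreal_ofReal (by simp)]
  simp [ENNReal.toReal_ofReal (gDens_nonneg n _)]

lemma gG_integrable (n : ℕ) (F : (Fin n → ℝ) → ℝ) :
    Integrable F (gG n) ↔ Integrable (fun x => gDens n x * F x) := by
  rw [gG_eq, integrable_withDensity_iff_integrable_smul' (measurable_gDens n).ennreal_ofReal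
    (by simp)]
  simp [ENNReal.toReal_ofReal (gDens_nonneg n _)]

lemma gDens_lineDeriv (n : ℕ) (x : Fin n → ℝ) (i : Fin n) :
    HasLineDerivAt ℝ (gDens n) (-(x i) * gDens n x) x (Pi.single i 1) := by
  have h0 : ∀ t : ℝ, gDens n (x + t • Pi.single i 1)
      = gDens n x * Real.exp (-(t * x i) - t ^ 2 / 2) := by
    intro t
    unfold gDens
    rw [← Finset.mul_prod_erase _ _ (Finset.mem_univ i),
      ← Finset.mul_prod_erase (a := i) _ (fun j => gaussianPDFReal 0 1 (x j)) (Finset.mem_univ i)]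
    have h2 : ∏ j ∈ Finset.univ.erase i, gaussianPDFReal 0 1 ((x + t • (Pi.single i 1 : Fin n → ℝ)) j)
        = ∏ j ∈ Finset.univ.erase i, gaussianPDFReal 0 1 (x j) := by
      refine Finset.prod_congr rfl fun j hj => ?_
      simp [(Finset.mem_erase.1 hj).1]
    rw [h2]
    simp only [gaussianPDFReal, Pi.add_apply, Pi.smul_apply, Pi.single_eq_same, smul_eq_mul,
      mul_one, sub_zero, NNReal.coe_one]
    have : Real.exp (-(x i + t) ^ 2 / 2)
      = Real.exp (-(x i) ^ 2 / 2) * Real.exp (-(t * x i) - t ^ 2 / 2) := by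
      rw [← Real.exp_add]; congr 1; ring
    rw [this]; ring
  unfold HasLineDerivAt
  simp_rw [h0]
  have h3 : HasDerivAt (fun t : ℝ => -(t * x i) - t ^ 2 / 2) (-(1 * x i) - (2 * 0 ^ 1 * 1) / 2) 0 := by
    exact ((hasDerivAt_id' (0 : ℝ)).mul_const (x i)).fun_neg.fun_sub
      (((hasDerivAt_id' (0 : ℝ)).fun_pow 2).div_const 2)
  have := (h3.exp).const_mul (gDens n x)
  refine this.congr_deriv ?_
  norm_num
  ring

/-- Gaussian integration by parts in the `i`-th coordinate. -/
lemma gG_ibp {n : ℕ} (i : Fin n) {F F' : (Fin n → ℝ) → ℝ}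
    (hd : ∀ x, HasLineDerivAt ℝ F (F' x) x (Pi.single i 1))
    (hF : Integrable F (gG n)) (hF' : Integrable F' (gG n))
    (hx : Integrable (fun x => x i * F x) (gG n)) :
    ∫ x, x i * F x ∂gG n = ∫ x, F' x ∂gG n := by
  rw [gG_integral, gG_integral]
  rw [gG_integrable] at hF hF' hx
  have h := integral_bilinear_hasLineDerivAt_right_eq_neg_left_of_integrable
    (μ := (volume : Measure (Fin n → ℝ))) (f := gDens n)
    (f' := fun x => -(x i) * gDens n x) (g := F) (g' := F') (v := Pi.single i 1)
    (B := ContinuousLinearMap.mul ℝ ℝ)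
    (by
      refine hx.neg.congr (Filter.Eventually.of_forall fun x => ?_)
      simp; ring) (by simpa using hF') (by simpa using hF)
    (fun x _ => gDens_lineDeriv n x i) (fun x _ => hd x)
  simp only [ContinuousLinearMap.mul_apply'] at h
  rw [h, ← integral_neg]
  refine integral_congr_ae (Filter.Eventually.of_forall fun x => ?_)
  simp; ring

lemma gG_map_eval {n : ℕ} (i : Fin n) :
    MeasurePreserving (fun x : Fin n → ℝ => x i) (gG n) (gaussianReal 0 1) :=
  measurePreserving_eval (fun _ : Fin n => gaussianReal 0 1) i

lemma memLp_coord {n : ℕ} (i : Fin n) (p : NNReal) :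
    MemLp (fun x : Fin n → ℝ => x i) p (gG n) :=
  (memLp_id_gaussianReal (μ := 0) (v := 1) p).comp_measurePreserving (gG_map_eval i)

lemma integrable_coord {n : ℕ} (i : Fin n) : Integrable (fun x : Fin n → ℝ => x i) (gG n) :=
  memLp_one_iff_integrable.1 (by simpa using memLp_coord i 1)

lemma integrable_coord_mul {n : ℕ} (i j : Fin n) :
    Integrable (fun x : Fin n → ℝ => x i * x j) (gG n) :=
  MemLp.integrable_mul (p := 2) (q := 2) (by simpa using memLp_coord i 2)
    (by simpa using memLp_coord j 2)

lemma Integrable.mul_bddR {n : ℕ} {w F : (Fin n → ℝ) → ℝ} {C : ℝ}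
    (hw : Integrable w (gG n)) (hm : AEStronglyMeasurable F (gG n)) (hb : ∀ x, |F x| ≤ C) :
    Integrable (fun x => w x * F x) (gG n) :=
  hw.mul_bdd (c := C) hm (Filter.Eventually.of_forall fun x => by simpa using hb x)

lemma integrable_bddR {n : ℕ} {F : (Fin n → ℝ) → ℝ} {C : ℝ}
    (hm : AEStronglyMeasurable F (gG n)) (hb : ∀ x, |F x| ≤ C) : Integrable F (gG n) := by
  simpa using Integrable.mul_bddR (integrable_const (1 : ℝ)) hm hb

lemma hasLineDerivAt_coord {n : ℕ} (i j : Fin n) (x : Fin n → ℝ) :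
    HasLineDerivAt ℝ (fun x : Fin n → ℝ => x j) (if i = j then 1 else 0) x (Pi.single i 1) := by
  have h := ((ContinuousLinearMap.proj (R := ℝ) (φ := fun _ : Fin n => ℝ) j).hasFDerivAt
    (x := x)).hasLineDerivAt (Pi.single i 1)
  have e : (ContinuousLinearMap.proj (R := ℝ) (φ := fun _ : Fin n => ℝ) j) (Pi.single i 1)
      = if i = j then 1 else 0 := by
    simp [Pi.single_apply, eq_comm]
  rw [e] at h
  exact h

lemma integral_coord {n : ℕ} (i : Fin n) : ∫ x : Fin n → ℝ, x i ∂gG n = 0 := by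
  have h := gG_ibp (n := n) i (F := fun _ => 1) (F' := fun _ => 0)
    (fun x => by simpa using (hasFDerivAt_const (1 : ℝ) x).hasLineDerivAt (Pi.single i 1))
    (integrable_const _) (integrable_const _) (by simpa using integrable_coord i)
  simpa using h

lemma integral_coord_mul {n : ℕ} (i j : Fin n) :
    ∫ x : Fin n → ℝ, x i * x j ∂gG n = if i = j then 1 else 0 := by
  rw [gG_ibp i (hasLineDerivAt_coord i j) (integrable_coord j) (integrable_const _)
    (integrable_coord_mul i j)]
  simp

/-! ### Entropy and second moments -/

/-- The variational (Donsker–Varadhan) bound: the relative entropy of the density `u` controls the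
integral of `u` against any exponentially integrable test function `φ`. -/
lemma entropy_variational {n : ℕ} {u φ : (Fin n → ℝ) → ℝ} (h0 : ∀ x, 0 ≤ u x)
    (hu : Integrable u (gG n)) (hul : Integrable (fun x => u x * Real.log (u x)) (gG n))
    (huφ : Integrable (fun x => u x * φ x) (gG n))
    (hφ : Integrable (fun x => Real.exp (φ x)) (gG n)) (ha : 0 < ∫ x, u x ∂gG n) :
    ∫ x, u x * φ x ∂gG n ≤ (∫ x, u x * Real.log (u x) ∂gG n)
      - (∫ x, u x ∂gG n) * Real.log (∫ x, u x ∂gG n)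
      + (∫ x, u x ∂gG n) * Real.log (∫ x, Real.exp (φ x) ∂gG n) := by
  set a := ∫ x, u x ∂gG n with hadef
  set Z := ∫ x, Real.exp (φ x) ∂gG n with hZ
  have hZpos : 0 < Z := integral_exp_pos hφ
  have young : ∀ w t : ℝ, 0 ≤ w → w * t ≤ w * Real.log w - w + Real.exp t := by
    intro w t hw
    rcases hw.eq_or_lt with h | h
    · rw [← h]; simpa using (Real.exp_pos t).le
    · have h1 := Real.add_one_le_exp (t - Real.log w)
      rw [Real.exp_sub, Real.exp_log h, le_div_iff₀ h] at h1
      nlinarith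
  -- Young's inequality at `t = φ - log Z + log a`, the exponent that makes `∫ e ^ t = ∫ u`.
  have hpt : ∀ x, u x * φ x ≤ u x * Real.log (u x) - u x
      + (a / Z) * Real.exp (φ x) + u x * (Real.log Z - Real.log a) := by
    intro x
    have h := young (u x) (φ x - Real.log Z + Real.log a) (h0 x)
    rw [Real.exp_add, Real.exp_sub, Real.exp_log hZpos, Real.exp_log ha] at h
    have e : Real.exp (φ x) / Z * a = (a / Z) * Real.exp (φ x) := by ring
    rw [e] at h
    nlinarith
  have hinteg : ∫ x, u x * φ x ∂gG n ≤ ∫ x, (u x * Real.log (u x) - u x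
      + (a / Z) * Real.exp (φ x) + u x * (Real.log Z - Real.log a)) ∂gG n :=
    integral_mono huφ (((hul.sub hu).add (hφ.const_mul _)).add (hu.mul_const _)) hpt
  have i1 : Integrable (fun x => u x * Real.log (u x) - u x) (gG n) := hul.sub hu
  have i2 : Integrable (fun x => u x * Real.log (u x) - u x + (a / Z) * Real.exp (φ x)) (gG n) :=
    i1.add (hφ.const_mul _)
  rw [integral_add i2 (hu.mul_const _), integral_add i1 (hφ.const_mul _), integral_sub hul hu,
    integral_const_mul, integral_mul_const, ← hadef, ← hZ, div_mul_cancel₀ _ hZpos.ne'] at hinteg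
  linarith

lemma gauss_exp_one {τ : ℝ} (h : τ < 1) :
    Integrable (fun t : ℝ => Real.exp (τ * t ^ 2 / 2)) (gaussianReal 0 1) ∧
    ∫ t, Real.exp (τ * t ^ 2 / 2) ∂gaussianReal 0 1 = (√(1 - τ))⁻¹ := by
  have hb : 0 < (1 - τ) / 2 := by linarith
  have e : ∀ t : ℝ, gaussianPDFReal 0 1 t * Real.exp (τ * t ^ 2 / 2)
      = (√(2 * Real.pi))⁻¹ * Real.exp (-((1 - τ) / 2) * t ^ 2) := by
    intro t
    simp only [gaussianPDFReal, sub_zero, NNReal.coe_one, mul_one]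
    rw [mul_assoc, ← Real.exp_add]
    congr 2; ring
  constructor
  · rw [gaussianReal_of_var_ne_zero _ one_ne_zero,
      integrable_withDensity_iff_integrable_smul' (measurable_gaussianPDF _ _)
        (Filter.Eventually.of_forall fun _ => gaussianPDF_lt_top)]
    simp only [toReal_gaussianPDF, smul_eq_mul, e]
    exact (integrable_exp_neg_mul_sq hb).const_mul _
  · rw [integral_gaussianReal_eq_integral_smul one_ne_zero]
    simp only [smul_eq_mul, e]
    rw [integral_const_mul, integral_gaussian]
    have h2 : Real.pi / ((1 - τ) / 2) = (2 * Real.pi) / (1 - τ) := by field_simp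
    have hpi : √(2 * Real.pi) ≠ 0 := by positivity
    rw [h2, Real.sqrt_div (by positivity), div_eq_mul_inv, ← mul_assoc, inv_mul_cancel₀ hpi, one_mul]

/-- Coordinates of a point in an orthonormal basis. -/
def lcoord {n : ℕ} (e : OrthonormalBasis (Fin n) ℝ (EuclideanSpace ℝ (Fin n))) (k : Fin n)
    (x : Fin n → ℝ) : ℝ := ∑ j, e k j * x j

lemma continuous_lcoord {n : ℕ} (e : OrthonormalBasis (Fin n) ℝ (EuclideanSpace ℝ (Fin n)))
    (k : Fin n) : Continuous (lcoord e k) := by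
  unfold lcoord; fun_prop

/-- Rotation invariance of the Gaussian measure. -/
lemma gG_rotate {n : ℕ} (e : OrthonormalBasis (Fin n) ℝ (EuclideanSpace ℝ (Fin n))) :
    MeasurePreserving (fun x k => lcoord e k x) (gG n) (gG n) := by
  refine ⟨measurable_pi_lambda _ fun k => (continuous_lcoord e k).measurable, ?_⟩
  have h1 : (fun (x : Fin n → ℝ) k => lcoord e k x)
      = (fun y : EuclideanSpace ℝ (Fin n) => (WithLp.ofLp y : Fin n → ℝ)) ∘ e.repr ∘
        (WithLp.toLp 2) := by
    funext x k
    simp [lcoord, OrthonormalBasis.repr_apply_apply, PiLp.inner_apply, mul_comm]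
  have hm := map_pi_eq_stdGaussian (ι := Fin n)
  have h2 : (gG n).map (WithLp.toLp 2) = ProbabilityTheory.stdGaussian (EuclideanSpace ℝ (Fin n)) :=
    hm
  have hof : Measurable (fun y : EuclideanSpace ℝ (Fin n) => (WithLp.ofLp y : Fin n → ℝ)) := by
    fun_prop
  have hto : Measurable (fun x : Fin n → ℝ => (WithLp.toLp 2 x : EuclideanSpace ℝ (Fin n))) := by
    fun_prop
  rw [h1, ← Measure.map_map hof (by fun_prop), ← Measure.map_map (by fun_prop) hto, h2,
    ProbabilityTheory.stdGaussian_map, ← h2, Measure.map_map hof hto]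
  exact Measure.map_id

/-- Laplace transform of a quadratic form that is diagonal in the orthonormal basis `e`. -/
lemma gauss_quad {n : ℕ} (e : OrthonormalBasis (Fin n) ℝ (EuclideanSpace ℝ (Fin n)))
    {τ : Fin n → ℝ} (hτ : ∀ k, τ k < 1) (c : ℝ) :
    Integrable (fun x => Real.exp (c + ∑ k, τ k * lcoord e k x ^ 2 / 2)) (gG n) ∧
    Real.log (∫ x, Real.exp (c + ∑ k, τ k * lcoord e k x ^ 2 / 2) ∂gG n)
      = c - (∑ k, Real.log (1 - τ k)) / 2 := by
  have hprod : ∀ y : Fin n → ℝ, Real.exp (c + ∑ k, τ k * y k ^ 2 / 2)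
      = Real.exp c * ∏ k, Real.exp (τ k * y k ^ 2 / 2) := fun y => by
    rw [Real.exp_add, Real.exp_sum]
  have hI : Integrable (fun y : Fin n → ℝ => ∏ k, Real.exp (τ k * y k ^ 2 / 2)) (gG n) :=
    Integrable.fintype_prod (fun k => (gauss_exp_one (hτ k)).1)
  have hI2 : ∫ y : Fin n → ℝ, ∏ k, Real.exp (τ k * y k ^ 2 / 2) ∂gG n
      = ∏ k, (√(1 - τ k))⁻¹ := by
    have := integral_fintype_prod_eq_prod (𝕜 := ℝ) (μ := fun _ : Fin n => gaussianReal 0 1)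
      (fun k (t : ℝ) => Real.exp (τ k * t ^ 2 / 2))
    refine this.trans (Finset.prod_congr rfl fun k _ => (gauss_exp_one (hτ k)).2)
  have hcont : Continuous (fun y : Fin n → ℝ => Real.exp (c + ∑ k, τ k * y k ^ 2 / 2)) := by
    fun_prop
  have hrot := gG_rotate e
  constructor
  · have : Integrable (fun y : Fin n → ℝ => Real.exp (c + ∑ k, τ k * y k ^ 2 / 2)) (gG n) := by
      simp_rw [hprod]; exact hI.const_mul _
    exact hrot.integrable_comp_of_integrable this
  · have h1 : ∫ x, Real.exp (c + ∑ k, τ k * lcoord e k x ^ 2 / 2) ∂gG n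
        = ∫ y : Fin n → ℝ, Real.exp (c + ∑ k, τ k * y k ^ 2 / 2) ∂gG n := by
      conv_rhs => rw [← hrot.map_eq]
      rw [integral_map hrot.measurable.aemeasurable hcont.aestronglyMeasurable]
    rw [h1]
    simp_rw [hprod]
    have hpos : ∀ k, 0 < √(1 - τ k) := fun k => Real.sqrt_pos.2 (by linarith [hτ k])
    rw [integral_const_mul, hI2, Real.log_mul (Real.exp_ne_zero _)
      (Finset.prod_ne_zero_iff.2 fun k _ => (inv_pos.2 (hpos k)).ne'), Real.log_exp,
      Real.log_prod (fun k _ => (inv_pos.2 (hpos k)).ne')]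
    simp_rw [Real.log_inv]
    rw [Finset.sum_neg_distrib, Finset.sum_div, ← sub_eq_add_neg]
    congr 1
    refine Finset.sum_congr rfl fun k _ => ?_
    rw [Real.log_sqrt (by linarith [hτ k])]

lemma basis_orth {n : ℕ} (e : OrthonormalBasis (Fin n) ℝ (EuclideanSpace ℝ (Fin n)))
    (k : Fin n) : ∑ j, e k j * e k j = 1 := by
  have h := e.orthonormal.1 k
  have h2 : inner ℝ (e k) (e k) = (1 : ℝ) := by rw [real_inner_self_eq_norm_sq, h]; norm_num
  simp only [PiLp.inner_apply, RCLike.inner_apply, conj_trivial] at h2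
  exact h2

lemma basis_complete {n : ℕ} (e : OrthonormalBasis (Fin n) ℝ (EuclideanSpace ℝ (Fin n)))
    (j l : Fin n) : ∑ k, e k j * e k l = if j = l then 1 else 0 := by
  have h := e.sum_inner_mul_inner (EuclideanSpace.single j (1 : ℝ)) (EuclideanSpace.single l (1 : ℝ))
  have h' : ∑ k, e k j * e k l = if l = j then 1 else 0 := by
    simpa [EuclideanSpace.inner_single_left, EuclideanSpace.inner_single_right,
      PiLp.single_apply] using h
  rw [h']; simp [eq_comm]

/-- The matrix `∫ (x xᵀ - I) u dγ` read along a basis vector. -/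
lemma quad_moment {n : ℕ} (e : OrthonormalBasis (Fin n) ℝ (EuclideanSpace ℝ (Fin n)))
    {u : (Fin n → ℝ) → ℝ} {C : ℝ} (hm : AEStronglyMeasurable u (gG n)) (hb : ∀ x, |u x| ≤ C)
    (k : Fin n) :
    Integrable (fun x => lcoord e k x ^ 2 * u x) (gG n) ∧
    ∑ j, ∑ l, e k j * e k l * gM2 n u j l
      = ∫ x, lcoord e k x ^ 2 * u x ∂gG n - ∫ x, u x ∂gG n := by
  have hu := integrable_bddR hm hb
  have h1 : ∀ x, lcoord e k x ^ 2 = ∑ j, ∑ l, e k j * e k l * (x j * x l) := by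
    intro x
    unfold lcoord
    rw [sq, Finset.sum_mul_sum]
    exact Finset.sum_congr rfl fun j _ => Finset.sum_congr rfl fun l _ => by ring
  have hi : ∀ j l, Integrable (fun x => x j * x l * u x) (gG n) := fun j l =>
    Integrable.mul_bddR (integrable_coord_mul j l) hm hb
  have hi2 : ∀ j l, Integrable (fun x => e k j * e k l * (x j * x l * u x)) (gG n) := fun j l =>
    (hi j l).const_mul _
  have hfun : (fun x => lcoord e k x ^ 2 * u x)
      = fun x => ∑ j, ∑ l, e k j * e k l * (x j * x l * u x) := by
    funext x
    rw [h1, Finset.sum_mul]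
    refine Finset.sum_congr rfl fun j _ => ?_
    rw [Finset.sum_mul]
    exact Finset.sum_congr rfl fun l _ => by ring
  have hM : ∀ j l, gM2 n u j l
      = ∫ x, x j * x l * u x ∂gG n - (if j = l then 1 else 0) * ∫ x, u x ∂gG n := by
    intro j l
    unfold gM2
    rw [← integral_const_mul, ← integral_sub (hi j l) (hu.const_mul _)]
    exact integral_congr_ae (Filter.Eventually.of_forall fun x => by simp only; ring)
  constructor
  · rw [hfun]
    exact integrable_finsetSum _ fun j _ => integrable_finsetSum _ fun l _ => hi2 j l
  · rw [hfun, integral_finsetSum _ fun j _ => integrable_finsetSum _ fun l _ => hi2 j l]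
    have h2 : ∀ j, ∫ x, ∑ l, e k j * e k l * (x j * x l * u x) ∂gG n
        = ∑ l, e k j * e k l * ∫ x, x j * x l * u x ∂gG n := by
      intro j
      rw [integral_finsetSum _ fun l _ => hi2 j l]
      exact Finset.sum_congr rfl fun l _ => integral_const_mul _ _
    simp_rw [h2, hM, mul_sub, Finset.sum_sub_distrib]
    congr 1
    calc _ = ∑ j, (e k j * e k j) * ∫ x, u x ∂gG n :=
          Finset.sum_congr rfl fun j _ => by simp [mul_assoc]
      _ = _ := by rw [← Finset.sum_mul, basis_orth, one_mul]

/-- The entropy `∫ u log u dγ - (∫ u dγ) log (∫ u dγ)` of a nonnegative function. -/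
def gEnt (n : ℕ) (u : (Fin n → ℝ) → ℝ) : ℝ :=
  (∫ x, u x * Real.log (u x) ∂gG n) - (∫ x, u x ∂gG n) * Real.log (∫ x, u x ∂gG n)

lemma integrable_mul_log {n : ℕ} {u : (Fin n → ℝ) → ℝ} {C : ℝ}
    (hm : AEStronglyMeasurable u (gG n)) (h0 : ∀ x, 0 ≤ u x) (hb : ∀ x, |u x| ≤ C) :
    Integrable (fun x => u x * Real.log (u x)) (gG n) := by
  have hcont : ContinuousOn (fun t : ℝ => |t * Real.log t|) (Set.Icc 0 C) :=
    Real.continuous_mul_log.abs.continuousOn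
  obtain ⟨K, hK⟩ := isCompact_Icc.bddAbove_image hcont
  refine integrable_bddR (C := K) (Real.continuous_mul_log.comp_aestronglyMeasurable hm) fun x => ?_
  exact hK ⟨u x, ⟨h0 x, (le_abs_self _).trans (hb x)⟩, rfl⟩

lemma gM2_eq_zero {n : ℕ} {u : (Fin n → ℝ) → ℝ} (h : u =ᵐ[gG n] 0) (j l : Fin n) :
    gM2 n u j l = 0 := by
  unfold gM2
  refine (integral_congr_ae (h.mono fun x hx => ?_)).trans (integral_zero _ _)
  simp [hx]

lemma gEnt_eq_zero {n : ℕ} {u : (Fin n → ℝ) → ℝ} (h : u =ᵐ[gG n] 0) : gEnt n u = 0 := by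
  unfold gEnt
  have h1 : ∫ x, u x * Real.log (u x) ∂gG n = 0 :=
    (integral_congr_ae (h.mono fun x hx => by simp [hx])).trans (integral_zero _ _)
  have h2 : ∫ x, u x ∂gG n = 0 := (integral_congr_ae h).trans (integral_zero _ _)
  rw [h1, h2]; simp

/-- One-sided, dimension-free bound on the pairing of two second-moment matrices. For `u, v` of
mean one, diagonalise the matrix of `v`, with eigenvalues `β k ≥ -1`. The variational bound for `u`,
tested on minus a quarter of the quadratic form of that matrix, bounds minus a quarter of the
pairing by the entropy of `u` plus `∑ (β k / 2 - log (1 + β k / 2)) / 2`; the variational bound for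
`v` shows that this last sum is at most the entropy of `v`. -/
lemma moment_entropy {n : ℕ} {u v : (Fin n → ℝ) → ℝ} {C : ℝ}
    (hum : AEStronglyMeasurable u (gG n)) (hu0 : ∀ x, 0 ≤ u x) (hub : ∀ x, |u x| ≤ C)
    (hvm : AEStronglyMeasurable v (gG n)) (hv0 : ∀ x, 0 ≤ v x) (hvb : ∀ x, |v x| ≤ C) :
    -4 * ((∫ x, v x ∂gG n) * gEnt n u + (∫ x, u x ∂gG n) * gEnt n v)
      ≤ ∑ j, ∑ l, gM2 n u j l * gM2 n v j l := by
  have hu := integrable_bddR hum hub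
  have hv := integrable_bddR hvm hvb
  have ha0 : 0 ≤ ∫ x, u x ∂gG n := integral_nonneg hu0
  have hb0 : 0 ≤ ∫ x, v x ∂gG n := integral_nonneg hv0
  rcases ha0.eq_or_lt with ha | ha
  · have hz := (integral_eq_zero_iff_of_nonneg hu0 hu).1 ha.symm
    simp [gM2_eq_zero hz, gEnt_eq_zero hz, ← ha]
  rcases hb0.eq_or_lt with hb | hb
  · have hz := (integral_eq_zero_iff_of_nonneg hv0 hv).1 hb.symm
    simp [gM2_eq_zero hz, gEnt_eq_zero hz, ← hb]
  set a := ∫ x, u x ∂gG n with hadef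
  set b := ∫ x, v x ∂gG n with hbdef
  let B : Matrix (Fin n) (Fin n) ℝ := Matrix.of fun j l => gM2 n v j l / b
  have hB : B.IsHermitian := by
    ext j l
    simp only [B, Matrix.conjTranspose_apply, Matrix.of_apply, star_trivial]
    congr 1
    unfold gM2
    refine integral_congr_ae (Filter.Eventually.of_forall fun x => ?_)
    simp only [eq_comm, mul_comm]
  set e := hB.eigenvectorBasis with he
  set β := hB.eigenvalues with hβ
  have heig : ∀ k j, ∑ l, B j l * e k l = β k * e k j := by
    intro k j
    have := congrFun (hB.mulVec_eigenvectorBasis k) j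
    simpa [Matrix.mulVec, dotProduct] using this
  have hspec : ∀ j l, B j l = ∑ k, β k * (e k j * e k l) := by
    intro j l
    have : ∑ k, β k * (e k j * e k l) = ∑ m, B j m * ∑ k, e k m * e k l := by
      simp_rw [← mul_assoc, ← heig, Finset.sum_mul, Finset.mul_sum]
      rw [Finset.sum_comm]
      exact Finset.sum_congr rfl fun _ _ => Finset.sum_congr rfl fun _ _ => by ring
    rw [this]
    simp [basis_complete]
  have hU := fun k => quad_moment e hum hub k
  have hV := fun k => quad_moment e hvm hvb k
  have hβV : ∀ k, b * (1 + β k) = ∫ x, lcoord e k x ^ 2 * v x ∂gG n := by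
    intro k
    have h1 : β k = ∑ j, e k j * ∑ l, B j l * e k l := by
      simp_rw [heig]
      calc β k = β k * ∑ j, e k j * e k j := by rw [basis_orth, mul_one]
        _ = _ := by
          rw [Finset.mul_sum]
          exact Finset.sum_congr rfl fun _ _ => by ring
    have h2 : b * β k = ∑ j, ∑ l, e k j * e k l * gM2 n v j l := by
      rw [h1, Finset.mul_sum]
      refine Finset.sum_congr rfl fun j _ => ?_
      rw [Finset.mul_sum, Finset.mul_sum]
      refine Finset.sum_congr rfl fun l _ => ?_
      simp only [B, Matrix.of_apply]
      field_simp
    rw [(hV k).2] at h2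
    linarith
  have hβ1 : ∀ k, -1 ≤ β k := by
    intro k
    have h := hβV k
    have h3 : 0 ≤ ∫ x, lcoord e k x ^ 2 * v x ∂gG n :=
      integral_nonneg fun x => mul_nonneg (sq_nonneg _) (hv0 x)
    rw [← h] at h3
    have := nonneg_of_mul_nonneg_right h3 hb
    linarith
  have hprod : ∑ j, ∑ l, gM2 n u j l * gM2 n v j l
      = b * ∑ k, β k * (∫ x, lcoord e k x ^ 2 * u x ∂gG n - a) := by
    have hU' : ∀ k, ∫ x, lcoord e k x ^ 2 * u x ∂gG n - a
        = ∑ j, ∑ l, e k j * e k l * gM2 n u j l := fun k => (hU k).2.symm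
    simp_rw [hU']
    have h1 : ∀ j l, gM2 n u j l * gM2 n v j l
        = ∑ k, b * (β k * (e k j * e k l * gM2 n u j l)) := by
      intro j l
      have : gM2 n v j l = b * B j l := by simp only [B, Matrix.of_apply]; field_simp
      rw [this, hspec, Finset.mul_sum, Finset.mul_sum]
      exact Finset.sum_congr rfl fun _ _ => by ring
    simp_rw [h1, Finset.mul_sum]
    have : ∀ j, ∑ l, ∑ k, b * (β k * (e k j * e k l * gM2 n u j l))
        = ∑ k, ∑ l, b * (β k * (e k j * e k l * gM2 n u j l)) := fun j => Finset.sum_comm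
    simp_rw [this]
    exact Finset.sum_comm
  -- For `u` the test function is `∑ β k / 4 - ∑ β k y k ^ 2 / 4`, `y` being the coordinates in `e`.
  have d1 := gauss_quad e (τ := fun k => -(β k) / 2) (fun k => by linarith [hβ1 k]) ((∑ k, β k) / 4)
  have t1 : ∀ (w : (Fin n → ℝ) → ℝ) (c : ℝ) (τ : Fin n → ℝ), AEStronglyMeasurable w (gG n) →
      (∀ x, |w x| ≤ C) →
      Integrable (fun x => w x * (c + ∑ k, τ k * lcoord e k x ^ 2 / 2)) (gG n) ∧
      ∫ x, w x * (c + ∑ k, τ k * lcoord e k x ^ 2 / 2) ∂gG n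
        = c * ∫ x, w x ∂gG n + ∑ k, τ k / 2 * ∫ x, lcoord e k x ^ 2 * w x ∂gG n := by
    intro w c τ hwm hwb
    have hw := integrable_bddR hwm hwb
    have hW := fun k => (quad_moment e hwm hwb k).1
    have ef : (fun x => w x * (c + ∑ k, τ k * lcoord e k x ^ 2 / 2))
        = fun x => c * w x + ∑ k, τ k / 2 * (lcoord e k x ^ 2 * w x) := by
      funext x
      rw [mul_add, Finset.mul_sum, mul_comm]
      congr 1
      exact Finset.sum_congr rfl fun _ _ => by ring
    have hs : Integrable (fun x => ∑ k, τ k / 2 * (lcoord e k x ^ 2 * w x)) (gG n) :=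
      integrable_finsetSum _ fun k _ => (hW k).const_mul _
    rw [ef]
    refine ⟨(hw.const_mul c).add hs, ?_⟩
    rw [integral_add (hw.const_mul c) hs, integral_const_mul,
      integral_finsetSum _ fun k _ => (hW k).const_mul _]
    simp_rw [integral_const_mul]
  have E1 := entropy_variational hu0 hu (integrable_mul_log hum hu0 hub)
    (t1 u ((∑ k, β k) / 4) (fun k => -(β k) / 2) hum hub).1 d1.1 ha
  rw [(t1 u ((∑ k, β k) / 4) (fun k => -(β k) / 2) hum hub).2, d1.2] at E1
  -- For `v` it is the log-density, relative to `γ`, of the centred Gaussian with variances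
  -- `1 + β k / 2`, up to a constant.
  have hτ2 : ∀ k, (β k / 2) / (1 + β k / 2) < 1 := fun k => by
    rw [div_lt_one (by linarith [hβ1 k])]; linarith
  have d2 := gauss_quad e (τ := fun k => (β k / 2) / (1 + β k / 2)) hτ2 0
  have T2 := t1 v 0 (fun k => (β k / 2) / (1 + β k / 2)) hvm hvb
  have E2 := entropy_variational hv0 hv (integrable_mul_log hvm hv0 hvb) T2.1 d2.1 hb
  rw [T2.2, d2.2] at E2
  simp only [← hadef, ← hbdef, ← hβV] at E1 E2
  have hlog : ∀ k, Real.log (1 - (β k / 2) / (1 + β k / 2)) = - Real.log (1 + β k / 2) := by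
    intro k
    have h1 : 1 + β k / 2 ≠ 0 := ne_of_gt (by linarith [hβ1 k])
    have h2 : 2 + β k ≠ 0 := ne_of_gt (by linarith [hβ1 k])
    rw [← Real.log_inv]
    congr 1
    field_simp
    ring
  simp only [hlog] at E2
  have hlog1 : ∀ k, Real.log (1 - -(β k) / 2) = Real.log (1 + β k / 2) := fun k => by
    congr 1; ring
  simp only [hlog1] at E1
  set S := ∑ k, Real.log (1 + β k / 2) with hS
  have hEu : gEnt n u = (∫ x, u x * Real.log (u x) ∂gG n) - a * Real.log a := rfl
  have hEv : gEnt n v = (∫ x, v x * Real.log (v x) ∂gG n) - b * Real.log b := rfl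
  have hge : b * ((∑ k, β k) / 4) ≤ ∑ k, β k / 2 / (1 + β k / 2) / 2 * (b * (1 + β k)) := by
    rw [Finset.sum_div, Finset.mul_sum]
    refine Finset.sum_le_sum fun k _ => ?_
    have h1 : 0 < 1 + β k / 2 := by linarith [hβ1 k]
    have h3 : 2 + β k ≠ 0 := ne_of_gt (by linarith [hβ1 k])
    have : β k / 2 / (1 + β k / 2) / 2 * (b * (1 + β k)) - b * (β k / 4)
        = b * (β k ^ 2 / (8 * (1 + β k / 2))) := by
      field_simp; ring
    have h2 : 0 ≤ b * (β k ^ 2 / (8 * (1 + β k / 2))) := by positivity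
    linarith
  rw [Finset.sum_neg_distrib] at E2
  have E2' : b * ((∑ k, β k) / 4 - S / 2) ≤ gEnt n v := by
    rw [hEv]; nlinarith
  have E1' : -(1 / 4) * ∑ k, β k * (∫ x, lcoord e k x ^ 2 * u x ∂gG n - a)
      ≤ gEnt n u + a * ((∑ k, β k) / 4 - S / 2) := by
    rw [hEu]
    have : -(1 / 4) * ∑ k, β k * (∫ x, lcoord e k x ^ 2 * u x ∂gG n - a)
        = (∑ k, β k) / 4 * a + ∑ k, -(β k) / 2 / 2 * ∫ x, lcoord e k x ^ 2 * u x ∂gG n := by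
      simp_rw [mul_sub, Finset.sum_sub_distrib, ← Finset.sum_mul]
      rw [mul_sub, Finset.mul_sum]
      have : ∀ k, -(1 / 4) * (β k * ∫ x, lcoord e k x ^ 2 * u x ∂gG n)
        = -(β k) / 2 / 2 * ∫ x, lcoord e k x ^ 2 * u x ∂gG n := fun k => by ring
      simp_rw [this]; ring
    rw [this]; exact E1
  rw [hprod]
  have := mul_le_mul_of_nonneg_left E1' hb.le
  have := mul_le_mul_of_nonneg_left E2' ha.le
  nlinarith

/-! ### Bounded smooth functions and the Ornstein–Uhlenbeck semigroup -/

/-- The `i`-th partial derivative. -/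
def pd {n : ℕ} (i : Fin n) (u : (Fin n → ℝ) → ℝ) (x : Fin n → ℝ) : ℝ :=
  fderiv ℝ u x (Pi.single i 1)

/-- Functions that are bounded together with their iterated partial derivatives up to order `k`,
all of these being continuous, and those of order less than `k` being differentiable. -/
def Nice {n : ℕ} : ℕ → ((Fin n → ℝ) → ℝ) → Prop
  | 0, u => Continuous u ∧ ∃ C, ∀ x, |u x| ≤ C
  | k + 1, u => Differentiable ℝ u ∧ (∃ C, ∀ x, |u x| ≤ C) ∧ ∀ i, Nice k (pd i u)

lemma Nice.continuous {n k : ℕ} {u : (Fin n → ℝ) → ℝ} (h : Nice k u) : Continuous u := by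
  cases k with
  | zero => exact h.1
  | succ k => exact h.1.continuous

lemma Nice.bdd {n k : ℕ} {u : (Fin n → ℝ) → ℝ} (h : Nice k u) : ∃ C, ∀ x, |u x| ≤ C := by
  cases k with
  | zero => exact h.2
  | succ k => exact h.2.1

lemma Nice.pred {n k : ℕ} {u : (Fin n → ℝ) → ℝ} (h : Nice (k + 1) u) : Nice k u := by
  induction k generalizing u with
  | zero => exact ⟨h.continuous, h.bdd⟩
  | succ k ih => exact ⟨h.1, h.2.1, fun i => ih (h.2.2 i)⟩

lemma Nice.zero {n k : ℕ} {u : (Fin n → ℝ) → ℝ} (h : Nice k u) : Nice 0 u :=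
  ⟨h.continuous, h.bdd⟩

lemma Nice.of_le {n k m : ℕ} {u : (Fin n → ℝ) → ℝ} (h : Nice k u) (hm : m ≤ k) : Nice m u := by
  obtain ⟨d, rfl⟩ := Nat.exists_eq_add_of_le hm
  induction d with
  | zero => exact h
  | succ d ih => exact ih (Nice.pred h) (by omega)

lemma pd_const_mul {n : ℕ} (i : Fin n) {u : (Fin n → ℝ) → ℝ} (hu : Differentiable ℝ u) (c : ℝ) :
    pd i (fun x => c * u x) = fun x => c * pd i u x := by
  funext x
  unfold pd
  rw [fderiv_const_mul (hu x)]
  simp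

lemma Nice.const_mul {n k : ℕ} {u : (Fin n → ℝ) → ℝ} (h : Nice k u) (c : ℝ) :
    Nice k (fun x => c * u x) := by
  have hb : ∀ {u : (Fin n → ℝ) → ℝ}, (∃ C, ∀ x, |u x| ≤ C) → ∃ C, ∀ x, |c * u x| ≤ C := by
    rintro u ⟨C, hC⟩
    exact ⟨|c| * C, fun x => by rw [abs_mul]; gcongr; exact hC x⟩
  induction k generalizing u with
  | zero => exact ⟨continuous_const.mul h.1, hb h.2⟩
  | succ k ih =>
    refine ⟨h.1.const_mul c, hb h.2.1, fun i => ?_⟩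
    rw [pd_const_mul i h.1]
    exact ih (h.2.2 i)

lemma nice_const {n : ℕ} (k : ℕ) (c : ℝ) : Nice k (fun _ : Fin n → ℝ => c) := by
  induction k generalizing c with
  | zero => exact ⟨continuous_const, |c|, fun _ => le_rfl⟩
  | succ k ih =>
    refine ⟨differentiable_const c, ⟨|c|, fun _ => le_rfl⟩, fun i => ?_⟩
    have : pd i (fun _ : Fin n → ℝ => c) = fun _ => 0 := by
      funext x; simp [pd]
    rw [this]; exact ih 0

lemma pd_const {n : ℕ} (i : Fin n) (c : ℝ) : pd i (fun _ : Fin n → ℝ => c) = fun _ => 0 := by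
  funext x; simp [pd]

lemma Nice.integrable {n k : ℕ} {u : (Fin n → ℝ) → ℝ} (h : Nice k u) : Integrable u (gG n) := by
  obtain ⟨C, hC⟩ := h.bdd
  exact integrable_bddR h.continuous.aestronglyMeasurable hC

lemma fderiv_eq_sum {n : ℕ} (u : (Fin n → ℝ) → ℝ) (x w : Fin n → ℝ) :
    fderiv ℝ u x w = ∑ i, w i * pd i u x := by
  have := (fderiv ℝ u x).toLinearMap.pi_apply_eq_sum_univ w
  simp only [ContinuousLinearMap.coe_coe, smul_eq_mul] at this
  rw [this]
  refine Finset.sum_congr rfl fun i _ => ?_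
  unfold pd
  congr 2
  funext j
  simp [Pi.single_apply, eq_comm]

lemma fderiv_eq_sum' {n : ℕ} (u : (Fin n → ℝ) → ℝ) (x : Fin n → ℝ) :
    fderiv ℝ u x = ∑ i, pd i u x • ContinuousLinearMap.proj (R := ℝ) (φ := fun _ : Fin n => ℝ) i := by
  ext w
  rw [fderiv_eq_sum]
  simp [mul_comm]

lemma Nice.fderiv_cont {n k : ℕ} {u : (Fin n → ℝ) → ℝ} (h : Nice (k + 1) u) :
    Continuous (fderiv ℝ u) := by
  have : fderiv ℝ u = fun x => ∑ i, pd i u x •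
      ContinuousLinearMap.proj (R := ℝ) (φ := fun _ : Fin n => ℝ) i := by
    funext x; exact fderiv_eq_sum' u x
  rw [this]
  exact continuous_finsetSum _ fun i _ => (h.2.2 i).continuous.smul continuous_const

lemma Nice.fderiv_bdd {n k : ℕ} {u : (Fin n → ℝ) → ℝ} (h : Nice (k + 1) u) :
    ∃ C, ∀ x, ‖fderiv ℝ u x‖ ≤ C := by
  choose C hC using fun i => (h.2.2 i).bdd
  refine ⟨∑ i, C i * ‖ContinuousLinearMap.proj (R := ℝ) (φ := fun _ : Fin n => ℝ) i‖, fun x => ?_⟩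
  rw [fderiv_eq_sum']
  refine (norm_sum_le _ _).trans (Finset.sum_le_sum fun i _ => ?_)
  rw [norm_smul]
  gcongr
  exact hC i x

lemma lineDeriv_pd {n k : ℕ} {u : (Fin n → ℝ) → ℝ} (h : Nice (k + 1) u) (i : Fin n)
    (x : Fin n → ℝ) : HasLineDerivAt ℝ u (pd i u x) x (Pi.single i 1) :=
  (h.1 x).hasFDerivAt.hasLineDerivAt _

lemma lineDeriv_affine {n k : ℕ} {u : (Fin n → ℝ) → ℝ} (h : Nice (k + 1) u) (i : Fin n)
    (w : Fin n → ℝ) (s : ℝ) (x : Fin n → ℝ) :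
    HasLineDerivAt ℝ (fun x => u (w + s • x)) (s * pd i u (w + s • x)) x (Pi.single i 1) := by
  have h1 : HasFDerivAt (fun x : Fin n → ℝ => w + s • x) (s • ContinuousLinearMap.id ℝ (Fin n → ℝ)) x :=
    ((hasFDerivAt_id x).const_smul s).const_add w
  have h2 := ((h.1 (w + s • x)).hasFDerivAt.comp x h1).hasLineDerivAt (Pi.single i 1)
  simpa [pd, Function.comp_def] using h2

/-- The point `√ρ z + √(1-ρ) x` occurring in Mehler's formula. -/
def mx {n : ℕ} (ρ : ℝ) (z x : Fin n → ℝ) : Fin n → ℝ := √ρ • z + √(1 - ρ) • x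

/-- The Ornstein–Uhlenbeck operator with correlation `√ρ`, given by Mehler's formula. -/
def pP {n : ℕ} (ρ : ℝ) (u : (Fin n → ℝ) → ℝ) (z : Fin n → ℝ) : ℝ := ∫ x, u (mx ρ z x) ∂gG n

/-- The interpolated correlation `∫ P_ρ u P_ρ v dγ`. -/
def qq {n : ℕ} (u v : (Fin n → ℝ) → ℝ) (ρ : ℝ) : ℝ := ∫ z, pP ρ u z * pP ρ v z ∂gG n

lemma continuous_mx {n : ℕ} : Continuous (fun p : ℝ × (Fin n → ℝ) × (Fin n → ℝ) => mx p.1 p.2.1 p.2.2) := by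
  unfold mx
  fun_prop

lemma pP_bdd {n : ℕ} {u : (Fin n → ℝ) → ℝ} {C : ℝ} (hC : ∀ x, |u x| ≤ C) (ρ : ℝ) (z : Fin n → ℝ) :
    |pP ρ u z| ≤ C := by
  have := norm_integral_le_of_norm_le_const (μ := gG n) (f := fun x => u (mx ρ z x)) (C := C)
    (Filter.Eventually.of_forall fun x => hC _)
  simpa [pP] using this

/-- Joint continuity of `P_ρ u (z)` in `(ρ, z)`. -/
lemma pP_cont {n : ℕ} {u : (Fin n → ℝ) → ℝ} (h : Nice 0 u) :
    Continuous (fun p : ℝ × (Fin n → ℝ) => pP p.1 u p.2) := by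
  obtain ⟨C, hC⟩ := h.bdd
  have hc := h.continuous
  unfold pP
  refine continuous_of_dominated (bound := fun _ => C) (fun p => ?_)
    (fun p => Filter.Eventually.of_forall fun x => hC _) (integrable_const _)
    (Filter.Eventually.of_forall fun x => ?_)
  · exact (hc.comp (continuous_mx.comp (by fun_prop : Continuous fun x => (p.1, p.2, x)))).aestronglyMeasurable
  · exact hc.comp (continuous_mx.comp (by fun_prop : Continuous fun p : ℝ × (Fin n → ℝ) => (p.1, p.2, x)))

lemma pP_cont_z {n : ℕ} {u : (Fin n → ℝ) → ℝ} (h : Nice 0 u) (ρ : ℝ) : Continuous (pP ρ u) :=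
  (pP_cont h).comp (by fun_prop : Continuous fun z => (ρ, z))

lemma mx_cont_x {n : ℕ} (ρ : ℝ) (z : Fin n → ℝ) : Continuous (mx ρ z) := by
  unfold mx; fun_prop

lemma nice_slice_integrable {n k : ℕ} {u : (Fin n → ℝ) → ℝ} (h : Nice k u) (ρ : ℝ) (z : Fin n → ℝ) :
    Integrable (fun x => u (mx ρ z x)) (gG n) := by
  obtain ⟨C, hC⟩ := h.bdd
  exact integrable_bddR (h.continuous.comp (mx_cont_x ρ z)).aestronglyMeasurable fun x => hC _

lemma pP_hasFDerivAt {n k : ℕ} {u : (Fin n → ℝ) → ℝ} (h : Nice (k + 1) u) (ρ : ℝ) (z : Fin n → ℝ) :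
    HasFDerivAt (pP ρ u) (∫ x, √ρ • fderiv ℝ u (mx ρ z x) ∂gG n) z := by
  obtain ⟨C, hC⟩ := h.fderiv_bdd
  refine hasFDerivAt_integral_of_dominated_of_fderiv_le (s := Set.univ) (μ := gG n)
    (F := fun z x => u (mx ρ z x)) (F' := fun z x => √ρ • fderiv ℝ u (mx ρ z x)) (x₀ := z)
    (bound := fun _ => ‖√ρ‖ * C) Filter.univ_mem ?_ (nice_slice_integrable h ρ z) ?_ ?_
    (integrable_const _) ?_
  · exact Filter.Eventually.of_forall fun z =>
      (h.continuous.comp (mx_cont_x ρ z)).aestronglyMeasurable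
  · exact ((h.fderiv_cont.comp (mx_cont_x ρ z)).const_smul (√ρ)).aestronglyMeasurable
  · refine Filter.Eventually.of_forall fun x z _ => ?_
    rw [norm_smul]
    gcongr
    exact hC _
  · refine Filter.Eventually.of_forall fun x z _ => ?_
    have h1 : HasFDerivAt (fun z : Fin n → ℝ => mx ρ z x) (√ρ • ContinuousLinearMap.id ℝ (Fin n → ℝ)) z :=
      ((hasFDerivAt_id z).const_smul (√ρ)).add_const _
    have h2 := (h.1 (mx ρ z x)).hasFDerivAt.comp z h1
    refine h2.congr_fderiv ?_
    ext w; simp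

lemma pd_pP {n k : ℕ} {u : (Fin n → ℝ) → ℝ} (h : Nice (k + 1) u) (ρ : ℝ) (i : Fin n) :
    pd i (pP ρ u) = fun z => √ρ * pP ρ (pd i u) z := by
  funext z
  have hinteg : Integrable (fun x => √ρ • fderiv ℝ u (mx ρ z x)) (gG n) := by
    obtain ⟨C, hC⟩ := h.fderiv_bdd
    refine ((integrable_const C).mono'
      (h.fderiv_cont.comp (mx_cont_x ρ z)).aestronglyMeasurable ?_).smul (√ρ)
    exact Filter.Eventually.of_forall fun x => hC _
  unfold pd
  rw [(pP_hasFDerivAt h ρ z).fderiv, ContinuousLinearMap.integral_apply hinteg]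
  simp only [pP, _root_.smul_apply, smul_eq_mul]
  rw [integral_const_mul]

lemma Nice.pP {n k : ℕ} {u : (Fin n → ℝ) → ℝ} (h : Nice k u) (ρ : ℝ) : Nice k (pP ρ u) := by
  induction k generalizing u with
  | zero =>
    obtain ⟨C, hC⟩ := h.bdd
    exact ⟨pP_cont_z h ρ, C, pP_bdd hC ρ⟩
  | succ k ih =>
    obtain ⟨C, hC⟩ := h.bdd
    refine ⟨fun z => (pP_hasFDerivAt h ρ z).differentiableAt, ⟨C, pP_bdd hC ρ⟩, fun i => ?_⟩
    rw [pd_pP h]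
    exact (ih (h.2.2 i)).const_mul _

/-- Integration by parts inside Mehler's formula. -/
lemma pP_ibp {n k : ℕ} {u : (Fin n → ℝ) → ℝ} (h : Nice (k + 1) u) (ρ : ℝ) (z : Fin n → ℝ)
    (i : Fin n) : ∫ x, x i * u (mx ρ z x) ∂gG n = √(1 - ρ) * pP ρ (pd i u) z := by
  obtain ⟨C, hC⟩ := h.bdd
  unfold pP
  rw [← integral_const_mul]
  exact gG_ibp i (fun x => lineDeriv_affine h i (√ρ • z) (√(1 - ρ)) x)
    (nice_slice_integrable h ρ z) ((nice_slice_integrable (h.2.2 i) ρ z).const_mul _)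
    (Integrable.mul_bddR (integrable_coord i)
      (h.continuous.comp (mx_cont_x ρ z)).aestronglyMeasurable fun x => hC _)

/-- The derivative of `P_ρ u (z)` with respect to `ρ`. -/
lemma pP_hasDerivAt {n k : ℕ} {u : (Fin n → ℝ) → ℝ} (h : Nice (k + 2) u) {ρ : ℝ} (h0 : 0 < ρ)
    (h1 : ρ < 1) (z : Fin n → ℝ) :
    HasDerivAt (fun ρ => pP ρ u z)
      (∑ i, ((2 * √ρ)⁻¹ * (z i * pP ρ (pd i u) z) - 2⁻¹ * pP ρ (pd i (pd i u)) z)) ρ := by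
  choose C hC using fun i => (h.2.2 i).bdd
  have hC0 : ∀ i, 0 ≤ C i := fun i => (abs_nonneg _).trans (hC i 0)
  set K := (2 * √(ρ / 2))⁻¹ with hK
  set K' := (2 * √((1 - ρ) / 2))⁻¹ with hK'
  have hs : Set.Ioo (ρ / 2) ((1 + ρ) / 2) ∈ nhds ρ := Ioo_mem_nhds (by linarith) (by linarith)
  have hsl : ∀ i, Integrable (fun x => x i * pd i u (mx ρ z x)) (gG n) := fun i =>
    Integrable.mul_bddR (integrable_coord i)
      ((h.2.2 i).continuous.comp (mx_cont_x ρ z)).aestronglyMeasurable fun x => hC i _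
  have key := hasDerivAt_integral_of_dominated_loc_of_deriv_le (μ := gG n)
    (F := fun ρ x => u (mx ρ z x))
    (F' := fun ρ x => ∑ i, ((2 * √ρ)⁻¹ * z i - (2 * √(1 - ρ))⁻¹ * x i) * pd i u (mx ρ z x))
    (x₀ := ρ) (s := Set.Ioo (ρ / 2) ((1 + ρ) / 2))
    (bound := fun x => ∑ i, (K * |z i| + K' * |x i|) * C i) hs
    (Filter.Eventually.of_forall fun ρ => (nice_slice_integrable h ρ z).aestronglyMeasurable)
    (nice_slice_integrable h ρ z) ?_ ?_ ?_ ?_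
  · refine key.2.congr_deriv ?_
    have e : ∀ x, ∑ i, ((2 * √ρ)⁻¹ * z i - (2 * √(1 - ρ))⁻¹ * x i) * pd i u (mx ρ z x)
        = ∑ i, ((2 * √ρ)⁻¹ * z i * pd i u (mx ρ z x)
          - (2 * √(1 - ρ))⁻¹ * (x i * pd i u (mx ρ z x))) := fun x =>
      Finset.sum_congr rfl fun i _ => by ring
    simp_rw [e]
    have hinteg : ∀ i, Integrable (fun x => (2 * √ρ)⁻¹ * z i * pd i u (mx ρ z x)
          - (2 * √(1 - ρ))⁻¹ * (x i * pd i u (mx ρ z x))) (gG n) := fun i =>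
      ((nice_slice_integrable (h.2.2 i) ρ z).const_mul _).sub ((hsl i).const_mul _)
    rw [integral_finsetSum _ fun i _ => hinteg i]
    refine Finset.sum_congr rfl fun i _ => ?_
    rw [integral_sub ((nice_slice_integrable (h.2.2 i) ρ z).const_mul _) ((hsl i).const_mul _),
      integral_const_mul, integral_const_mul, pP_ibp (h.2.2 i)]
    have : √(1 - ρ) ≠ 0 := (Real.sqrt_pos.2 (by linarith)).ne'
    have e2 : (2 * √(1 - ρ))⁻¹ * (√(1 - ρ) * pP ρ (pd i (pd i u)) z)
        = 2⁻¹ * pP ρ (pd i (pd i u)) z := by field_simp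
    rw [e2]
    simp only [pP]
    ring
  · refine Continuous.aestronglyMeasurable (continuous_finsetSum _ fun i _ => ?_)
    exact (continuous_const.sub (continuous_const.mul (continuous_apply i))).mul
      ((h.2.2 i).continuous.comp (mx_cont_x ρ z))
  · refine Filter.Eventually.of_forall fun x r hr => ?_
    have p1 : 0 < √(ρ / 2) := Real.sqrt_pos.2 (by linarith)
    have p2 : 0 < √((1 - ρ) / 2) := Real.sqrt_pos.2 (by linarith)
    have hk1 : (2 * √r)⁻¹ ≤ K := by
      rw [hK]; gcongr; exact hr.1.le
    have hk2 : (2 * √(1 - r))⁻¹ ≤ K' := by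
      rw [hK']; gcongr; linarith [hr.2]
    refine (norm_sum_le _ _).trans (Finset.sum_le_sum fun i _ => ?_)
    rw [norm_mul, Real.norm_eq_abs, Real.norm_eq_abs]
    refine mul_le_mul ?_ (hC i _) (abs_nonneg _) (by positivity)
    refine (abs_sub _ _).trans ?_
    rw [abs_mul, abs_mul, abs_of_nonneg (by positivity : 0 ≤ (2 * √r)⁻¹),
      abs_of_nonneg (by positivity : 0 ≤ (2 * √(1 - r))⁻¹)]
    gcongr
  · exact integrable_finsetSum _ fun i _ =>
      ((integrable_const _).add ((integrable_coord i).abs.const_mul _)).mul_const _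
  · refine Filter.Eventually.of_forall fun x r hr => ?_
    have r0 : 0 < r := by linarith [hr.1]
    have r1 : 0 < 1 - r := by linarith [hr.2]
    have d1 : HasDerivAt (fun r : ℝ => √r • z) ((1 / (2 * √r)) • z) r :=
      (Real.hasDerivAt_sqrt r0.ne').smul_const z
    have d2 : HasDerivAt (fun r : ℝ => √(1 - r) • x) ((-1 / (2 * √(1 - r))) • x) r :=
      (((hasDerivAt_id' r).const_sub 1).sqrt r1.ne').smul_const x
    have d := (h.1 (mx r z x)).hasFDerivAt.comp_hasDerivAt r (d1.add d2)
    refine d.congr_deriv ?_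
    rw [fderiv_eq_sum]
    refine Finset.sum_congr rfl fun i _ => ?_
    simp only [Pi.add_apply, Pi.smul_apply, smul_eq_mul]
    ring

lemma qq_integrable {n k l : ℕ} {u v : (Fin n → ℝ) → ℝ} (hu : Nice k u) (hv : Nice l v) (ρ : ℝ) :
    Integrable (fun z => pP ρ u z * pP ρ v z) (gG n) := by
  obtain ⟨C, hC⟩ := hv.bdd
  exact Integrable.mul_bddR (hu.pP ρ).integrable (hv.pP ρ).continuous.aestronglyMeasurable
    (pP_bdd hC ρ)

lemma qq_cont {n k l : ℕ} {u v : (Fin n → ℝ) → ℝ} (hu : Nice k u) (hv : Nice l v) :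
    Continuous (qq u v) := by
  obtain ⟨C, hC⟩ := hu.bdd
  obtain ⟨D, hD⟩ := hv.bdd
  unfold qq
  refine continuous_of_dominated (bound := fun _ => C * D)
    (fun ρ => (qq_integrable hu hv ρ).aestronglyMeasurable)
    (fun ρ => Filter.Eventually.of_forall fun x => ?_) (integrable_const _)
    (Filter.Eventually.of_forall fun z => ?_)
  · rw [norm_mul]
    exact mul_le_mul (pP_bdd hC ρ x) (pP_bdd hD ρ x) (norm_nonneg _)
      ((abs_nonneg _).trans (hC x))
  · exact ((pP_cont hu.zero).comp (by fun_prop : Continuous fun ρ : ℝ => (ρ, z))).mul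
      ((pP_cont hv.zero).comp (by fun_prop : Continuous fun ρ : ℝ => (ρ, z)))

lemma pP_zero {n : ℕ} (u : (Fin n → ℝ) → ℝ) (z : Fin n → ℝ) : pP 0 u z = ∫ x, u x ∂gG n := by
  simp [pP, mx]

lemma pP_one {n : ℕ} (u : (Fin n → ℝ) → ℝ) (z : Fin n → ℝ) : pP 1 u z = u z := by
  simp [pP, mx]

lemma qq_zero {n : ℕ} (u v : (Fin n → ℝ) → ℝ) :
    qq u v 0 = (∫ x, u x ∂gG n) * ∫ x, v x ∂gG n := by
  simp [qq, pP_zero]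

lemma qq_one {n : ℕ} (u v : (Fin n → ℝ) → ℝ) : qq u v 1 = ∫ x, u x * v x ∂gG n := by
  simp [qq, pP_one]

/-- Half of the derivative of `ρ ↦ ∫ P_ρ u P_ρ v`: integration by parts in `z`. -/
lemma qq_half {n k : ℕ} {u v : (Fin n → ℝ) → ℝ} (hu : Nice (k + 2) u) (hv : Nice (k + 2) v)
    {ρ : ℝ} (h0 : 0 < ρ) :
    Integrable (fun z => (∑ i, ((2 * √ρ)⁻¹ * (z i * pP ρ (pd i u) z)
      - 2⁻¹ * pP ρ (pd i (pd i u)) z)) * pP ρ v z) (gG n) ∧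
    ∫ z, (∑ i, ((2 * √ρ)⁻¹ * (z i * pP ρ (pd i u) z)
      - 2⁻¹ * pP ρ (pd i (pd i u)) z)) * pP ρ v z ∂gG n
      = 2⁻¹ * ∑ i, qq (pd i u) (pd i v) ρ := by
  have e : ∀ z : Fin n → ℝ, (∑ i, ((2 * √ρ)⁻¹ * (z i * pP ρ (pd i u) z)
      - 2⁻¹ * pP ρ (pd i (pd i u)) z)) * pP ρ v z
      = ∑ i, ((2 * √ρ)⁻¹ * (z i * (pP ρ (pd i u) z * pP ρ v z))
        - 2⁻¹ * (pP ρ (pd i (pd i u)) z * pP ρ v z)) := fun z => by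
    rw [Finset.sum_mul]
    exact Finset.sum_congr rfl fun i _ => by ring
  have i1 : ∀ i, Integrable (fun z : Fin n → ℝ => z i * (pP ρ (pd i u) z * pP ρ v z)) (gG n) := by
    intro i
    obtain ⟨C, hC⟩ := (hu.2.2 i).bdd
    obtain ⟨D, hD⟩ := hv.bdd
    refine Integrable.mul_bddR (C := C * D) (integrable_coord i)
      (qq_integrable (hu.2.2 i) hv ρ).aestronglyMeasurable fun x => ?_
    rw [abs_mul]
    exact mul_le_mul (pP_bdd hC ρ x) (pP_bdd hD ρ x) (abs_nonneg _)
      ((abs_nonneg _).trans (hC x))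
  have i2 : ∀ i, Integrable (fun z : Fin n → ℝ => pP ρ (pd i (pd i u)) z * pP ρ v z) (gG n) :=
    fun i => qq_integrable ((hu.2.2 i).2.2 i) hv ρ
  have i3 : ∀ i, Integrable (fun z => (2 * √ρ)⁻¹ * (z i * (pP ρ (pd i u) z * pP ρ v z))
        - 2⁻¹ * (pP ρ (pd i (pd i u)) z * pP ρ v z)) (gG n) := fun i =>
    ((i1 i).const_mul _).sub ((i2 i).const_mul _)
  simp_rw [e]
  refine ⟨integrable_finsetSum _ fun i _ => i3 i, ?_⟩
  rw [integral_finsetSum _ fun i _ => i3 i, Finset.mul_sum]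
  refine Finset.sum_congr rfl fun i _ => ?_
  rw [integral_sub ((i1 i).const_mul _) ((i2 i).const_mul _), integral_const_mul,
    integral_const_mul]
  have j1 := (i2 i).const_mul (√ρ)
  have j2 := (qq_integrable (hu.2.2 i) (hv.2.2 i) ρ).const_mul (√ρ)
  have hib := gG_ibp i (F := fun z => pP ρ (pd i u) z * pP ρ v z)
    (F' := fun z => √ρ * (pP ρ (pd i (pd i u)) z * pP ρ v z)
      + √ρ * (pP ρ (pd i u) z * pP ρ (pd i v) z))
    (fun z => by
      have d1 := lineDeriv_pd ((hu.2.2 i).pP ρ) i z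
      have d2 := lineDeriv_pd (hv.pP ρ) i z
      rw [pd_pP (hu.2.2 i)] at d1
      rw [pd_pP hv] at d2
      have d := HasDerivAt.mul d1 d2
      refine d.congr_deriv ?_
      simp only [zero_smul, add_zero]
      ring)
    (qq_integrable (hu.2.2 i) hv ρ) (j1.add j2) (i1 i)
  rw [hib, integral_add j1 j2, integral_const_mul, integral_const_mul]
  have : √ρ ≠ 0 := (Real.sqrt_pos.2 h0).ne'
  unfold qq
  field_simp
  ring

/-- Gaussian interpolation: `d/dρ ∫ P_ρ u P_ρ v = ∑ ∫ P_ρ ∂ᵢu P_ρ ∂ᵢv`. -/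
lemma qq_hasDerivAt {n k : ℕ} {u v : (Fin n → ℝ) → ℝ} (hu : Nice (k + 2) u) (hv : Nice (k + 2) v)
    {ρ : ℝ} (h0 : 0 < ρ) (h1 : ρ < 1) :
    HasDerivAt (qq u v) (∑ i, qq (pd i u) (pd i v) ρ) ρ := by
  choose C hC using fun i => (hu.2.2 i).bdd
  choose C' hC' using fun i => ((hu.2.2 i).2.2 i).bdd
  choose D hD using fun i => (hv.2.2 i).bdd
  choose D' hD' using fun i => ((hv.2.2 i).2.2 i).bdd
  obtain ⟨A, hA⟩ := hu.bdd
  obtain ⟨B, hB⟩ := hv.bdd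
  have hA0 : 0 ≤ A := (abs_nonneg _).trans (hA 0)
  have hB0 : 0 ≤ B := (abs_nonneg _).trans (hB 0)
  set K := (2 * √(ρ / 2))⁻¹ with hK
  have hs : Set.Ioo (ρ / 2) ((1 + ρ) / 2) ∈ nhds ρ := Ioo_mem_nhds (by linarith) (by linarith)
  have p1 : 0 < √(ρ / 2) := Real.sqrt_pos.2 (by linarith)
  have bd : ∀ {w : (Fin n → ℝ) → ℝ} {E E' : Fin n → ℝ} (_ : ∀ i x, |pd i w x| ≤ E i)
      (_ : ∀ i x, |pd i (pd i w) x| ≤ E' i) (r : ℝ) (_ : r ∈ Set.Ioo (ρ / 2) ((1 + ρ) / 2))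
      (z : Fin n → ℝ), |∑ i, ((2 * √r)⁻¹ * (z i * pP r (pd i w) z) - 2⁻¹ * pP r (pd i (pd i w)) z)|
        ≤ ∑ i, (K * (|z i| * E i) + 2⁻¹ * E' i) := by
    intro w E E' hE hE' r hr z
    have hk1 : (2 * √r)⁻¹ ≤ K := by
      rw [hK]; gcongr; exact hr.1.le
    refine (Finset.abs_sum_le_sum_abs _ _).trans (Finset.sum_le_sum fun i _ => ?_)
    refine (abs_sub _ _).trans ?_
    have e1 := pP_bdd (hE i) r z
    have e2 := pP_bdd (hE' i) r z
    rw [abs_mul, abs_mul, abs_mul, abs_of_nonneg (by positivity : 0 ≤ (2 * √r)⁻¹),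
      abs_of_nonneg (by positivity : (0 : ℝ) ≤ 2⁻¹)]
    gcongr
  have key := hasDerivAt_integral_of_dominated_loc_of_deriv_le (μ := gG n)
    (F := fun ρ z => pP ρ u z * pP ρ v z)
    (F' := fun ρ z =>
      (∑ i, ((2 * √ρ)⁻¹ * (z i * pP ρ (pd i u) z) - 2⁻¹ * pP ρ (pd i (pd i u)) z)) * pP ρ v z
      + pP ρ u z * (∑ i, ((2 * √ρ)⁻¹ * (z i * pP ρ (pd i v) z) - 2⁻¹ * pP ρ (pd i (pd i v)) z)))
    (x₀ := ρ) (s := Set.Ioo (ρ / 2) ((1 + ρ) / 2))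
    (bound := fun z => (∑ i, (K * (|z i| * C i) + 2⁻¹ * C' i)) * B
      + A * ∑ i, (K * (|z i| * D i) + 2⁻¹ * D' i)) hs
    (Filter.Eventually.of_forall fun ρ => (qq_integrable hu hv ρ).aestronglyMeasurable)
    (qq_integrable hu hv ρ) ?_ ?_ ?_ ?_
  · refine key.2.congr_deriv ?_
    have a1 := qq_half hu hv h0
    have a2 := qq_half hv hu h0
    have e : ∀ z, pP ρ u z * (∑ i, ((2 * √ρ)⁻¹ * (z i * pP ρ (pd i v) z)
        - 2⁻¹ * pP ρ (pd i (pd i v)) z)) = (∑ i, ((2 * √ρ)⁻¹ * (z i * pP ρ (pd i v) z)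
        - 2⁻¹ * pP ρ (pd i (pd i v)) z)) * pP ρ u z := fun z => mul_comm _ _
    simp_rw [e]
    rw [integral_add a1.1 a2.1, a1.2, a2.2]
    have : ∀ i, qq (pd i v) (pd i u) ρ = qq (pd i u) (pd i v) ρ := fun i => by
      simp only [qq, mul_comm]
    simp_rw [this]
    ring
  · have a1 := (qq_half hu hv h0).1
    have a2 := (qq_half hv hu h0).1
    refine (a1.add a2).aestronglyMeasurable.congr (Filter.Eventually.of_forall fun z => ?_)
    simp only [Pi.add_apply]
    ring
  · refine Filter.Eventually.of_forall fun z r hr => ?_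
    refine (norm_add_le _ _).trans ?_
    rw [norm_mul, norm_mul]
    have b1 := bd hC hC' r hr z
    have b2 := bd hD hD' r hr z
    exact add_le_add (mul_le_mul b1 (pP_bdd hB r z) (abs_nonneg _) ((abs_nonneg _).trans b1))
      (mul_le_mul (pP_bdd hA r z) b2 (abs_nonneg _) hA0)
  · have : ∀ E E' : Fin n → ℝ,
        Integrable (fun z : Fin n → ℝ => ∑ i, (K * (|z i| * E i) + 2⁻¹ * E' i)) (gG n) :=
      fun E E' => integrable_finsetSum _ fun i _ =>
        (((integrable_coord i).abs.mul_const _).const_mul _).add (integrable_const _)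
    exact ((this C C').mul_const B).add ((this D D').const_mul A)
  · refine Filter.Eventually.of_forall fun z r hr => ?_
    have r0 : 0 < r := by linarith [hr.1]
    have r1 : r < 1 := by linarith [hr.2]
    exact (pP_hasDerivAt hu r0 r1 z).mul (pP_hasDerivAt hv r0 r1 z)

lemma mono_Icc {φ φ' : ℝ → ℝ} {a b : ℝ} (hc : Continuous φ)
    (hd : ∀ x, a < x → x < b → HasDerivAt φ (φ' x) x) (h0 : ∀ x, a < x → x < b → 0 ≤ φ' x) :
    MonotoneOn φ (Set.Icc a b) := by
  refine monotoneOn_of_hasDerivWithinAt_nonneg (f' := φ') (convex_Icc a b) hc.continuousOn ?_ ?_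
  · intro x hx
    rw [interior_Icc] at hx ⊢
    exact (hd x hx.1 hx.2).hasDerivWithinAt
  · intro x hx
    rw [interior_Icc] at hx
    exact h0 x hx.1 hx.2

/-- Invariance of the Gaussian measure under the semigroup. -/
lemma integral_pP {n k : ℕ} {u : (Fin n → ℝ) → ℝ} (hu : Nice (k + 2) u) {ρ : ℝ} (h0 : 0 ≤ ρ)
    (h1 : ρ ≤ 1) : ∫ z, pP ρ u z ∂gG n = ∫ z, u z ∂gG n := by
  have hv : Nice (n := n) (k + 2) (fun _ => 1) := nice_const _ _
  have hq : ∀ r, qq u (fun _ => 1) r = ∫ z, pP r u z ∂gG n := fun r => by simp [qq, pP]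
  have hd : ∀ x : ℝ, 0 < x → x < 1 → HasDerivAt (qq u (fun _ => 1)) 0 x := fun x hx0 hx1 => by
    have := qq_hasDerivAt hu hv hx0 hx1
    simpa [pd_const, qq, pP] using this
  have m1 := mono_Icc (φ' := fun _ => 0) (qq_cont hu hv) hd (fun _ _ _ => le_rfl)
  have m2 := mono_Icc (φ' := fun _ => 0) (qq_cont hu hv).neg
    (fun x hx0 hx1 => by simpa using (hd x hx0 hx1).neg) (fun _ _ _ => le_rfl)
  have a1 := m1 ⟨le_rfl, zero_le_one⟩ ⟨h0, h1⟩ h0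
  have a2 := m2 ⟨le_rfl, zero_le_one⟩ ⟨h0, h1⟩ h0
  simp only [Pi.neg_apply, hq, pP_zero, integral_const, probReal_univ, one_smul] at a1 a2
  linarith

/-! ### The third derivative along the semigroup -/

lemma pP_nonneg {n : ℕ} {u : (Fin n → ℝ) → ℝ} (h : ∀ x, 0 ≤ u x) (ρ : ℝ) (z : Fin n → ℝ) :
    0 ≤ pP ρ u z := integral_nonneg fun _ => h _

lemma qq_nonneg {n : ℕ} {u v : (Fin n → ℝ) → ℝ} (hu : ∀ x, 0 ≤ u x) (hv : ∀ x, 0 ≤ v x) (ρ : ℝ) :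
    0 ≤ qq u v ρ := integral_nonneg fun z => mul_nonneg (pP_nonneg hu ρ z) (pP_nonneg hv ρ z)

/-- The second-moment matrix of a slice of `u` is, up to scaling, the semigroup applied to the
Hessian of `u`. -/
lemma gM2_slice {n k : ℕ} {u : (Fin n → ℝ) → ℝ} (h : Nice (k + 2) u) {ρ : ℝ} (h1 : ρ ≤ 1)
    (z : Fin n → ℝ) (j l : Fin n) :
    gM2 n (fun x => u (mx ρ z x)) j l = (1 - ρ) * pP ρ (pd l (pd j u)) z := by
  obtain ⟨C, hC⟩ := h.bdd
  obtain ⟨D, hD⟩ := (h.2.2 j).bdd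
  have hm := (h.continuous.comp (mx_cont_x ρ z)).aestronglyMeasurable (μ := gG n)
  have i0 := nice_slice_integrable h ρ z
  have i1 : Integrable (fun x => x l * u (mx ρ z x)) (gG n) :=
    Integrable.mul_bddR (integrable_coord l) hm fun x => hC _
  have i2 : Integrable (fun x => x j * x l * u (mx ρ z x)) (gG n) :=
    Integrable.mul_bddR (integrable_coord_mul j l) hm fun x => hC _
  have i3 : Integrable (fun x => x l * pd j u (mx ρ z x)) (gG n) :=
    Integrable.mul_bddR (integrable_coord l)
      ((h.2.2 j).continuous.comp (mx_cont_x ρ z)).aestronglyMeasurable fun x => hD _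
  have j1 := i0.const_mul (if j = l then (1 : ℝ) else 0)
  have j2 := i3.const_mul (√(1 - ρ))
  have hib := gG_ibp j (F := fun x => x l * u (mx ρ z x))
    (F' := fun x => (if j = l then 1 else 0) * u (mx ρ z x)
      + √(1 - ρ) * (x l * pd j u (mx ρ z x)))
    (fun x => by
      have d := HasDerivAt.mul (hasLineDerivAt_coord j l x)
        (lineDeriv_affine h j (√ρ • z) (√(1 - ρ)) x)
      refine d.congr_deriv ?_
      simp only [zero_smul, add_zero, mx]
      ring)
    i1 (j1.add j2) (i2.congr (Filter.Eventually.of_forall fun x => by simp only; ring))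
  rw [integral_add j1 j2, integral_const_mul, integral_const_mul, pP_ibp (h.2.2 j)] at hib
  have e : gM2 n (fun x => u (mx ρ z x)) j l = ∫ x, x j * (x l * u (mx ρ z x)) ∂gG n
      - ∫ x, (if j = l then (1 : ℝ) else 0) * u (mx ρ z x) ∂gG n := by
    rw [← integral_sub (i2.congr (Filter.Eventually.of_forall fun x => by simp only; ring)) j1]
    exact integral_congr_ae (Filter.Eventually.of_forall fun x => by simp only; ring)
  rw [e, hib, integral_const_mul, ← mul_assoc, Real.mul_self_sqrt (by linarith)]
  ring

/-- Entropy is controlled by the mean and the `L²` norm with only a logarithmic loss; `W₀` is a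
free truncation parameter. -/
lemma ent_bound {n : ℕ} {u : (Fin n → ℝ) → ℝ} {C : ℝ} (hm : AEStronglyMeasurable u (gG n))
    (h0 : ∀ x, 0 ≤ u x) (hC : ∀ x, |u x| ≤ C) {b W₀ : ℝ} (hb : 0 ≤ b) (hW : 0 < W₀) (hW1 : W₀ ≤ 1) :
    b * gEnt n u ≤ W₀ * (∫ x, u x ^ 2 ∂gG n + b ^ 2)
      + 2 * (-Real.log W₀) * ((∫ x, u x ∂gG n) * b) := by
  have hl : 0 ≤ -Real.log W₀ := by linarith [Real.log_nonpos hW.le hW1]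
  have hu := integrable_bddR hm hC
  have ha0 : 0 ≤ ∫ x, u x ∂gG n := integral_nonneg h0
  have hsq : 0 ≤ ∫ x, u x ^ 2 ∂gG n := integral_nonneg fun x => sq_nonneg _
  have hR : 0 ≤ W₀ * (∫ x, u x ^ 2 ∂gG n + b ^ 2)
      + 2 * (-Real.log W₀) * ((∫ x, u x ∂gG n) * b) := by positivity
  rcases hb.eq_or_lt with hb' | hb'
  · rw [← hb'] at hR ⊢; simpa using hR
  rcases ha0.eq_or_lt with ha | ha
  · have hz := (integral_eq_zero_iff_of_nonneg h0 hu).1 ha.symm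
    rw [gEnt_eq_zero hz, mul_zero]; exact hR
  set a := ∫ x, u x ∂gG n with hadef
  have hu2 : Integrable (fun x => u x ^ 2) (gG n) := by
    refine (Integrable.mul_bddR hu hm hC).congr (Filter.Eventually.of_forall fun x => ?_)
    simp only; ring
  have hul := integrable_mul_log hm h0 hC
  have hlba : Real.log b - Real.log a ≤ W₀ * b / a - 1 - Real.log W₀ := by
    have := Real.log_le_sub_one_of_pos (x := W₀ * b / a) (by positivity)
    rw [Real.log_div (by positivity) ha.ne', Real.log_mul hW.ne' hb'.ne'] at this
    linarith
  have hpt : ∀ x, b * (u x * Real.log (u x)) ≤ W₀ * u x ^ 2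
      + (b * Real.log a + W₀ * b ^ 2 / a - 2 * b * Real.log W₀) * u x := by
    intro x
    rcases (h0 x).eq_or_lt with hx | hx
    · rw [← hx]; simp
    have h1 := Real.log_le_sub_one_of_pos (x := W₀ * u x / b) (by positivity)
    rw [Real.log_div (by positivity) hb'.ne', Real.log_mul hW.ne' hx.ne'] at h1
    have h2 : Real.log (u x) ≤ W₀ * u x / b + Real.log a + W₀ * b / a - 2 * Real.log W₀ := by
      linarith
    have h3 := mul_le_mul_of_nonneg_left h2 (by positivity : 0 ≤ b * u x)
    have e : b * u x * (W₀ * u x / b + Real.log a + W₀ * b / a - 2 * Real.log W₀)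
        = W₀ * u x ^ 2 + (b * Real.log a + W₀ * b ^ 2 / a - 2 * b * Real.log W₀) * u x := by
      field_simp
      ring
    rw [e] at h3
    linarith
  have hinteg := integral_mono (hul.const_mul b) ((hu2.const_mul W₀).add
    (hu.const_mul (b * Real.log a + W₀ * b ^ 2 / a - 2 * b * Real.log W₀))) hpt
  have hs : ∫ x, (W₀ * u x ^ 2 + (b * Real.log a + W₀ * b ^ 2 / a - 2 * b * Real.log W₀) * u x) ∂gG n
      = W₀ * ∫ x, u x ^ 2 ∂gG n + (b * Real.log a + W₀ * b ^ 2 / a - 2 * b * Real.log W₀) * a := by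
    rw [integral_add (hu2.const_mul W₀) (hu.const_mul _), integral_const_mul, integral_const_mul]
  have hinteg' : b * ∫ x, u x * Real.log (u x) ∂gG n ≤ W₀ * ∫ x, u x ^ 2 ∂gG n
      + (b * Real.log a + W₀ * b ^ 2 / a - 2 * b * Real.log W₀) * a := by
    rw [← hs, ← integral_const_mul]; exact hinteg
  have e : (b * Real.log a + W₀ * b ^ 2 / a - 2 * b * Real.log W₀) * a
      = b * (a * Real.log a) + W₀ * b ^ 2 - 2 * Real.log W₀ * (a * b) := by
    field_simp
  have hE : gEnt n u = (∫ x, u x * Real.log (u x) ∂gG n) - a * Real.log a := rfl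
  rw [hE]
  rw [e] at hinteg'
  linarith

/-- For two families of nonnegative functions with `∑ uᵢ² ≤ 1` and `∑ vᵢ² ≤ 1`, the pairing of the
second-moment matrices is bounded below with no dependence on the dimension. -/
lemma family_bound {n : ℕ} {u v : Fin n → (Fin n → ℝ) → ℝ}
    (hum : ∀ i, Continuous (u i)) (hvm : ∀ i, Continuous (v i))
    (hu0 : ∀ i x, 0 ≤ u i x) (hv0 : ∀ i x, 0 ≤ v i x)
    (hu1 : ∀ x, ∑ i, u i x ^ 2 ≤ 1) (hv1 : ∀ x, ∑ i, v i x ^ 2 ≤ 1)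
    {W₀ : ℝ} (hW : 0 < W₀) (hW1 : W₀ ≤ 1) :
    -16 * (W₀ + (-Real.log W₀) * ∑ i, (∫ x, u i x ∂gG n) * ∫ x, v i x ∂gG n)
      ≤ ∑ i, ∑ j, ∑ l, gM2 n (u i) j l * gM2 n (v i) j l := by
  have bd : ∀ {w : Fin n → (Fin n → ℝ) → ℝ}, (∀ i x, 0 ≤ w i x) → (∀ x, ∑ i, w i x ^ 2 ≤ 1) →
      ∀ i x, |w i x| ≤ 1 := by
    intro w h0 h1 i x
    have : w i x ^ 2 ≤ ∑ i, w i x ^ 2 :=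
      Finset.single_le_sum (f := fun i => w i x ^ 2) (fun _ _ => sq_nonneg _) (Finset.mem_univ i)
    rw [← sq_le_one_iff_abs_le_one]
    exact this.trans (h1 x)
  have sq : ∀ {w : Fin n → (Fin n → ℝ) → ℝ}, (∀ i, Continuous (w i)) → (∀ i x, 0 ≤ w i x) →
      (∀ x, ∑ i, w i x ^ 2 ≤ 1) → (∑ i, ∫ x, w i x ^ 2 ∂gG n ≤ 1) ∧
      ∑ i, (∫ x, w i x ∂gG n) ^ 2 ≤ 1 := by
    intro w hm h0 h1
    have hb := bd h0 h1
    have hi1 : ∀ i, Integrable (w i) (gG n) := fun i =>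
      integrable_bddR (hm i).aestronglyMeasurable (hb i)
    have hi : ∀ i, Integrable (fun x => w i x ^ 2) (gG n) := fun i =>
      integrable_bddR (C := 1) ((hm i).pow 2).aestronglyMeasurable fun x => by
        rw [abs_of_nonneg (sq_nonneg _)]; exact (sq_le_one_iff_abs_le_one _).2 (hb i x)
    have hA : ∑ i, ∫ x, w i x ^ 2 ∂gG n ≤ 1 := by
      rw [← integral_finsetSum _ fun i _ => hi i]
      have := integral_mono (integrable_finsetSum _ fun i _ => hi i)
        (integrable_const (1 : ℝ)) h1
      simpa using this
    refine ⟨hA, le_trans (Finset.sum_le_sum fun i _ => ?_) hA⟩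
    set c := ∫ x, w i x ∂gG n with hc
    have h2 : 0 ≤ ∫ x, (w i x ^ 2 - 2 * c * w i x + c ^ 2) ∂gG n :=
      integral_nonneg fun x => by
        have : w i x ^ 2 - 2 * c * w i x + c ^ 2 = (w i x - c) ^ 2 := by ring
        simp only [Pi.zero_apply, this]; positivity
    have i2 : Integrable (fun x => w i x ^ 2 - 2 * c * w i x) (gG n) :=
      (hi i).sub ((hi1 i).const_mul _)
    rw [integral_add i2 (integrable_const _), integral_sub (hi i) ((hi1 i).const_mul _),
      integral_const_mul, ← hc] at h2
    simp at h2
    nlinarith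
  have hub := bd hu0 hu1
  have hvb := bd hv0 hv1
  obtain ⟨su1, su2⟩ := sq hum hu0 hu1
  obtain ⟨sv1, sv2⟩ := sq hvm hv0 hv1
  have hterm : ∀ i, -4 * (W₀ * (∫ x, u i x ^ 2 ∂gG n + (∫ x, v i x ∂gG n) ^ 2)
      + W₀ * (∫ x, v i x ^ 2 ∂gG n + (∫ x, u i x ∂gG n) ^ 2)
      + 4 * (-Real.log W₀) * ((∫ x, u i x ∂gG n) * ∫ x, v i x ∂gG n))
      ≤ ∑ j, ∑ l, gM2 n (u i) j l * gM2 n (v i) j l := by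
    intro i
    have m := moment_entropy (hum i).aestronglyMeasurable (hu0 i) (hub i)
      (hvm i).aestronglyMeasurable (hv0 i) (hvb i)
    have e1 := ent_bound (hum i).aestronglyMeasurable (hu0 i) (hub i)
      (integral_nonneg (hv0 i) : 0 ≤ ∫ x, v i x ∂gG n) hW hW1
    have e2 := ent_bound (hvm i).aestronglyMeasurable (hv0 i) (hvb i)
      (integral_nonneg (hu0 i) : 0 ≤ ∫ x, u i x ∂gG n) hW hW1
    linarith
  refine le_trans ?_ (Finset.sum_le_sum fun i _ => hterm i)
  rw [← Finset.mul_sum, Finset.sum_add_distrib, Finset.sum_add_distrib, ← Finset.mul_sum,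
    ← Finset.mul_sum, ← Finset.mul_sum, Finset.sum_add_distrib, Finset.sum_add_distrib]
  nlinarith

/-- Lower bound on the third derivative of `ρ ↦ ∫ P_ρ F P_ρ G` in terms of the first. -/
lemma third_deriv_bound {n : ℕ} {F G : (Fin n → ℝ) → ℝ} (hF : Nice 4 F) (hG : Nice 4 G)
    (hF0 : ∀ i x, 0 ≤ pd i F x) (hG0 : ∀ i x, 0 ≤ pd i G x)
    (hF1 : ∀ x, ∑ i, pd i F x ^ 2 ≤ 1) (hG1 : ∀ x, ∑ i, pd i G x ^ 2 ≤ 1)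
    {W₀ : ℝ} (hW : 0 < W₀) (hW1 : W₀ ≤ 1) {ρ : ℝ} (h1 : ρ ≤ 1 / 2) :
    -64 * (W₀ + (-Real.log W₀) * ∑ i, qq (pd i F) (pd i G) ρ)
      ≤ ∑ i, ∑ j, ∑ l, qq (pd l (pd j (pd i F))) (pd l (pd j (pd i G))) ρ := by
  have hl : 0 ≤ -Real.log W₀ := by linarith [Real.log_nonpos hW.le hW1]
  have hz : ∀ z, -16 * (W₀ + (-Real.log W₀) * ∑ i, pP ρ (pd i F) z * pP ρ (pd i G) z)
      ≤ (1 - ρ) ^ 2 * ∑ i, ∑ j, ∑ l,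
        pP ρ (pd l (pd j (pd i F))) z * pP ρ (pd l (pd j (pd i G))) z := by
    intro z
    have := family_bound (u := fun i x => pd i F (mx ρ z x)) (v := fun i x => pd i G (mx ρ z x))
      (fun i => (hF.2.2 i).continuous.comp (mx_cont_x ρ z))
      (fun i => (hG.2.2 i).continuous.comp (mx_cont_x ρ z))
      (fun i x => hF0 i _) (fun i x => hG0 i _) (fun x => hF1 _) (fun x => hG1 _) hW hW1
    refine this.trans (le_of_eq ?_)
    simp_rw [Finset.mul_sum]
    refine Finset.sum_congr rfl fun i _ => Finset.sum_congr rfl fun j _ =>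
      Finset.sum_congr rfl fun l _ => ?_
    rw [gM2_slice (hF.2.2 i) (by linarith), gM2_slice (hG.2.2 i) (by linarith)]
    ring
  have i3 : ∀ i j l, Integrable (fun z => pP ρ (pd l (pd j (pd i F))) z
      * pP ρ (pd l (pd j (pd i G))) z) (gG n) := fun i j l =>
    qq_integrable (((hF.2.2 i).2.2 j).2.2 l) (((hG.2.2 i).2.2 j).2.2 l) ρ
  have i1 : ∀ i, Integrable (fun z => pP ρ (pd i F) z * pP ρ (pd i G) z) (gG n) := fun i =>
    qq_integrable (hF.2.2 i) (hG.2.2 i) ρ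
  have I1 : Integrable (fun z => ∑ i, pP ρ (pd i F) z * pP ρ (pd i G) z) (gG n) :=
    integrable_finsetSum _ fun i _ => i1 i
  have I3'' : ∀ i j, Integrable (fun z => ∑ l,
        pP ρ (pd l (pd j (pd i F))) z * pP ρ (pd l (pd j (pd i G))) z) (gG n) := fun i j =>
    integrable_finsetSum _ fun l _ => i3 i j l
  have I3' : ∀ i, Integrable (fun z => ∑ j, ∑ l,
        pP ρ (pd l (pd j (pd i F))) z * pP ρ (pd l (pd j (pd i G))) z) (gG n) := fun i =>
    integrable_finsetSum _ fun j _ => I3'' i j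
  have I3 : Integrable (fun z => ∑ i, ∑ j, ∑ l,
        pP ρ (pd l (pd j (pd i F))) z * pP ρ (pd l (pd j (pd i G))) z) (gG n) :=
    integrable_finsetSum _ fun i _ => I3' i
  have hinteg := integral_mono (((integrable_const W₀).add (I1.const_mul (-Real.log W₀))).const_mul
    (-16)) (I3.const_mul ((1 - ρ) ^ 2)) hz
  have eR : ∫ z, (1 - ρ) ^ 2 * (∑ i, ∑ j, ∑ l,
        pP ρ (pd l (pd j (pd i F))) z * pP ρ (pd l (pd j (pd i G))) z) ∂gG n
      = (1 - ρ) ^ 2 * ∑ i, ∑ j, ∑ l, qq (pd l (pd j (pd i F))) (pd l (pd j (pd i G))) ρ := by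
    rw [integral_const_mul, integral_finsetSum _ fun i _ => I3' i]
    congr 1
    refine Finset.sum_congr rfl fun i _ => ?_
    rw [integral_finsetSum _ fun j _ => I3'' i j]
    refine Finset.sum_congr rfl fun j _ => ?_
    rw [integral_finsetSum _ fun l _ => i3 i j l]
    rfl
  have eL : ∫ z, -16 * (W₀ + (-Real.log W₀) * ∑ i, pP ρ (pd i F) z * pP ρ (pd i G) z) ∂gG n
      = -16 * (W₀ + (-Real.log W₀) * ∑ i, qq (pd i F) (pd i G) ρ) := by
    rw [integral_const_mul, integral_add (integrable_const W₀) (I1.const_mul _),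
      integral_const_mul, integral_finsetSum _ fun i _ => i1 i]
    simp [qq]
  have hinteg' : -16 * (W₀ + (-Real.log W₀) * ∑ i, qq (pd i F) (pd i G) ρ)
      ≤ (1 - ρ) ^ 2 * ∑ i, ∑ j, ∑ l, qq (pd l (pd j (pd i F))) (pd l (pd j (pd i G))) ρ := by
    rw [← eR, ← eL]; exact hinteg
  set S := ∑ i, ∑ j, ∑ l, qq (pd l (pd j (pd i F))) (pd l (pd j (pd i G))) ρ
  have hq : 0 ≤ ∑ i, qq (pd i F) (pd i G) ρ :=
    Finset.sum_nonneg fun i _ => qq_nonneg (hF0 i) (hG0 i) ρ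
  set T := W₀ + (-Real.log W₀) * ∑ i, qq (pd i F) (pd i G) ρ
  have hT : 0 ≤ T := by positivity
  have hr : 1 / 4 ≤ (1 - ρ) ^ 2 := by nlinarith
  by_contra hneg
  push Not at hneg
  have : (1 - ρ) ^ 2 * S ≤ (1 / 4) * S :=
    mul_le_mul_of_nonpos_right hr (by linarith)
  linarith

/-- Second-order Taylor expansion with a one-sided bound on the third derivative. -/
lemma taylor_bound {Φ Φ₁ Φ₂ Φ₃ : ℝ → ℝ} {r W₀ ℓ : ℝ} (hr : 0 ≤ r)
    (c0 : Continuous Φ) (c1 : Continuous Φ₁) (c2 : Continuous Φ₂)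
    (d0 : ∀ x, 0 < x → x < r → HasDerivAt Φ (Φ₁ x) x)
    (d1 : ∀ x, 0 < x → x < r → HasDerivAt Φ₁ (Φ₂ x) x)
    (d2 : ∀ x, 0 < x → x < r → HasDerivAt Φ₂ (Φ₃ x) x)
    (hW : 0 ≤ W₀) (hℓ : 0 ≤ ℓ) (h1 : ∀ x, 0 ≤ Φ₁ x)
    (h3 : ∀ x, 0 < x → x < r → -64 * (W₀ + ℓ * Φ₁ x) ≤ Φ₃ x) :
    r * Φ₁ 0 + r ^ 2 / 2 * Φ₂ 0 - 32 * W₀ * r ^ 3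
      ≤ (1 + 32 * r ^ 2 * ℓ) * (Φ r - Φ 0) := by
  have hm := mono_Icc (a := 0) (b := r)
    (φ := fun x => Φ x + (r - x) * Φ₁ x + (r - x) ^ 2 / 2 * Φ₂ x
      + 32 * r ^ 2 * (W₀ * x + ℓ * Φ x))
    (φ' := fun x => (r - x) ^ 2 / 2 * Φ₃ x + 32 * r ^ 2 * (W₀ + ℓ * Φ₁ x))
    (by fun_prop) ?_ ?_
  · have := hm ⟨le_rfl, hr⟩ ⟨hr, le_rfl⟩ hr
    simp only at this
    nlinarith
  · intro x hx0 hx1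
    have e : HasDerivAt (fun x : ℝ => r - x) (-1) x := by
      simpa using (hasDerivAt_id' x).const_sub r
    have a1 := e.fun_mul (d1 x hx0 hx1)
    have a2 := ((e.fun_pow 2).div_const 2).fun_mul (d2 x hx0 hx1)
    have a3 := (((hasDerivAt_id' x).const_mul W₀).fun_add ((d0 x hx0 hx1).const_mul ℓ)).const_mul
      (32 * r ^ 2)
    refine ((((d0 x hx0 hx1).fun_add a1).fun_add a2).fun_add a3).congr_deriv ?_
    push_cast
    ring
  · intro x hx0 hx1
    have h4 := h3 x hx0 hx1
    have hT : 0 ≤ W₀ + ℓ * Φ₁ x := by have := h1 x; positivity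
    have h5 := mul_le_mul_of_nonneg_left h4 (by positivity : 0 ≤ (r - x) ^ 2 / 2)
    have h6 : (r - x) ^ 2 ≤ r ^ 2 := by nlinarith
    have h7 := mul_le_mul_of_nonneg_right h6 hT
    linarith

/-- Bessel's inequality for the coordinate functions. -/
lemma bessel {n : ℕ} {h : (Fin n → ℝ) → ℝ} (hm : AEStronglyMeasurable h (gG n))
    (hb : ∀ x, |h x| ≤ 1) : ∑ i, (∫ x, x i * h x ∂gG n) ^ 2 ≤ 1 := by
  set c : Fin n → ℝ := fun i => ∫ x, x i * h x ∂gG n with hc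
  have i1 : ∀ i, Integrable (fun x => x i * h x) (gG n) := fun i =>
    Integrable.mul_bddR (integrable_coord i) hm hb
  have i2 : ∀ i j, Integrable (fun x : Fin n → ℝ => c i * c j * (x i * x j)) (gG n) := fun i j =>
    (integrable_coord_mul i j).const_mul _
  have hpt : ∀ x : Fin n → ℝ, 2 * ∑ i, c i * (x i * h x) ≤ 1 + ∑ i, ∑ j, c i * c j * (x i * x j) := by
    intro x
    have e1 : ∑ i, c i * (x i * h x) = (∑ i, c i * x i) * h x := by
      rw [Finset.sum_mul]; exact Finset.sum_congr rfl fun i _ => by ring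
    have e2 : ∑ i, ∑ j, c i * c j * (x i * x j) = (∑ i, c i * x i) ^ 2 := by
      rw [sq, Finset.sum_mul_sum]
      exact Finset.sum_congr rfl fun i _ => Finset.sum_congr rfl fun j _ => by ring
    rw [e1, e2]
    have := (sq_le_one_iff_abs_le_one _).2 (hb x)
    nlinarith [sq_nonneg ((∑ i, c i * x i) - h x)]
  have I1 : Integrable (fun x => ∑ i, c i * (x i * h x)) (gG n) :=
    integrable_finsetSum _ fun i _ => (i1 i).const_mul _
  have I2' : ∀ i, Integrable (fun x : Fin n → ℝ => ∑ j, c i * c j * (x i * x j)) (gG n) := fun i =>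
    integrable_finsetSum _ fun j _ => i2 i j
  have I2 : Integrable (fun x : Fin n → ℝ => ∑ i, ∑ j, c i * c j * (x i * x j)) (gG n) :=
    integrable_finsetSum _ fun i _ => I2' i
  have hinteg := integral_mono (I1.const_mul 2) ((integrable_const (1 : ℝ)).add I2) hpt
  have eL : ∫ x, 2 * ∑ i, c i * (x i * h x) ∂gG n = 2 * ∑ i, c i ^ 2 := by
    rw [integral_const_mul, integral_finsetSum _ fun i _ => (i1 i).const_mul _]
    simp_rw [integral_const_mul, sq]
    rfl
  have eR : ∫ x : Fin n → ℝ, (1 + ∑ i, ∑ j, c i * c j * (x i * x j)) ∂gG n = 1 + ∑ i, c i ^ 2 := by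
    rw [integral_add (integrable_const _) I2, integral_finsetSum _ fun i _ => I2' i]
    have : ∀ i, ∫ x : Fin n → ℝ, ∑ j, c i * c j * (x i * x j) ∂gG n = c i ^ 2 := by
      intro i
      rw [integral_finsetSum _ fun j _ => i2 i j]
      simp_rw [integral_const_mul, integral_coord_mul]
      simp [sq]
    simp_rw [this]
    simp
  have : 2 * ∑ i, c i ^ 2 ≤ 1 + ∑ i, c i ^ 2 := by rw [← eL, ← eR]; exact hinteg
  linarith

/-! ### The inequality for smooth functions -/

lemma gM1_eq {n k : ℕ} {u : (Fin n → ℝ) → ℝ} (h : Nice (k + 1) u) (i : Fin n) :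
    gM1 n u i = ∫ x, pd i u x ∂gG n := by
  have := pP_ibp h 0 0 i
  rw [pP_zero] at this
  simpa [mx, gM1] using this

lemma gM2_eq {n k : ℕ} {u : (Fin n → ℝ) → ℝ} (h : Nice (k + 2) u) (i j : Fin n) :
    gM2 n u i j = ∫ x, pd j (pd i u) x ∂gG n := by
  have := gM2_slice h (zero_le_one : (0 : ℝ) ≤ 1) 0 i j
  rw [pP_zero] at this
  simpa [mx] using this

/-- After half a unit of smoothing, a function with values in `[0,1]` has gradient at most `1`. -/
lemma smoothed_gradient {n k : ℕ} {f : (Fin n → ℝ) → ℝ} (hf : Nice (k + 1) f)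
    (hb : ∀ x, f x ∈ Set.Icc (0 : ℝ) 1) (z : Fin n → ℝ) : ∑ i, pd i (pP (1 / 2) f) z ^ 2 ≤ 1 := by
  have h := bessel (h := fun x => f (mx (1 / 2) z x))
    (hf.continuous.comp (mx_cont_x _ z)).aestronglyMeasurable
    (fun x => by rw [abs_of_nonneg (hb _).1]; exact (hb _).2)
  simp_rw [pP_ibp hf] at h
  have e : √(1 - 1 / 2 : ℝ) = √(1 / 2) := by norm_num
  rw [e] at h
  simp_rw [pd_pP hf]
  exact h

/-- The correlation inequality before optimising over the time `r` and the truncation `W₀`. -/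
lemma smooth_main {n : ℕ} {f g : (Fin n → ℝ) → ℝ} (hf : Nice 4 f) (hg : Nice 4 g)
    (hf0 : ∀ i x, 0 ≤ pd i f x) (hg0 : ∀ i x, 0 ≤ pd i g x)
    (hfb : ∀ x, f x ∈ Set.Icc (0 : ℝ) 1) (hgb : ∀ x, g x ∈ Set.Icc (0 : ℝ) 1)
    {W₀ r : ℝ} (hW : 0 < W₀) (hW1 : W₀ ≤ 1) (hr : 0 ≤ r) (hr1 : r ≤ 1 / 2) :
    r * gM1pair n f g / 2 - r ^ 2 * |gM2pair n f g| / 8 - 32 * W₀ * r ^ 3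
      ≤ (1 + 32 * r ^ 2 * (-Real.log W₀)) * gCor n f g := by
  have hl : 0 ≤ -Real.log W₀ := by linarith [Real.log_nonpos hW.le hW1]
  have hs : √(1 / 2 : ℝ) * √(1 / 2) = 1 / 2 := Real.mul_self_sqrt (by norm_num)
  set F := pP (1 / 2) f with hFdef
  set G := pP (1 / 2) g with hGdef
  have hF : Nice 4 F := hf.pP _
  have hG : Nice 4 G := hg.pP _
  have pos : ∀ {u : (Fin n → ℝ) → ℝ}, Nice 4 u → (∀ i x, 0 ≤ pd i u x) →
      ∀ i x, 0 ≤ pd i (pP (1 / 2) u) x := fun {u} hu h0 i x => by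
    rw [pd_pP hu]; exact mul_nonneg (Real.sqrt_nonneg _) (pP_nonneg (h0 i) _ x)
  have hF0 : ∀ i x, 0 ≤ pd i F x := pos hf hf0
  have hG0 : ∀ i x, 0 ≤ pd i G x := pos hg hg0
  have I0 : ∀ {u : (Fin n → ℝ) → ℝ}, Nice 4 u → ∫ x, pP (1 / 2) u x ∂gG n = ∫ x, u x ∂gG n :=
    fun hu => integral_pP hu (by norm_num) (by norm_num)
  have I1 : ∀ {u : (Fin n → ℝ) → ℝ}, Nice 4 u → ∀ i,
      ∫ x, pd i (pP (1 / 2) u) x ∂gG n = √(1 / 2) * gM1 n u i := fun {u} hu i => by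
    rw [pd_pP hu, integral_const_mul, integral_pP (hu.2.2 i) (by norm_num) (by norm_num),
      gM1_eq hu]
  have I2 : ∀ {u : (Fin n → ℝ) → ℝ}, Nice 4 u → ∀ i j,
      ∫ x, pd j (pd i (pP (1 / 2) u)) x ∂gG n = 1 / 2 * gM2 n u i j := fun {u} hu i j => by
    rw [pd_pP hu, pd_const_mul _ ((hu.2.2 i).pP _).1, pd_pP (hu.2.2 i), integral_const_mul,
      integral_const_mul, integral_pP ((hu.2.2 i).2.2 j) (by norm_num) (by norm_num),
      gM2_eq hu, ← mul_assoc, hs]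
  have key := taylor_bound (Φ := qq F G) (Φ₁ := fun ρ => ∑ i, qq (pd i F) (pd i G) ρ)
    (Φ₂ := fun ρ => ∑ i, ∑ j, qq (pd j (pd i F)) (pd j (pd i G)) ρ)
    (Φ₃ := fun ρ => ∑ i, ∑ j, ∑ l, qq (pd l (pd j (pd i F))) (pd l (pd j (pd i G))) ρ)
    (ℓ := -Real.log W₀) hr (qq_cont hF hG)
    (continuous_finsetSum _ fun i _ => qq_cont (hF.2.2 i) (hG.2.2 i))
    (continuous_finsetSum _ fun i _ => continuous_finsetSum _ fun j _ =>
      qq_cont ((hF.2.2 i).2.2 j) ((hG.2.2 i).2.2 j))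
    (fun x h0 h1 => qq_hasDerivAt hF hG h0 (by linarith))
    (fun x h0 h1 => HasDerivAt.fun_sum fun i _ =>
      qq_hasDerivAt (hF.2.2 i) (hG.2.2 i) h0 (by linarith))
    (fun x h0 h1 => HasDerivAt.fun_sum fun i _ => HasDerivAt.fun_sum fun j _ =>
      qq_hasDerivAt ((hF.2.2 i).2.2 j) ((hG.2.2 i).2.2 j) h0 (by linarith))
    hW.le hl (fun x => Finset.sum_nonneg fun i _ => qq_nonneg (hF0 i) (hG0 i) x)
    (fun x h0 h1 => third_deriv_bound hF hG hF0 hG0 (smoothed_gradient hf hfb)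
      (smoothed_gradient hg hgb) hW hW1 (by linarith))
  have mono : ∀ {u v : (Fin n → ℝ) → ℝ}, Nice 4 u → Nice 4 v → (∀ i x, 0 ≤ pd i u x) →
      (∀ i x, 0 ≤ pd i v x) → MonotoneOn (qq u v) (Set.Icc 0 1) := fun hu hv hu0 hv0 =>
    mono_Icc (qq_cont hu hv) (fun x h0 h1 => qq_hasDerivAt hu hv h0 h1)
      (fun x _ _ => Finset.sum_nonneg fun i _ => qq_nonneg (hu0 i) (hv0 i) x)
  have m1 : qq F G r ≤ qq F G 1 :=
    mono hF hG hF0 hG0 ⟨hr, by linarith⟩ ⟨zero_le_one, le_rfl⟩ (by linarith)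
  have m2 : qq f g (1 / 2) ≤ qq f g 1 :=
    mono hf hg hf0 hg0 ⟨by norm_num, by norm_num⟩ ⟨zero_le_one, le_rfl⟩ (by norm_num)
  have e1 : qq F G 1 = qq f g (1 / 2) := by rw [qq_one]; rfl
  have e0 : qq F G 0 = (∫ x, f x ∂gG n) * ∫ x, g x ∂gG n := by
    rw [qq_zero, hFdef, hGdef, I0 hf, I0 hg]
  have hcor : qq F G r - qq F G 0 ≤ gCor n f g := by
    have : gCor n f g = qq f g 1 - (∫ x, f x ∂gG n) * ∫ x, g x ∂gG n := by rw [qq_one]; rfl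
    rw [this, e0]
    linarith
  have e2 : ∑ i, qq (pd i F) (pd i G) 0 = gM1pair n f g / 2 := by
    unfold gM1pair
    rw [Finset.sum_div]
    refine Finset.sum_congr rfl fun i _ => ?_
    rw [qq_zero, hFdef, hGdef, I1 hf, I1 hg]
    linear_combination (gM1 n f i * gM1 n g i) * hs
  have e3 : ∑ i, ∑ j, qq (pd j (pd i F)) (pd j (pd i G)) 0 = gM2pair n f g / 4 := by
    unfold gM2pair
    rw [Finset.sum_div]
    refine Finset.sum_congr rfl fun i _ => ?_
    rw [Finset.sum_div]
    refine Finset.sum_congr rfl fun j _ => ?_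
    rw [qq_zero, hFdef, hGdef, I2 hf, I2 hg]
    ring
  rw [e2, e3] at key
  have h5 := mul_le_mul_of_nonneg_left hcor (by positivity : 0 ≤ 1 + 32 * r ^ 2 * (-Real.log W₀))
  have h6 := neg_abs_le (gM2pair n f g)
  have h7 := mul_le_mul_of_nonneg_left h6 (sq_nonneg r)
  linarith

/-! ### Mollification -/

/-- Convolution with the kernel `φ`. -/
def moll {n : ℕ} (φ f : (Fin n → ℝ) → ℝ) : (Fin n → ℝ) → ℝ :=
  convolution φ f (ContinuousLinearMap.lsmul ℝ ℝ) volume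

lemma moll_apply {n : ℕ} (φ f : (Fin n → ℝ) → ℝ) (x : Fin n → ℝ) :
    moll φ f x = ∫ t, φ t * f (x - t) := rfl

lemma moll_integrand {n : ℕ} {φ f : (Fin n → ℝ) → ℝ} (hφ : Integrable φ volume) (hf : Measurable f)
    (hb : ∀ x, |f x| ≤ 1) (x : Fin n → ℝ) : Integrable (fun t => φ t * f (x - t)) volume :=
  hφ.mul_bdd (c := 1) (hf.comp (measurable_const.sub measurable_id)).aestronglyMeasurable
    (Filter.Eventually.of_forall fun _ => hb _)

lemma locInt {n : ℕ} {f : (Fin n → ℝ) → ℝ} (hf : Measurable f) (hb : ∀ x, |f x| ≤ 1) :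
    LocallyIntegrable f (volume : Measure (Fin n → ℝ)) :=
  (locallyIntegrable_const (1 : ℝ)).mono hf.aestronglyMeasurable
    (Filter.Eventually.of_forall fun x => by simpa using hb x)

lemma pd_moll {n : ℕ} {φ f : (Fin n → ℝ) → ℝ} (hφ : ContDiff ℝ 1 φ) (hc : HasCompactSupport φ)
    (hf : Measurable f) (hb : ∀ x, |f x| ≤ 1) (i : Fin n) :
    pd i (moll φ f) = moll (pd i φ) f := by
  funext x
  have h := hc.hasFDerivAt_convolution_left (ContinuousLinearMap.lsmul ℝ ℝ) hφ (locInt hf hb) x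
  have hex := (hc.fderiv (𝕜 := ℝ)).convolutionExists_left
    ((ContinuousLinearMap.lsmul ℝ ℝ).precompL (Fin n → ℝ))
    (hφ.continuous_fderiv one_ne_zero) (locInt hf hb) x
  unfold pd moll
  rw [h.fderiv]
  unfold convolution
  rw [ContinuousLinearMap.integral_apply hex]
  rfl

lemma nice_moll {n : ℕ} (k : ℕ) {φ f : (Fin n → ℝ) → ℝ} (hφ : ContDiff ℝ (⊤ : ℕ∞) φ)
    (hc : HasCompactSupport φ) (hf : Measurable f) (hb : ∀ x, |f x| ≤ 1) :
    Nice k (moll φ f) := by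
  have bdd : ∀ {φ : (Fin n → ℝ) → ℝ}, ContDiff ℝ (⊤ : ℕ∞) φ → HasCompactSupport φ →
      ∃ C, ∀ x, |moll φ f x| ≤ C := by
    intro φ hφ hc
    refine ⟨∫ t, |φ t|, fun x => ?_⟩
    rw [moll_apply]
    refine (abs_integral_le_integral_abs).trans ?_
    have hi := hφ.continuous.integrable_of_hasCompactSupport hc (μ := volume)
    refine integral_mono (moll_integrand hi hf hb x).abs hi.abs fun t => ?_
    simp only [abs_mul]
    exact mul_le_of_le_one_right (abs_nonneg _) (hb _)
  induction k generalizing φ with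
  | zero => exact ⟨hc.continuous_convolution_left _ hφ.continuous (locInt hf hb), bdd hφ hc⟩
  | succ k ih =>
    have h1 : ContDiff ℝ 1 φ := hφ.of_le (by exact_mod_cast le_top)
    refine ⟨fun x => (hc.hasFDerivAt_convolution_left (ContinuousLinearMap.lsmul ℝ ℝ) h1
      (locInt hf hb) x).differentiableAt, bdd hφ hc, fun i => ?_⟩
    rw [pd_moll h1 hc hf hb]
    refine ih ?_ ?_
    · exact (hφ.fderiv_right (m := (⊤ : ℕ∞)) (by simp)).clm_apply contDiff_const
    · exact hc.fderiv_apply (𝕜 := ℝ) _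

lemma add_smul_single {n : ℕ} (x : Fin n → ℝ) (i : Fin n) (t : ℝ) :
    x + t • Pi.single i 1 = Function.update x i (x i + t) := by
  funext j
  by_cases h : j = i
  · subst h; simp
  · simp [h]

lemma moll_mono {n : ℕ} {φ f : (Fin n → ℝ) → ℝ} (hφ : ContDiff ℝ (⊤ : ℕ∞) φ)
    (hc : HasCompactSupport φ) (h0 : ∀ t, 0 ≤ φ t) (hf : Measurable f) (hb : ∀ x, |f x| ≤ 1)
    (hm : CoordMonotone n f) (i : Fin n) (x : Fin n → ℝ) : 0 ≤ pd i (moll φ f) x := by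
  have hd := lineDeriv_pd (nice_moll 1 hφ hc hf hb) i x
  refine HasDerivAt.nonneg_of_monotone hd fun s t hst => ?_
  have hi := hφ.continuous.integrable_of_hasCompactSupport hc (μ := volume)
  simp only [moll_apply]
  refine integral_mono (moll_integrand hi hf hb _) (moll_integrand hi hf hb _) fun y => ?_
  refine mul_le_mul_of_nonneg_left ?_ (h0 y)
  have e : ∀ r : ℝ, x + r • (Pi.single i 1 : Fin n → ℝ) - y
      = Function.update (x - y) i ((x - y) i + r) := fun r => by
    rw [← add_smul_single]; abel
  rw [e, e]
  exact hm _ _ _ _ (by linarith)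

/-- A bounded increasing function is an almost everywhere limit of bounded increasing smooth
functions. -/
lemma exists_approx {n : ℕ} {f : (Fin n → ℝ) → ℝ} (hf : Measurable f)
    (hfb : ∀ x, f x ∈ Set.Icc (0 : ℝ) 1) (hm : CoordMonotone n f) :
    ∃ F : ℕ → (Fin n → ℝ) → ℝ, (∀ k, Nice 4 (F k)) ∧ (∀ k i x, 0 ≤ pd i (F k) x) ∧
      (∀ k x, F k x ∈ Set.Icc (0 : ℝ) 1) ∧
      ∀ᵐ x ∂gG n, Filter.Tendsto (fun k => F k x) Filter.atTop (nhds (f x)) := by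
  have hb : ∀ x, |f x| ≤ 1 := fun x => by rw [abs_of_nonneg (hfb x).1]; exact (hfb x).2
  let ψ : ℕ → ContDiffBump (0 : Fin n → ℝ) := fun k =>
    ⟨1 / (2 * ((k : ℝ) + 1)), 1 / ((k : ℝ) + 1), by positivity, by
      have : (0 : ℝ) < (k : ℝ) + 1 := by positivity
      exact one_div_lt_one_div_of_lt this (by linarith)⟩
  have hr : Filter.Tendsto (fun k => (ψ k).rOut) Filter.atTop (nhds 0) :=
    tendsto_one_div_add_atTop_nhds_zero_nat
  have hK : ∀ᶠ k in Filter.atTop, (ψ k).rOut ≤ 2 * (ψ k).rIn :=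
    Filter.Eventually.of_forall fun k => by
      have : (0 : ℝ) < (k : ℝ) + 1 := by positivity
      show 1 / ((k : ℝ) + 1) ≤ 2 * (1 / (2 * ((k : ℝ) + 1)))
      apply le_of_eq; field_simp
  have hae := ContDiffBump.ae_convolution_tendsto_right_of_locallyIntegrable
    (μ := (volume : Measure (Fin n → ℝ))) hr hK (locInt hf hb)
  have hs : ∀ k, ContDiff ℝ (⊤ : ℕ∞) ((ψ k).normed volume) := fun k => (ψ k).contDiff_normed
  have hcs : ∀ k, HasCompactSupport ((ψ k).normed volume) := fun k => (ψ k).hasCompactSupport_normed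
  have h0 : ∀ k t, 0 ≤ (ψ k).normed volume t := fun k t => (ψ k).nonneg_normed t
  refine ⟨fun k => moll ((ψ k).normed volume) f, fun k => nice_moll 4 (hs k) (hcs k) hf hb,
    fun k i x => moll_mono (hs k) (hcs k) (h0 k) hf hb hm i x, fun k x => ⟨?_, ?_⟩,
    (gG_ac n).ae_le hae⟩
  · exact integral_nonneg fun t => mul_nonneg (h0 k t) (hfb _).1
  · have h1 := (ψ k).integral_normed (μ := volume)
    show moll ((ψ k).normed volume) f x ≤ 1
    rw [moll_apply]
    refine le_trans ?_ h1.le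
    refine integral_mono (moll_integrand (ψ k).integrable_normed hf hb x)
      (ψ k).integrable_normed fun t => ?_
    exact mul_le_of_le_one_right (h0 k t) (hfb _).2

lemma tendsto_weighted {n : ℕ} {F : ℕ → (Fin n → ℝ) → ℝ} {f w : (Fin n → ℝ) → ℝ}
    (hw : Integrable w (gG n)) (hm : ∀ k, AEStronglyMeasurable (F k) (gG n))
    (hb : ∀ k x, |F k x| ≤ 1)
    (hl : ∀ᵐ x ∂gG n, Filter.Tendsto (fun k => F k x) Filter.atTop (nhds (f x))) :
    Filter.Tendsto (fun k => ∫ x, w x * F k x ∂gG n) Filter.atTop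
      (nhds (∫ x, w x * f x ∂gG n)) := by
  refine tendsto_integral_of_dominated_convergence (fun x => |w x|)
    (fun k => hw.aestronglyMeasurable.mul (hm k)) hw.abs (fun k => ?_) ?_
  · refine Filter.Eventually.of_forall fun x => ?_
    rw [norm_mul]
    exact mul_le_of_le_one_right (norm_nonneg _) (hb k x)
  · filter_upwards [hl] with x hx using hx.const_mul _

/-- The inequality of `smooth_main` for arbitrary increasing functions. -/
lemma general_main {n : ℕ} {f g : (Fin n → ℝ) → ℝ} (hf : Measurable f) (hg : Measurable g)
    (hfb : ∀ x, f x ∈ Set.Icc (0 : ℝ) 1) (hgb : ∀ x, g x ∈ Set.Icc (0 : ℝ) 1)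
    (hfm : CoordMonotone n f) (hgm : CoordMonotone n g) :
    0 ≤ gM1pair n f g ∧ gM1pair n f g ≤ 1 ∧
    ∀ W₀ r : ℝ, 0 < W₀ → W₀ ≤ 1 → 0 ≤ r → r ≤ 1 / 2 →
    r * gM1pair n f g / 2 - r ^ 2 * |gM2pair n f g| / 8 - 32 * W₀ * r ^ 3
      ≤ (1 + 32 * r ^ 2 * (-Real.log W₀)) * gCor n f g := by
  obtain ⟨F, F1, F2, F3, F4⟩ := exists_approx hf hfb hfm
  obtain ⟨G, G1, G2, G3, G4⟩ := exists_approx hg hgb hgm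
  have ab : ∀ {t : ℝ}, t ∈ Set.Icc (0 : ℝ) 1 → |t| ≤ 1 := fun ht => by
    rw [abs_of_nonneg ht.1]; exact ht.2
  have mF : ∀ k, AEStronglyMeasurable (F k) (gG n) := fun k => (F1 k).continuous.aestronglyMeasurable
  have mG : ∀ k, AEStronglyMeasurable (G k) (gG n) := fun k => (G1 k).continuous.aestronglyMeasurable
  have L : ∀ w : (Fin n → ℝ) → ℝ, Integrable w (gG n) →
      Filter.Tendsto (fun k => ∫ x, w x * F k x ∂gG n) Filter.atTop (nhds (∫ x, w x * f x ∂gG n)) ∧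
      Filter.Tendsto (fun k => ∫ x, w x * G k x ∂gG n) Filter.atTop (nhds (∫ x, w x * g x ∂gG n)) :=
    fun w hw => ⟨tendsto_weighted hw mF (fun k x => ab (F3 k x)) F4,
      tendsto_weighted hw mG (fun k x => ab (G3 k x)) G4⟩
  have L1 := fun i => L (fun x => x i) (integrable_coord i)
  have L2 := fun i j => L (fun x => x i * x j - if i = j then (1 : ℝ) else 0)
    ((integrable_coord_mul i j).sub (integrable_const _))
  have L0 := L (fun _ => 1) (integrable_const _)
  simp only [one_mul] at L0
  have LP : Filter.Tendsto (fun k => ∫ x, F k x * G k x ∂gG n) Filter.atTop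
      (nhds (∫ x, f x * g x ∂gG n)) := by
    have := tendsto_weighted (F := fun k x => F k x * G k x) (f := fun x => f x * g x)
      (integrable_const (1 : ℝ)) (fun k => (mF k).mul (mG k)) (fun k x => by
        rw [abs_mul]; exact mul_le_one₀ (ab (F3 k x)) (abs_nonneg _) (ab (G3 k x)))
      (by filter_upwards [F4, G4] with x h1 h2 using h1.mul h2)
    simpa only [one_mul] using this
  have T1 : Filter.Tendsto (fun k => gM1pair n (F k) (G k)) Filter.atTop (nhds (gM1pair n f g)) :=
    tendsto_finsetSum _ fun i _ => (L1 i).1.mul (L1 i).2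
  have T2 : Filter.Tendsto (fun k => gM2pair n (F k) (G k)) Filter.atTop (nhds (gM2pair n f g)) :=
    tendsto_finsetSum _ fun i _ => tendsto_finsetSum _ fun j _ => (L2 i j).1.mul (L2 i j).2
  have TC : Filter.Tendsto (fun k => gCor n (F k) (G k)) Filter.atTop (nhds (gCor n f g)) :=
    LP.sub (L0.1.mul L0.2)
  refine ⟨ge_of_tendsto' T1 fun k => ?_, ?_, fun W₀ r hW hW1 hr hr1 => ?_⟩
  · refine Finset.sum_nonneg fun i _ => mul_nonneg ?_ ?_
    · rw [gM1_eq (F1 k)]; exact integral_nonneg (F2 k i)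
    · rw [gM1_eq (G1 k)]; exact integral_nonneg (G2 k i)
  · have b1 := bessel hf.aestronglyMeasurable fun x => ab (hfb x)
    have b2 := bessel hg.aestronglyMeasurable fun x => ab (hgb x)
    have : gM1pair n f g ≤ ∑ i, ((∫ x, x i * f x ∂gG n) ^ 2 + (∫ x, x i * g x ∂gG n) ^ 2) / 2 :=
      Finset.sum_le_sum fun i _ => by
        have := two_mul_le_add_sq (∫ x, x i * f x ∂gG n) (∫ x, x i * g x ∂gG n)
        show (∫ x, x i * f x ∂gG n) * (∫ x, x i * g x ∂gG n) ≤ _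
        linarith
    rw [← Finset.sum_div, Finset.sum_add_distrib] at this
    linarith
  · exact le_of_tendsto_of_tendsto'
      ((((T1.const_mul r).div_const 2).sub ((T2.abs.const_mul (r ^ 2)).div_const 8)).sub_const _)
      (TC.const_mul _)
      fun k => smooth_main (F1 k) (G1 k) (F2 k) (G2 k) (F3 k) (G3 k) hW hW1 hr hr1

/-! ### Optimisation over the time parameter -/

/-- The choice of `r`: any `r` up to both thresholds yields the gain `r W / 8`. -/
lemma optimise {W M K r L : ℝ} (hW : 0 < W) (hW1 : W ≤ 1) (hL : L = 1 - Real.log W)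
    (hr : 0 ≤ r) (hrL : r * (16 * √L) ≤ 1) (hrM : r * |M| ≤ W)
    (h : ∀ W₀ r : ℝ, 0 < W₀ → W₀ ≤ 1 → 0 ≤ r → r ≤ 1 / 2 →
      r * W / 2 - r ^ 2 * |M| / 8 - 32 * W₀ * r ^ 3 ≤ (1 + 32 * r ^ 2 * (-Real.log W₀)) * K) :
    r * W / 8 ≤ K := by
  have hl : 0 ≤ -Real.log W := by linarith [Real.log_nonpos hW.le hW1]
  have hL1 : 1 ≤ L := by linarith
  have hsq : 1 ≤ √L := Real.one_le_sqrt.2 hL1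
  have hr16 : r ≤ 1 / 16 := by nlinarith
  have hrr : 256 * (r ^ 2 * L) ≤ 1 := by
    have e : (r * (16 * √L)) ^ 2 = 256 * (r ^ 2 * L) := by
      rw [mul_pow, mul_pow, Real.sq_sqrt (by linarith)]; ring
    rw [← e]
    exact pow_le_one₀ (by positivity) hrL
  have key := h W r hW hW1 hr (by linarith)
  have h1 : r ^ 2 * |M| ≤ r * W := by nlinarith
  have hr2 : r ^ 2 ≤ 1 / 256 := by nlinarith
  have h2 : 32 * W * r ^ 3 ≤ r * W / 8 := by
    have : 0 ≤ r * W := by positivity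
    nlinarith
  have h3 : 32 * r ^ 2 * (-Real.log W) ≤ 1 / 8 := by
    have : r ^ 2 * (-Real.log W) ≤ r ^ 2 * L := by
      apply mul_le_mul_of_nonneg_left _ (sq_nonneg r); linarith
    linarith
  have h4 : r * W / 4 ≤ (1 + 32 * r ^ 2 * (-Real.log W)) * K := by
    have : 0 ≤ r * W := by positivity
    linarith
  have h5 : 0 ≤ 32 * r ^ 2 * (-Real.log W) := by positivity
  have hK : 0 ≤ K := by
    by_contra hn
    push Not at hn
    have : (1 + 32 * r ^ 2 * (-Real.log W)) * K < 0 := mul_neg_of_pos_of_neg (by linarith) hn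
    have : 0 ≤ r * W := by positivity
    linarith
  nlinarith [mul_le_mul_of_nonneg_right h3 hK]

/-- **Theorem 1.6.** For increasing measurable `f, g : ℝⁿ → [0,1]`,
`Cor(f,g) ≥ c ⬝ min( M₁(f,g)/√(log(e/M₁(f,g))), M₁(f,g)²/|M₂(f,g)| )`,
the second term being `+∞` when `M₂(f,g) = 0`. -/
theorem gaussian_correlation_second_order :
    ∃ c > (0 : ℝ), ∀ (n : ℕ) (f g : (Fin n → ℝ) → ℝ),
      Measurable f → Measurable g →
      (∀ x, f x ∈ Set.Icc (0 : ℝ) 1) → (∀ x, g x ∈ Set.Icc (0 : ℝ) 1) →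
      CoordMonotone n f → CoordMonotone n g →
      (gM2pair n f g = 0 →
        gCor n f g ≥
          c * (gM1pair n f g / Real.sqrt (Real.log (Real.exp 1 / gM1pair n f g)))) ∧
      (gM2pair n f g ≠ 0 →
        gCor n f g ≥
          c * min (gM1pair n f g / Real.sqrt (Real.log (Real.exp 1 / gM1pair n f g)))
            (gM1pair n f g ^ 2 / |gM2pair n f g|)) := by
  refine ⟨1 / 128, by norm_num, fun n f g hf hg hfb hgb hfm hgm => ?_⟩
  obtain ⟨hW0, hW1, hmain⟩ := general_main hf hg hfb hgb hfm hgm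
  set W := gM1pair n f g with hWdef
  set M := gM2pair n f g with hMdef
  set K := gCor n f g with hKdef
  rcases hW0.eq_or_lt with hz | hW
  · have hK : 0 ≤ K := by
      have := hmain 1 0 one_pos le_rfl le_rfl (by norm_num)
      simpa using this
    rw [← hz]
    simpa using hK
  have hlog : Real.log (Real.exp 1 / W) = 1 - Real.log W := by
    rw [Real.log_div (Real.exp_ne_zero _) hW.ne', Real.log_exp]
  rw [hlog]
  set L := 1 - Real.log W with hL
  have hL1 : 1 ≤ L := by linarith [Real.log_nonpos hW.le hW1]
  have hs : 0 < √L := Real.sqrt_pos.2 (by linarith)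
  have e1 : 1 / (16 * √L) * (16 * √L) = 1 := by field_simp
  constructor
  · intro hM
    have := optimise hW hW1 hL (r := 1 / (16 * √L)) (by positivity) e1.le
      (by rw [hM]; simpa using hW.le) hmain
    refine ge_iff_le.2 (le_trans (le_of_eq ?_) this)
    field_simp
    norm_num
  · intro hM
    have hMp : 0 < |M| := abs_pos.2 hM
    have := optimise hW hW1 hL (r := min (1 / (16 * √L)) (W / |M|)) (by positivity)
      ((mul_le_mul_of_nonneg_right (min_le_left _ _) (by positivity)).trans e1.le)
      ((mul_le_mul_of_nonneg_right (min_le_right _ _) hMp.le).trans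
        (div_mul_cancel₀ _ hMp.ne').le) hmain
    refine ge_iff_le.2 (le_trans ?_ this)
    rcases min_choice (1 / (16 * √L)) (W / |M|) with h | h
    · rw [h]
      calc 1 / 128 * min (W / √L) (W ^ 2 / |M|) ≤ 1 / 128 * (W / √L) := by
            gcongr; exact min_le_left _ _
        _ = 1 / (16 * √L) * W / 8 := by field_simp; norm_num
    · rw [h]
      calc 1 / 128 * min (W / √L) (W ^ 2 / |M|) ≤ 1 / 128 * (W ^ 2 / |M|) := by
            gcongr; exact min_le_right _ _
        _ ≤ 1 / 8 * (W ^ 2 / |M|) := by gcongr; norm_num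
        _ = W / |M| * W / 8 := by ring

end
end
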